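/- Let Y be a block subspace of X_iw^*. Then Y contains an array of normalized block sequences (f_j^{(i)})_j, i ∈ ℕ, that generates an asymptotic model equivalent to the unit vector basis of ℓ1. -/

import Mathlib

/-!
Why every block subspace of `X_iw^*` carries an `ℓ_1` asymptotic model.

*Upper estimates in the dual.*  By Hahn-Banach a functional `z` of dual norm at most one is, up to
`δ`, a convex combination of members of `W_iw` supported in `supp z` (`exists_conv`).  Splitting off
the first component of each of these members, again and again, writes `z` as a geometric series of
averages of functionals whose components have large weight, organised by finitely many types
`(w, n)` of low weight and a remainder of high weight (`exists_mu`).  In a block sequence the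
distributions over the types can be stabilised along a subsequence, by an ultrafilter limit.
Functionals of one common type over an `S_{n_j}`-admissible family of blocks combine to a member of
`W_iw` after division by `m_j` (`sum_Rest_le`, `sum_Hi_le`), so the admissible sums of the
subsequence have dual norm at most `8 m_j` (`exists_subseq_upper`).

*Nearly normed pairs.*  If every `S_n`-admissible sum in every further block sequence had norm
above `1 + ε`, iterating would produce `S_{nl}`-admissible sums of norm above `(1 + ε)^l`, against
the bound `8 m_j` and `C^{n_j} / m_j → ∞`.  Hence some special family of blocks has sum of norm
at most `1 + ε` (`exists_almost_isometric`).  Normalizing that sum gives `z`; the special convex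
combination of vectors norming the summands gives a vector `x` of norm at most one with
`z(x)` close to `1`, on which functionals of weight `w < m_j` are bounded by `2 / w`; consequently
`z` is, up to a small error, dominated by functionals of weight at least `m_j` (`exists_exact`).
Iteration yields a rapidly increasing sequence of such pairs `(z_q, x_q)` (`exists_RIS`).

*The array.*  Row `i` consists of functionals `f = m_{J_i}^{-1} ∑_{q ∈ F} z_q` over successive
special families `F` of order `n_{J_i}`.  They have dual norm at most `2` (`Rows.f_dual_le`), since
the `z_q` act like a very fast growing sequence, and `f(X) ≥ 1/2` for
`X = m_{J_i} ∑_{q ∈ F} c_q x_q` (`Rows.fX`).  Vectors `X` far out in different rows are uniformly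
equivalent to the `c_0` basis (`Rows.c0`): a functional of weight `w` gets from the rows with
`m_{J_i} ≤ w` at most about `∑ 2 m_{J_i} / w`, a lacunary sum; on the other rows, the very fast
growing condition leaves at most one component whose weight is not huge, and this one is handled by
induction.  Testing against sums of the `X` gives the lower `ℓ_1` estimate (`Rows.lower`).

*The model.*  Iterated ultrafilter limits and a diagonal choice of columns make the norms of
all combinations converge (`exists_model`); the two-sided `ℓ_1` estimate passes to the limit.
-/

open Filter Topology
open scoped ENNReal

noncomputable section

/-! ### Abstract Banach space notions -/

section Abstract

variable {X : Type*} [NormedAddCommGroup X] [NormedSpace ℝ X]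

/-- A sequence is normalized if every term has norm one. -/
def Normalized (x : ℕ → X) : Prop := ∀ i, ‖x i‖ = 1

/-- A sequence is weakly null if it tends to `0` in the weak topology. -/
def WeaklyNull (x : ℕ → X) : Prop :=
  ∀ f : X →L[ℝ] ℝ, Tendsto (fun i => f (x i)) atTop (𝓝 (0 : ℝ))

end Abstract

/-- The ℓ₁ norm of finite coefficient vectors (the norms of finite linear
combinations of the unit vector basis of ℓ₁). -/
def l1Norm : ∀ m : ℕ, (Fin m → ℝ) → ℝ := fun _ a => ∑ i, |a i|

/-- The sup norm of finite coefficient vectors (the norms of finite linear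
combinations of the unit vector basis of c₀). -/
def supNorm : ∀ m : ℕ, (Fin m → ℝ) → ℝ := fun _ a => ⨆ i, |a i|

/-- The ℓ_p norm of finite coefficient vectors, `1 ≤ p < ∞`. -/
def lpNormFin (p : ℝ) : ∀ m : ℕ, (Fin m → ℝ) → ℝ := fun _ a => (∑ i, |a i| ^ p) ^ (1 / p)

/-- The ℓ_q norms of finite coefficient vectors, `q ∈ [1,∞]`, where `q = ∞`
corresponds to `c₀`. -/
def finLqNorm (q : ℝ≥0∞) : ∀ m : ℕ, (Fin m → ℝ) → ℝ := fun m a =>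
  if q = ⊤ then supNorm m a else lpNormFin q.toReal m a

/-- The family of seminorms `ν` (of finite combinations of a sequence in a seminormed
space) is `C`-equivalent to the family `μ`:  there are `A B > 0` with `A * B ≤ C` and
`(1/A) * μ ≤ ν ≤ B * μ`. -/
def NormFamEquiv (C : ℝ) (μ ν : ∀ m : ℕ, (Fin m → ℝ) → ℝ) : Prop :=
  ∃ A B : ℝ, 0 < A ∧ 0 < B ∧ A * B ≤ C ∧
    ∀ (m : ℕ) (a : Fin m → ℝ), (1 / A) * μ m a ≤ ν m a ∧ ν m a ≤ B * μ m a

section Abstract2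

variable {X : Type*} [NormedAddCommGroup X] [NormedSpace ℝ X]

/-- The sequence `x` generates the spreading model whose finite-combination
seminorms are given by the family `ν`. -/
def GeneratesSpreadingModel (x : ℕ → X) (ν : ∀ m : ℕ, (Fin m → ℝ) → ℝ) : Prop :=
  ∀ (m : ℕ) (a : Fin m → ℝ), ∀ ε > (0 : ℝ), ∃ N : ℕ, ∀ j : Fin m → ℕ,
    StrictMono j → (∀ i, N ≤ j i) → |‖∑ i, a i • x (j i)‖ - ν m a| < ε

/-- The array of sequences `A` (row `A i` is the `i`-th sequence) generates the
asymptotic model whose finite-combination seminorms are given by `ν`. -/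
def GeneratesAsymptoticModel (A : ℕ → ℕ → X) (ν : ∀ l : ℕ, (Fin l → ℝ) → ℝ) : Prop :=
  ∀ (l : ℕ) (a : Fin l → ℝ), ∀ ε > (0 : ℝ), ∃ N : ℕ, ∀ j : Fin l → ℕ,
    StrictMono j → (∀ i, N ≤ j i) → |‖∑ i, a i • A i (j i)‖ - ν l a| < ε

/-- `e` is a Schauder basis of `X`. -/
def IsSchauderBasis (e : ℕ → X) : Prop :=
  ∀ x : X, ∃! a : ℕ → ℝ,
    Tendsto (fun n => ∑ i ∈ Finset.range n, a i • e i) atTop (𝓝 x)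

/-- The basis `e` is 1-unconditional. -/
def OneUnconditional (e : ℕ → X) : Prop :=
  ∀ (F : Finset ℕ) (a ε : ℕ → ℝ), (∀ i, ε i = 1 ∨ ε i = -1) →
    ‖∑ i ∈ F, (ε i * a i) • e i‖ = ‖∑ i ∈ F, a i • e i‖

/-- `x` is a block sequence with respect to the basis `e`. -/
def IsBlockSeq (e : ℕ → X) (x : ℕ → X) : Prop :=
  ∃ F : ℕ → Finset ℕ, (∀ k, (F k).Nonempty) ∧
    (∀ k l : ℕ, k < l → ∀ i ∈ F k, ∀ j ∈ F l, i < j) ∧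
    ∀ k, x k ≠ 0 ∧ x k ∈ Submodule.span ℝ (e '' ↑(F k))

/-- `z` is a finite block sequence with respect to the basis `e`. -/
def IsFinBlockSeq (e : ℕ → X) {n : ℕ} (z : Fin n → X) : Prop :=
  ∃ F : Fin n → Finset ℕ, (∀ k, (F k).Nonempty) ∧
    (∀ k l : Fin n, k < l → ∀ i ∈ F k, ∀ j ∈ F l, i < j) ∧
    ∀ k, z k ≠ 0 ∧ z k ∈ Submodule.span ℝ (e '' ↑(F k))

/-- `Y` is a block subspace of `X` (with respect to the basis `e`): the closed
linear span of an infinite normalized block sequence. -/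
def IsBlockSubspace (e : ℕ → X) (Y : Set X) : Prop :=
  ∃ y : ℕ → X, IsBlockSeq e y ∧ Normalized y ∧
    Y = closure (↑(Submodule.span ℝ (Set.range y)) : Set X)

/-- The finite sequence `z` is `C`-equivalent to a finite basic sequence whose
finite-combination norms are given by `μ`. -/
def FinSeqEquiv (C : ℝ) {n : ℕ} (μ : (Fin n → ℝ) → ℝ) (z : Fin n → X) : Prop :=
  ∃ A B : ℝ, 0 < A ∧ 0 < B ∧ A * B ≤ C ∧
    ∀ a : Fin n → ℝ, (1 / A) * μ a ≤ ‖∑ i, a i • z i‖ ∧ ‖∑ i, a i • z i‖ ≤ B * μ a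

/-- The finite basic sequence with combination norms `μ` is block representable
in `Y ⊆ X`. -/
def BlockRepresentableIn (e : ℕ → X) (Y : Set X) {n : ℕ} (μ : (Fin n → ℝ) → ℝ) : Prop :=
  ∀ ε > (0 : ℝ), ∃ z : Fin n → X, (∀ i, z i ∈ Y) ∧ IsFinBlockSeq e z ∧
    FinSeqEquiv (1 + ε) μ z

/-- `x` is a (Schauder) basic sequence. -/
def IsBasicSeq (x : ℕ → X) : Prop :=
  (∀ i, x i ≠ 0) ∧ ∃ K : ℝ, 0 < K ∧ ∀ (a : ℕ → ℝ) (m n : ℕ), m ≤ n →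
    ‖∑ i ∈ Finset.range m, a i • x i‖ ≤ K * ‖∑ i ∈ Finset.range n, a i • x i‖

end Abstract2

/-- A plegma of `k` strictly increasing `l`-tuples of naturals. -/
def IsPlegma (k l : ℕ) (s : Fin k → Fin l → ℕ) : Prop :=
  (∀ i, StrictMono (s i)) ∧
  (∀ i₁ i₂ : Fin k, ∀ j₁ j₂ : Fin l, j₁ < j₂ → s i₁ j₁ < s i₂ j₂) ∧
  (∀ i₁ i₂ : Fin k, i₁ < i₂ → ∀ j, s i₁ j ≤ s i₂ j)

/-- A strict plegma: a plegma with pairwise disjoint tuples. -/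
def IsStrictPlegma (k l : ℕ) (s : Fin k → Fin l → ℕ) : Prop :=
  IsPlegma k l s ∧ ∀ i₁ i₂ : Fin k, i₁ ≠ i₂ → ∀ j₁ j₂ : Fin l, s i₁ j₁ ≠ s i₂ j₂

section Abstract3

variable {X : Type*} [NormedAddCommGroup X] [NormedSpace ℝ X]

/-- The `l`-array `x` generates the joint spreading model with finite-combination
seminorms `ν`. -/
def GeneratesJSM (l : ℕ) (x : Fin l → ℕ → X)
    (ν : ∀ k : ℕ, (Fin l → Fin k → ℝ) → ℝ) : Prop :=
  ∀ (k : ℕ) (a : Fin l → Fin k → ℝ), ∀ ε > (0 : ℝ), ∃ N : ℕ,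
    ∀ s : Fin l → Fin k → ℕ, IsStrictPlegma l k s → (∀ i j, N ≤ s i j) →
      |‖∑ i, ∑ j, a i j • x i (s i j)‖ - ν k a| < ε

/-- `X` admits a unique joint spreading model with respect to the family of
sequences `F`. -/
def UniqueJSM (F : Set (ℕ → X)) : Prop :=
  ∃ C : ℝ, 1 ≤ C ∧ ∀ (l : ℕ) (x y : Fin l → ℕ → X),
    (∀ i, x i ∈ F) → (∀ i, y i ∈ F) →
    ∀ ν μ, GeneratesJSM l x ν → GeneratesJSM l y μ →
      ∃ A B : ℝ, 0 < A ∧ 0 < B ∧ A * B ≤ C ∧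
        ∀ (k : ℕ) (a : Fin l → Fin k → ℝ),
          (1 / A) * μ k a ≤ ν k a ∧ ν k a ≤ B * μ k a

/-- `X` admits a unique asymptotic model with respect to the family of
sequences `F`. -/
def UniqueAM (F : Set (ℕ → X)) : Prop :=
  ∀ x y : ℕ → ℕ → X, (∀ i, x i ∈ F) → (∀ i, y i ∈ F) →
    ∀ ν μ, GeneratesAsymptoticModel x ν → GeneratesAsymptoticModel y μ →
      ∃ C : ℝ, 1 ≤ C ∧ NormFamEquiv C μ ν

end Abstract3

/-- A bundled Banach-space candidate. -/
structure BanachPkg : Type 1 where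
  X : Type
  [grp : NormedAddCommGroup X]
  [mod : NormedSpace ℝ X]

attribute [instance] BanachPkg.grp BanachPkg.mod

/-! ### c₀₀ and the norming sets -/

/-- The finitely supported real sequences. -/
abbrev c00 : Type := ℕ →₀ ℝ

/-- Minimum of the support (0 for the zero vector). -/
def minSupp (x : c00) : ℕ := if h : x.support.Nonempty then x.support.min' h else 0

/-- Maximum of the support (0 for the zero vector). -/
def maxSupp (x : c00) : ℕ := if h : x.support.Nonempty then x.support.max' h else 0

/-- Minimum of a finset of naturals (0 if empty). -/
def finsetMin (F : Finset ℕ) : ℕ := if h : F.Nonempty then F.min' h else 0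

/-- `x < y` as successive (block) vectors. -/
def Blocks (x y : c00) : Prop := maxSupp x < minSupp y

/-- The Schreier families. -/
def Schreier : ℕ → Set (Finset ℕ)
  | 0 => {F | ∃ i : ℕ, F = {i}}
  | n + 1 => {F | ∃ (d : ℕ) (G : Fin d → Finset ℕ),
      (∀ k, G k ∈ Schreier n) ∧
      (∀ k l : Fin d, k < l → ∀ i ∈ G k, ∀ j ∈ G l, i < j) ∧
      (∀ i ∈ F, d ≤ i) ∧ F = Finset.univ.biUnion G}

/-- The family `A_m` of sets of cardinality at most `m`. -/
def SchreierA (m : ℕ) : Set (Finset ℕ) := {F | F.card ≤ m}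

/-- The operation `A * B` on families of finite sets. -/
def famStar (A B : Set (Finset ℕ)) : Set (Finset ℕ) :=
  {F | ∃ (d : ℕ) (G : Fin d → Finset ℕ),
      (∀ k, G k ∈ B) ∧ (∀ k, (G k).Nonempty) ∧
      (∀ k l : Fin d, k < l → ∀ i ∈ G k, ∀ j ∈ G l, i < j) ∧
      (Finset.univ.image fun k => finsetMin (G k)) ∈ A ∧ F = Finset.univ.biUnion G}

/-- A finite block sequence in `c00` is `S`-admissible. -/
def Admissible (S : Set (Finset ℕ)) {d : ℕ} (f : Fin d → c00) : Prop :=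
  (∀ q, (f q).support.Nonempty) ∧
  (∀ q r : Fin d, q < r → Blocks (f q) (f r)) ∧
  (Finset.univ.image fun q => minSupp (f q)) ∈ S

/-- The two fixed sequences `(m_j)`, `(n_j)` (indexed here starting at `0`, so that
`m 0` plays the role of `m_1` etc.) together with their growth conditions. -/
structure IWParams where
  m : ℕ → ℕ
  n : ℕ → ℕ
  m_mono : StrictMono m
  n_mono : StrictMono n
  m_first : m 0 = 2
  n_first : n 0 = 1
  growth_exp : ∀ C : ℝ, 1 < C → Tendsto (fun j => C ^ (n j) / (m j : ℝ)) atTop atTop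
  growth_ratio : Tendsto (fun j => (m j : ℝ) / (m (j + 1) : ℝ)) atTop (𝓝 0)
  growth_sum : ∀ (l : ℕ) (js : Fin l → ℕ) (j : ℕ), (∀ i, js i ≤ j) →
    (∏ i, m (js i)) < m (j + 1) ^ 2 → (∑ i, n (js i)) + 1 < n (j + 1)

/-- The action of a functional `f ∈ c00` on a vector `x ∈ c00`. -/
def evalPair (f x : c00) : ℝ := f.sum fun i a => a * x i

/-- The norming set `W_iw`, together with admissible weights: `WIW P f w` means
that `f` belongs to the norming set and `w` is a weight of (one representation of)
`f`; the unit functionals `±e_i^*` have weight `∞`. -/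
inductive WIW (P : IWParams) : c00 → ℕ∞ → Prop
  | unit (i : ℕ) (s : ℝ) (hs : s = 1 ∨ s = -1) : WIW P (Finsupp.single i s) ⊤
  | op (l : ℕ) (hl : 0 < l) (js : Fin l → ℕ) (d : ℕ) (f : Fin d → c00) (w : Fin d → ℕ∞)
      (hf : ∀ q, WIW P (f q) (w q))
      (hadm : Admissible (Schreier (∑ i, P.n (js i))) f)
      (hvfg : ∀ q r : Fin d, (q : ℕ) + 1 = (r : ℕ) → (maxSupp (f q) : ℕ∞) < w r) :
      WIW P (((∏ i, P.m (js i) : ℕ) : ℝ)⁻¹ • ∑ q, f q) ((∏ i, P.m (js i) : ℕ) : ℕ∞)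

/-- Membership in the norming set `W_iw`. -/
def memWIW (P : IWParams) (f : c00) : Prop := ∃ w, WIW P f w

/-- The norm of `X_iw`, on finitely supported vectors. -/
def iwNorm (P : IWParams) (x : c00) : ℝ :=
  sSup {r | ∃ f, memWIW P f ∧ r = evalPair f x}

/-- The dual norm of a finitely supported functional, as an element of `X_iw^*`. -/
def iwDualNorm (P : IWParams) (f : c00) : ℝ :=
  sSup {r | ∃ x : c00, iwNorm P x ≤ 1 ∧ r = evalPair f x}

/-- The auxiliary norming set `W_aux^N` together with admissible weights. -/
inductive WAux (P : IWParams) (N : ℕ) : c00 → ℕ∞ → Prop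
  | unit (i : ℕ) (s : ℝ) (hs : s = 1 ∨ s = -1) : WAux P N (Finsupp.single i s) ⊤
  | op (l : ℕ) (hl : 0 < l) (js : Fin l → ℕ) (d : ℕ) (f : Fin d → c00) (w : Fin d → ℕ∞)
      (hf : ∀ q, WAux P N (f q) (w q))
      (hadm : Admissible (famStar (Schreier (∑ i, P.n (js i))) (SchreierA 3)) f)
      (hlarge : ∀ q : Fin d, 0 < (q : ℕ) → (N : ℕ∞) < w q) :
      WAux P N (((∏ i, P.m (js i) : ℕ) : ℝ)⁻¹ • ∑ q, f q) ((∏ i, P.m (js i) : ℕ) : ℕ∞)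

/-- An `(n, ε)` basic special convex combination. -/
def IsBasicSCC (n : ℕ) (ε : ℝ) (x : c00) : Prop :=
  ∃ F : Finset ℕ, x.support ⊆ F ∧ F ∈ Schreier n ∧ (∀ i, 0 ≤ x i) ∧
    (∑ i ∈ F, x i) = 1 ∧ ∀ G ⊆ F, G ∈ Schreier (n - 1) → (∑ i ∈ G, x i) < ε

/-- An `(n, ε)` special convex combination `∑ c i • x i`. -/
def IsSCC (n : ℕ) (ε : ℝ) {m : ℕ} (c : Fin m → ℝ) (x : Fin m → c00) : Prop :=
  (∀ i, (x i).support.Nonempty) ∧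
  (∀ i j : Fin m, i < j → Blocks (x i) (x j)) ∧
  IsBasicSCC n ε (∑ i, c i • Finsupp.single (minSupp (x i)) (1 : ℝ))

/-- `x` generates, with respect to the norm function `Nrm` on `c00`, the spreading
model whose finite-combination seminorms are `ν`. -/
def GeneratesSMwith (Nrm : c00 → ℝ) (x : ℕ → c00) (ν : ∀ m : ℕ, (Fin m → ℝ) → ℝ) : Prop :=
  ∀ (m : ℕ) (a : Fin m → ℝ), ∀ ε > (0 : ℝ), ∃ N : ℕ, ∀ j : Fin m → ℕ,
    StrictMono j → (∀ i, N ≤ j i) → |Nrm (∑ i, a i • x (j i)) - ν m a| < ε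

/-- The array `A` generates, with respect to the norm function `Nrm` on `c00`, the
asymptotic model whose finite-combination seminorms are `ν`. -/
def GeneratesAMwith (Nrm : c00 → ℝ) (A : ℕ → ℕ → c00) (ν : ∀ l : ℕ, (Fin l → ℝ) → ℝ) : Prop :=
  ∀ (l : ℕ) (a : Fin l → ℝ), ∀ ε > (0 : ℝ), ∃ N : ℕ, ∀ j : Fin l → ℕ,
    StrictMono j → (∀ i, N ≤ j i) → |Nrm (∑ i, a i • A i (j i)) - ν l a| < ε

/-- A normalized block sequence in `c00` with respect to a norm function. -/
def IsNormBlockSeq (Nrm : c00 → ℝ) (y : ℕ → c00) : Prop :=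
  (∀ k, (y k).support.Nonempty) ∧ (∀ k, Blocks (y k) (y (k + 1))) ∧ ∀ k, Nrm (y k) = 1

/-- A `(C, (j_i)_{i ∈ I})` rapidly increasing sequence, `I` a (finite) interval. -/
def IsRIS (P : IWParams) (C : ℝ) (I : Finset ℕ) (j : ℕ → ℕ) (x : ℕ → c00) : Prop :=
  (∀ a ∈ I, ∀ b ∈ I, ∀ c : ℕ, a ≤ c → c ≤ b → c ∈ I) ∧
  (∀ a ∈ I, ∀ b ∈ I, a < b → j a < j b) ∧
  (∀ i ∈ I, (x i).support.Nonempty) ∧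
  (∀ a ∈ I, ∀ b ∈ I, a < b → Blocks (x a) (x b)) ∧
  (∀ i ∈ I, iwNorm P (x i) ≤ C) ∧
  (∀ i ∈ I, ∀ i' ∈ I, i' + 1 = i → (maxSupp (x i') : ℝ) < Real.sqrt (P.m (j i))) ∧
  (∀ i ∈ I, ∀ f w, WIW P f w → w < ((P.m (j i) : ℕ) : ℕ∞) →
    |evalPair f (x i)| ≤ C / (w.toNat : ℝ))

/-- An infinite `(C, (j_i)_i)` rapidly increasing sequence. -/
def IsRISNat (P : IWParams) (C : ℝ) (j : ℕ → ℕ) (x : ℕ → c00) : Prop :=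
  StrictMono j ∧ (∀ i, (x i).support.Nonempty) ∧ (∀ i, Blocks (x i) (x (i + 1))) ∧
  (∀ i, iwNorm P (x i) ≤ C) ∧
  (∀ i, (maxSupp (x i) : ℝ) < Real.sqrt (P.m (j (i + 1)))) ∧
  (∀ i, ∀ f w, WIW P f w → w < ((P.m (j i) : ℕ) : ℕ∞) →
    |evalPair f (x i)| ≤ C / (w.toNat : ℝ))

/-- `X` together with the basis `e` is a realization of the space `X_iw`: a Banach
space in which `c00` sits isometrically (w.r.t. `iwNorm`) and densely. -/
structure IsIWRealization (P : IWParams) (X : Type*) [NormedAddCommGroup X]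
    [NormedSpace ℝ X] (e : ℕ → X) : Prop where
  complete : CompleteSpace X
  dense : DenseRange fun a : c00 => ∑ i ∈ a.support, a i • e i
  norm_eq : ∀ a : c00, ‖∑ i ∈ a.support, a i • e i‖ = iwNorm P a

/-- The conjugate exponent of `p`. -/
def conjExp (p : ℝ) : ℝ := p / (p - 1)

/-- The norming set `W_iw^p` together with admissible weights. -/
inductive WIWp (P : IWParams) (p : ℝ) : c00 → ℕ∞ → Prop
  | unit (i : ℕ) (s : ℝ) (hs : s = 1 ∨ s = -1) : WIWp P p (Finsupp.single i s) ⊤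
  | op (l : ℕ) (hl : 0 < l) (js : Fin l → ℕ) (d : ℕ) (f : Fin d → c00) (w : Fin d → ℕ∞)
      (lam : Fin d → ℝ) (hlam : (∑ q, |lam q| ^ conjExp p) ≤ 1)
      (hf : ∀ q, WIWp P p (f q) (w q))
      (hadm : Admissible (Schreier (∑ i, P.n (js i))) f)
      (hvfg : ∀ q r : Fin d, (q : ℕ) + 1 = (r : ℕ) → (maxSupp (f q) : ℕ∞) < w r) :
      WIWp P p (((∏ i, P.m (js i) : ℕ) : ℝ)⁻¹ • ∑ q, lam q • f q)
        ((∏ i, P.m (js i) : ℕ) : ℕ∞)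

/-- The norm of `X_iw^p` on finitely supported vectors. -/
def iwpNorm (P : IWParams) (p : ℝ) (x : c00) : ℝ :=
  sSup {r | ∃ f, (∃ w, WIWp P p f w) ∧ r = evalPair f x}

/-- The norming set of the space `X̃_iw`, together with admissible weights. -/
inductive WT (P : IWParams) : c00 → ℕ∞ → Prop
  | unit (i : ℕ) (s : ℝ) (hs : s = 1 ∨ s = -1) : WT P (Finsupp.single i s) ⊤
  | op (j : ℕ) (d : ℕ) (f : Fin d → c00) (w : Fin d → ℕ∞)
      (hf : ∀ q, WT P (f q) (w q))
      (hadm : Admissible (Schreier (P.n j)) f)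
      (hvfg : ∀ q r : Fin d, (q : ℕ) + 1 = (r : ℕ) → (maxSupp (f q) : ℕ∞) < w r) :
      WT P ((P.m j : ℝ)⁻¹ • ∑ q, f q) ((P.m j : ℕ) : ℕ∞)

/-- The norm of `X̃_iw` on finitely supported vectors. -/
def tNorm (P : IWParams) (x : c00) : ℝ :=
  sSup {r | ∃ f, (∃ w, WT P f w) ∧ r = evalPair f x}

end

namespace IWDual

/-! ### The pairing on `c00`, restrictions and supports -/

/-- The pairing `evalPair` as a bilinear map. -/
noncomputable def pr : c00 →ₗ[ℝ] c00 →ₗ[ℝ] ℝ :=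
  LinearMap.mk₂ ℝ evalPair
    (fun f g x => by
      unfold evalPair
      exact Finsupp.sum_add_index' (by simp) (by intros; ring))
    (fun c f x => by
      unfold evalPair
      rw [Finsupp.sum_smul_index' (by simp), Finsupp.smul_sum]
      simp [mul_assoc])
    (fun f x y => by
      unfold evalPair
      rw [← Finsupp.sum_add]
      simp [mul_add])
    (fun c f x => by
      unfold evalPair
      rw [Finsupp.smul_sum]
      refine Finsupp.sum_congr fun i _ => ?_
      simp; ring)

lemma evalPair_eq (f x : c00) : evalPair f x = pr f x := rfl

lemma pr_eq_sum {f : c00} {E : Finset ℕ} (h : f.support ⊆ E) (x : c00) :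
    pr f x = ∑ i ∈ E, f i * x i := by
  change f.sum (fun i a => a * x i) = _
  exact Finsupp.sum_of_support_subset f h _ (by simp)

lemma pr_eq_sum' (f : c00) {x : c00} {E : Finset ℕ} (h : x.support ⊆ E) :
    pr f x = ∑ i ∈ E, f i * x i := by
  rw [pr_eq_sum (Finset.subset_union_left (s₂ := E))]
  symm
  apply Finset.sum_subset Finset.subset_union_right
  intro i _ hi
  have : x i = 0 := by
    by_contra hx
    exact hi (h (Finsupp.mem_support_iff.2 hx))
  simp [this]

lemma pr_single (i : ℕ) (s : ℝ) (x : c00) : pr (Finsupp.single i s) x = s * x i := by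
  rw [pr_eq_sum (E := {i}) (Finsupp.support_single_subset)]
  simp

/-- Restriction of a finitely supported sequence to a finite set of coordinates. -/
noncomputable def res (E : Finset ℕ) : c00 →ₗ[ℝ] c00 where
  toFun f := f.filter (· ∈ E)
  map_add' f g := by ext i; simp [Finsupp.filter_apply]
  map_smul' c f := by ext i; simp [Finsupp.filter_apply]

lemma res_apply (E : Finset ℕ) (f : c00) (i : ℕ) : res E f i = if i ∈ E then f i else 0 :=
  Finsupp.filter_apply _ _ _

lemma mem_supp_res {E : Finset ℕ} {f : c00} {i : ℕ} :
    i ∈ (res E f).support ↔ i ∈ E ∧ i ∈ f.support := by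
  simp only [Finsupp.mem_support_iff, res_apply]
  split_ifs with h <;> simp [h]

lemma supp_res_subset (E : Finset ℕ) (f : c00) : (res E f).support ⊆ E := fun _ hi =>
  (mem_supp_res.1 hi).1

lemma supp_res_subset' (E : Finset ℕ) (f : c00) : (res E f).support ⊆ f.support := fun _ hi =>
  (mem_supp_res.1 hi).2

lemma res_of_subset {E : Finset ℕ} {f : c00} (h : f.support ⊆ E) : res E f = f := by
  ext i
  rw [res_apply]
  split_ifs with hi
  · rfl
  · by_contra hne
    exact hi (h (Finsupp.mem_support_iff.2 (Ne.symm hne)))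

lemma pr_res (E : Finset ℕ) (f x : c00) : pr (res E f) x = pr f (res E x) := by
  rw [pr_eq_sum (supp_res_subset E f), pr_eq_sum' f (supp_res_subset E x)]
  refine Finset.sum_congr rfl fun i hi => ?_
  simp [res_apply, hi]

lemma pr_of_subset {E : Finset ℕ} {f : c00} (h : f.support ⊆ E) (x : c00) :
    pr f (res E x) = pr f x := by rw [← pr_res, res_of_subset h]

lemma pr_of_subset' {E : Finset ℕ} {x : c00} (h : x.support ⊆ E) (f : c00) :
    pr (res E f) x = pr f x := by rw [pr_res, res_of_subset h]

lemma pr_disjoint {f x : c00} (h : ∀ i ∈ f.support, i ∉ x.support) : pr f x = 0 := by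
  rw [pr_eq_sum subset_rfl]
  refine Finset.sum_eq_zero fun i hi => ?_
  have := h i hi
  simp only [Finsupp.mem_support_iff, not_not] at this
  simp [this]

lemma exists_of_pr_ne {f x : c00} (h : pr f x ≠ 0) : ∃ i ∈ f.support, i ∈ x.support := by
  by_contra hc
  push Not at hc
  exact h (pr_disjoint hc)

/-- The `ℓ₁` norm of a finitely supported sequence. -/
noncomputable def l1 (x : c00) : ℝ := ∑ i ∈ x.support, |x i|

lemma l1_nonneg (x : c00) : 0 ≤ l1 x := Finset.sum_nonneg fun _ _ => abs_nonneg _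

lemma abs_pr_le {f : c00} {b : ℝ} (hf : ∀ i, |f i| ≤ b) (x : c00) : |pr f x| ≤ b * l1 x := by
  rw [pr_eq_sum' f subset_rfl, l1, Finset.mul_sum]
  refine (Finset.abs_sum_le_sum_abs _ _).trans (Finset.sum_le_sum fun i _ => ?_)
  rw [abs_mul]
  exact mul_le_mul_of_nonneg_right (hf i) (abs_nonneg _)

lemma minSupp_mem {x : c00} (h : x.support.Nonempty) : minSupp x ∈ x.support := by
  rw [minSupp, dif_pos h]; exact Finset.min'_mem _ _

lemma maxSupp_mem {x : c00} (h : x.support.Nonempty) : maxSupp x ∈ x.support := by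
  rw [maxSupp, dif_pos h]; exact Finset.max'_mem _ _

lemma minSupp_le {x : c00} {i : ℕ} (h : i ∈ x.support) : minSupp x ≤ i := by
  rw [minSupp, dif_pos ⟨i, h⟩]; exact Finset.min'_le _ _ h

lemma le_maxSupp {x : c00} {i : ℕ} (h : i ∈ x.support) : i ≤ maxSupp x := by
  rw [maxSupp, dif_pos ⟨i, h⟩]; exact Finset.le_max' _ _ h

lemma minSupp_le_maxSupp {x : c00} (h : x.support.Nonempty) : minSupp x ≤ maxSupp x :=
  le_maxSupp (minSupp_mem h)

lemma Blocks.lt {x y : c00} (h : Blocks x y) {i j : ℕ} (hi : i ∈ x.support)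
    (hj : j ∈ y.support) : i < j :=
  (le_maxSupp hi).trans_lt (lt_of_lt_of_le h (minSupp_le hj))

lemma blocks_of {x y : c00} (hx : x.support.Nonempty) (hy : y.support.Nonempty)
    (h : ∀ i ∈ x.support, ∀ j ∈ y.support, i < j) : Blocks x y :=
  h _ (maxSupp_mem hx) _ (minSupp_mem hy)

/-- The block relation between consecutive terms of a sequence propagates. -/
lemma blocks_of_lt {y : ℕ → c00} (hne : ∀ k, (y k).support.Nonempty)
    (hb : ∀ k, Blocks (y k) (y (k + 1))) {k l : ℕ} (h : k < l) : Blocks (y k) (y l) := by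
  induction l, h using Nat.le_induction with
  | base => exact hb k
  | succ l _ ih =>
    exact lt_of_lt_of_le ih ((minSupp_le_maxSupp (hne l)).trans (le_of_lt (hb l)))

lemma le_minSupp_seq {y : ℕ → c00} (hne : ∀ k, (y k).support.Nonempty)
    (hb : ∀ k, Blocks (y k) (y (k + 1))) (k : ℕ) : k ≤ minSupp (y k) := by
  induction k with
  | zero => simp
  | succ k ih => exact lt_of_le_of_lt (ih.trans (minSupp_le_maxSupp (hne k))) (hb k)

/-! ### Schreier families -/

/-- The Schreier family of order `n` with the empty set added; unlike `Schreier 0` it is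
hereditary for every `n`. -/
def SE (n : ℕ) : Set (Finset ℕ) := {F | F = ∅ ∨ F ∈ Schreier n}

lemma SE_empty (n : ℕ) : (∅ : Finset ℕ) ∈ SE n := Or.inl rfl

lemma empty_mem_Schreier (n : ℕ) : (∅ : Finset ℕ) ∈ Schreier (n + 1) :=
  ⟨0, Fin.elim0, fun k => k.elim0, fun k => k.elim0, by simp, by simp⟩

lemma mem_Schreier_of_SE {n : ℕ} (hn : 1 ≤ n) {F : Finset ℕ} (h : F ∈ SE n) :
    F ∈ Schreier n := by
  obtain ⟨n, rfl⟩ : ∃ k, n = k + 1 := ⟨n - 1, by omega⟩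
  rcases h with rfl | h
  · exact empty_mem_Schreier n
  · exact h

lemma SE_singleton (i : ℕ) : ({i} : Finset ℕ) ∈ SE 0 := Or.inr ⟨i, rfl⟩

lemma SE_zero_of_card {F : Finset ℕ} (h : F.card ≤ 1) : F ∈ SE 0 := by
  rcases Finset.card_le_one_iff_subset_singleton.1 h with ⟨i, hi⟩
  rcases Finset.subset_singleton_iff.1 hi with rfl | rfl
  · exact SE_empty 0
  · exact SE_singleton i

lemma SE_biUnion {ι : Type*} [LinearOrder ι] {n : ℕ} (K : Finset ι) (G : ι → Finset ℕ)
    (hG : ∀ k ∈ K, G k ∈ SE n)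
    (hs : ∀ k ∈ K, ∀ l ∈ K, k < l → ∀ i ∈ G k, ∀ j ∈ G l, i < j)
    (hd : ∀ k ∈ K, ∀ i ∈ G k, K.card ≤ i) : K.biUnion G ∈ SE (n + 1) := by
  classical
  set K' := K.filter (fun k => (G k).Nonempty) with hK'
  have hsub : K' ⊆ K := Finset.filter_subset _ _
  have hU : K.biUnion G = K'.biUnion G := by
    ext i
    simp only [Finset.mem_biUnion, hK', Finset.mem_filter]
    constructor
    · rintro ⟨k, hk, hi⟩; exact ⟨k, ⟨hk, ⟨i, hi⟩⟩, hi⟩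
    · rintro ⟨k, hk, hi⟩; exact ⟨k, hk.1, hi⟩
  let e := K'.orderEmbOfFin rfl
  have he : ∀ k, e k ∈ K' := fun k => Finset.orderEmbOfFin_mem _ _ _
  right
  refine ⟨K'.card, fun k => G (e k), fun k => ?_, fun k l hkl => ?_, ?_, ?_⟩
  · rcases hG _ (hsub (he k)) with h | h
    · have := (Finset.mem_filter.1 (he k)).2
      rw [h] at this
      simp at this
    · exact h
  · exact hs _ (hsub (he k)) _ (hsub (he l)) (e.strictMono hkl)
  · intro i hi
    obtain ⟨k, hk, hi⟩ := Finset.mem_biUnion.1 hi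
    exact (Finset.card_le_card hsub).trans (hd k hk i hi)
  · rw [hU]
    ext i
    simp only [Finset.mem_biUnion, Finset.mem_univ, true_and]
    constructor
    · rintro ⟨k, hk, hi⟩
      have : k ∈ Set.range e := by
        rw [Finset.range_orderEmbOfFin]; exact hk
      obtain ⟨r, rfl⟩ := this
      exact ⟨r, hi⟩
    · rintro ⟨k, hi⟩; exact ⟨e k, he k, hi⟩

/-- Composition of Schreier families: a union of successive sets of order `b` whose indices
spread a set of order `a` has order `a + b`.  The case `b = 0` contains the facts that the
families are hereditary and spreading. -/
lemma SE_comp {ι : Type*} [LinearOrder ι] {a b : ℕ} (F : Finset ι) (s : ι → ℕ)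
    (H : ι → Finset ℕ) (hs : F.image s ∈ SE a) (hinj : Set.InjOn s F)
    (hH : ∀ i ∈ F, H i ∈ SE b) (hle : ∀ i ∈ F, ∀ m ∈ H i, s i ≤ m)
    (hsucc : ∀ i ∈ F, ∀ j ∈ F, s i < s j → ∀ m ∈ H i, ∀ m' ∈ H j, m < m') :
    F.biUnion H ∈ SE (a + b) := by
  classical
  induction a generalizing F with
  | zero =>
    have hc : F.card ≤ 1 := by
      rw [← Finset.card_image_of_injOn hinj]
      rcases hs with h | ⟨i, h⟩ <;> simp [h]
    rcases F.eq_empty_or_nonempty with rfl | ⟨i, hi⟩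
    · simpa using SE_empty _
    · have : F = {i} := Finset.eq_singleton_iff_unique_mem.2
        ⟨hi, fun j hj => Finset.card_le_one.1 hc _ hj _ hi⟩
      subst this
      simpa using hH i (by simp)
  | succ a ih =>
    rcases hs with h | ⟨d, G, hG, hGs, hd, hU⟩
    · rw [Finset.image_eq_empty] at h
      subst h
      simpa using SE_empty _
    · have key : F.biUnion H =
          (Finset.univ : Finset (Fin d)).biUnion
            (fun k => (F.filter (fun i => s i ∈ G k)).biUnion H) := by
        ext m
        simp only [Finset.mem_biUnion, Finset.mem_univ, true_and, Finset.mem_filter]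
        constructor
        · rintro ⟨i, hi, hm⟩
          have : s i ∈ F.image s := Finset.mem_image_of_mem _ hi
          rw [hU] at this
          obtain ⟨k, _, hk⟩ := Finset.mem_biUnion.1 this
          exact ⟨k, i, ⟨hi, hk⟩, hm⟩
        · rintro ⟨k, i, ⟨hi, _⟩, hm⟩; exact ⟨i, hi, hm⟩
      rw [key, show a + 1 + b = (a + b) + 1 by omega]
      apply SE_biUnion
      · intro k _
        apply ih
        · have : (F.filter (fun i => s i ∈ G k)).image s = G k := by
            ext m
            simp only [Finset.mem_image, Finset.mem_filter]
            constructor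
            · rintro ⟨i, ⟨_, h⟩, rfl⟩; exact h
            · intro hm
              have : m ∈ F.image s := by
                rw [hU]; exact Finset.mem_biUnion.2 ⟨k, Finset.mem_univ _, hm⟩
              obtain ⟨i, hi, rfl⟩ := Finset.mem_image.1 this
              exact ⟨i, ⟨hi, hm⟩, rfl⟩
          rw [this]; exact Or.inr (hG k)
        · exact hinj.mono fun i hi => (Finset.mem_filter.1 hi).1
        · intro i hi; exact hH i (Finset.mem_filter.1 hi).1
        · intro i hi; exact hle i (Finset.mem_filter.1 hi).1
        · intro i hi j hj; exact hsucc i (Finset.mem_filter.1 hi).1 j (Finset.mem_filter.1 hj).1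
      · intro k _ l _ hkl m hm m' hm'
        simp only [Finset.mem_biUnion, Finset.mem_filter] at hm hm'
        obtain ⟨i, ⟨hi, hik⟩, hm⟩ := hm
        obtain ⟨j, ⟨hj, hjl⟩, hm'⟩ := hm'
        exact hsucc i hi j hj (hGs k l hkl _ hik _ hjl) m hm m' hm'
      · intro k _ m hm
        simp only [Finset.mem_biUnion, Finset.mem_filter] at hm
        obtain ⟨i, ⟨hi, hik⟩, hm⟩ := hm
        rw [Finset.card_univ, Fintype.card_fin]
        exact (hd _ (Finset.mem_image_of_mem _ hi)).trans (hle i hi m hm)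

lemma SE_subset {n : ℕ} {F G : Finset ℕ} (hF : F ∈ SE n) (h : G ⊆ F) : G ∈ SE n := by
  classical
  have := SE_comp (a := n) (b := 0) F id (fun i => if i ∈ G then {i} else ∅)
    (by simpa using hF) (Set.injOn_id _)
    (by intro i _; by_cases hi : i ∈ G <;> simp [hi, SE_empty, SE_singleton])
    (by intro i _ m hm; by_cases hi : i ∈ G <;> simp_all)
    (by
      intro i _ j _ hij m hm m' hm'
      by_cases hi : i ∈ G <;> by_cases hj : j ∈ G <;> simp_all)
  have hG : F.biUnion (fun i => if i ∈ G then ({i} : Finset ℕ) else ∅) = G := by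
    ext m
    rw [Finset.mem_biUnion]
    constructor
    · rintro ⟨i, _, hi⟩
      by_cases hG : i ∈ G <;> simp_all
    · intro hm; exact ⟨m, h hm, by simp [hm]⟩
  rwa [hG] at this

lemma SE_mono_succ {n : ℕ} {F : Finset ℕ} (hF : F ∈ SE n) (hpos : ∀ i ∈ F, 1 ≤ i) :
    F ∈ SE (n + 1) := by
  have := SE_biUnion (n := n) ({()} : Finset Unit) (fun _ => F) (by simpa using hF)
    (by intro k _ l _ h; exact absurd h (by simp)) (by simpa using hpos)
  simpa using this

lemma SE_mono {n n' : ℕ} (h : n ≤ n') {F : Finset ℕ} (hF : F ∈ SE n) (hpos : ∀ i ∈ F, 1 ≤ i) :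
    F ∈ SE n' := by
  induction n', h using Nat.le_induction with
  | base => exact hF
  | succ k _ ih => exact SE_mono_succ ih hpos

lemma SE_pos {n : ℕ} (hn : 1 ≤ n) {F : Finset ℕ} (hF : F ∈ SE n) : ∀ i ∈ F, 1 ≤ i := by
  obtain ⟨n, rfl⟩ : ∃ k, n = k + 1 := ⟨n - 1, by omega⟩
  intro i hi
  rcases hF with rfl | ⟨d, G, _, _, hd, hU⟩
  · simp at hi
  · have h1 := hd i hi
    rw [hU] at hi
    obtain ⟨k, _, _⟩ := Finset.mem_biUnion.1 hi
    have := k.pos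
    omega

end IWDual

namespace IWDual

/-- The Schreier families are hereditary and spreading, in terms of enumerations. -/
lemma SE_spread {ι : Type*} [LinearOrder ι] {a : ℕ} {F F' : Finset ι} {s t : ι → ℕ}
    (hF : F' ⊆ F) (hs : F.image s ∈ SE a) (hinj : Set.InjOn s F) (hle : ∀ i ∈ F', s i ≤ t i)
    (hst : ∀ i ∈ F', ∀ j ∈ F', s i < s j → t i < t j) : F'.image t ∈ SE a := by
  classical
  have h := SE_comp (a := a) (b := 0) F' s (fun i => {t i})
    (SE_subset hs (Finset.image_subset_image hF)) (hinj.mono hF)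
    (fun i _ => SE_singleton _) (by simpa using hle) (by simpa using hst)
  rwa [Finset.biUnion_singleton] at h

/-! ### The norming set -/

/-- `w` is the weight `∏ m_{j_i}` and `n` the Schreier order `∑ n_{j_i}` attached to a common
nonempty tuple of indices. -/
def IsType (P : IWParams) (w n : ℕ) : Prop :=
  ∃ (l : ℕ) (_ : 0 < l) (js : Fin l → ℕ), w = ∏ i, P.m (js i) ∧ n = ∑ i, P.n (js i)

variable {P : IWParams}

lemma two_le_m (j : ℕ) : 2 ≤ P.m j := by
  have := P.m_mono.monotone (Nat.zero_le j)
  rwa [P.m_first] at this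

lemma one_le_n (j : ℕ) : 1 ≤ P.n j := by
  have := P.n_mono.monotone (Nat.zero_le j)
  rwa [P.n_first] at this

lemma isType_single (j : ℕ) : IsType P (P.m j) (P.n j) :=
  ⟨1, one_pos, fun _ => j, by simp, by simp⟩

lemma IsType.mul {w n w' n' : ℕ} (h : IsType P w n) (h' : IsType P w' n') :
    IsType P (w * w') (n + n') := by
  obtain ⟨l, hl, js, rfl, rfl⟩ := h
  obtain ⟨l', hl', js', rfl, rfl⟩ := h'
  refine ⟨l + l', by omega, Fin.append js js', ?_, ?_⟩
  · rw [Fin.prod_univ_add]; simp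
  · rw [Fin.sum_univ_add]; simp

lemma two_pow_le_prod {l : ℕ} (js : Fin l → ℕ) : 2 ^ l ≤ ∏ i, P.m (js i) := by
  have := Finset.pow_card_le_prod (s := (Finset.univ : Finset (Fin l)))
    (fun i => P.m (js i)) 2 (fun i _ => two_le_m _)
  simpa using this

lemma m_le_prod {l : ℕ} (js : Fin l → ℕ) (i : Fin l) : P.m (js i) ≤ ∏ i, P.m (js i) :=
  Nat.le_of_dvd (Finset.prod_pos fun i _ => by have := two_le_m (P := P) (js i); omega)
    (Finset.dvd_prod_of_mem _ (Finset.mem_univ i))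

lemma IsType.two_le {w n : ℕ} (h : IsType P w n) : 2 ≤ w := by
  obtain ⟨l, hl, js, rfl, rfl⟩ := h
  exact (two_le_m _).trans (m_le_prod js ⟨0, hl⟩)

lemma IsType.one_le {w n : ℕ} (h : IsType P w n) : 1 ≤ n := by
  obtain ⟨l, hl, js, rfl, rfl⟩ := h
  exact (one_le_n _).trans (Finset.single_le_sum (f := fun i => P.n (js i)) (fun _ _ => Nat.zero_le _)
    (Finset.mem_univ (⟨0, hl⟩ : Fin l)))

/-- The growth condition on the parameters, in the form in which it is used. -/
lemma IsType.order_lt {w n j : ℕ} (h : IsType P w n) (hw : w < P.m j) : n + 1 < P.n j := by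
  have h2 := h.two_le
  rcases j with _ | j
  · rw [P.m_first] at hw; omega
  obtain ⟨l, hl, js, rfl, rfl⟩ := h
  refine P.growth_sum l js j (fun i => ?_) (hw.trans_le ?_)
  · have := (m_le_prod js i).trans_lt hw
    exact Nat.lt_succ_iff.1 (P.m_mono.lt_iff_lt.1 this)
  · exact Nat.le_self_pow two_ne_zero _

/-- Only finitely many types have a weight below a given bound. -/
lemma IsType.order_le {w n N : ℕ} (h : IsType P w n) (hw : w ≤ N) : n ≤ N * P.n N := by
  obtain ⟨l, hl, js, rfl, rfl⟩ := h
  have h1 : l ≤ N := (Nat.lt_two_pow_self.le.trans (two_pow_le_prod js)).trans hw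
  calc ∑ i, P.n (js i) ≤ ∑ _i : Fin l, P.n N := by
        refine Finset.sum_le_sum fun i _ => P.n_mono.monotone ?_
        exact (P.m_mono.le_apply).trans ((m_le_prod js i).trans hw)
    _ = l * P.n N := by simp
    _ ≤ N * P.n N := Nat.mul_le_mul_right _ h1

/-- An `S_n`-admissible very fast growing finite sequence in the norming set. -/
structure Dec (P : IWParams) (n : ℕ) {d : ℕ} (f : Fin d → c00) (u : Fin d → ℕ∞) : Prop where
  wiw : ∀ q, WIW P (f q) (u q)
  ne : ∀ q, (f q).support.Nonempty
  succ : ∀ q r, q < r → ∀ a ∈ (f q).support, ∀ b ∈ (f r).support, a < b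
  vfg : ∀ q r, q < r → ∀ a ∈ (f q).support, (a : ℕ∞) < u r
  adm : Finset.univ.image (fun q => minSupp (f q)) ∈ SE n

/-- Induction over the norming set. -/
lemma WIW_induct {p : (g : c00) → (w : ℕ∞) → WIW P g w → Prop}
    (h0 : ∀ i s (hs : s = 1 ∨ s = -1), p (Finsupp.single i s) ⊤ (WIW.unit i s hs))
    (h1 : ∀ (w n d : ℕ) (f : Fin d → c00) (u : Fin d → ℕ∞) (_ : IsType P w n)
      (hd : Dec P n f u) (_ : ∀ q, p (f q) (u q) (hd.wiw q))
      (hw : WIW P ((w : ℝ)⁻¹ • ∑ q, f q) w), p ((w : ℝ)⁻¹ • ∑ q, f q) w hw)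
    {g : c00} {w : ℕ∞} (h : WIW P g w) : p g w h := by
  induction h with
  | unit i s hs => exact h0 i s hs
  | op l hl js d f u hf hadm hvfg ih =>
    obtain ⟨hne, hbl, hS⟩ := hadm
    refine h1 _ _ d f u ⟨l, hl, js, rfl, rfl⟩ ⟨hf, hne, ?_, ?_, Or.inr hS⟩ ih _
    · intro q r hqr a ha b hb
      exact Blocks.lt (hbl q r hqr) ha hb
    · intro q r hqr a ha
      have hr : 0 < (r : ℕ) := lt_of_le_of_lt (Nat.zero_le _) hqr
      let r' : Fin d := ⟨r - 1, by omega⟩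
      have h2 := hvfg r' r (by simp only [r']; omega)
      refine lt_of_le_of_lt ?_ h2
      have : a ≤ maxSupp (f r') := by
        have hq' : q ≤ r' := Fin.mk_le_mk.2 (by have : (q : ℕ) < r := hqr; omega)
        rcases hq'.eq_or_lt with hq' | hlt
        · rw [← hq']; exact le_maxSupp ha
        · exact (Blocks.lt (hbl q r' hlt) ha (maxSupp_mem (hne r'))).le
      exact_mod_cast this

lemma WIW_elim {g : c00} {w : ℕ∞} (h : WIW P g w) :
    (∃ i s, (s = 1 ∨ s = -1) ∧ g = Finsupp.single i s ∧ w = ⊤) ∨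
    ∃ (w0 n d : ℕ) (f : Fin d → c00) (u : Fin d → ℕ∞), IsType P w0 n ∧ Dec P n f u ∧
      g = (w0 : ℝ)⁻¹ • ∑ q, f q ∧ w = w0 := by
  induction h using WIW_induct with
  | h0 i s hs => exact Or.inl ⟨i, s, hs, rfl, rfl⟩
  | h1 w n d f u ht hd _ _ => exact Or.inr ⟨w, n, d, f, u, ht, hd, rfl, rfl⟩

/-- The norming set is closed under the weighted operation; zero terms are permitted and
ignored. -/
lemma Wop {w n : ℕ} (h : IsType P w n) {ι : Type*} [LinearOrder ι] (F : Finset ι) (g : ι → c00)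
    (u : ι → ℕ∞) (hg : ∀ i ∈ F, g i ≠ 0 → WIW P (g i) (u i))
    (hs : ∀ i ∈ F, ∀ j ∈ F, i < j → ∀ a ∈ (g i).support, ∀ b ∈ (g j).support, a < b)
    (hv : ∀ i ∈ F, ∀ j ∈ F, i < j → g j ≠ 0 → ∀ a ∈ (g i).support, (a : ℕ∞) < u j)
    (hadm : (F.filter (fun i => g i ≠ 0)).image (fun i => minSupp (g i)) ∈ SE n) :
    WIW P ((w : ℝ)⁻¹ • ∑ i ∈ F, g i) w := by
  classical
  have hn := h.one_le
  obtain ⟨l, hl, js, rfl, rfl⟩ := h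
  set K := F.filter (fun i => g i ≠ 0) with hK
  have hsum : ∑ i ∈ F, g i = ∑ i ∈ K, g i := by
    rw [hK, Finset.sum_filter]
    refine Finset.sum_congr rfl fun i _ => ?_
    by_cases hi : g i = 0 <;> simp [hi]
  let e := K.orderEmbOfFin rfl
  have heK : ∀ k, e k ∈ K := fun k => Finset.orderEmbOfFin_mem _ _ _
  have heF : ∀ k, e k ∈ F := fun k => (Finset.mem_filter.1 (heK k)).1
  have hene : ∀ k, g (e k) ≠ 0 := fun k => (Finset.mem_filter.1 (heK k)).2
  have hsurj : ∀ i ∈ K, ∃ k, e k = i := by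
    intro i hi
    have : i ∈ Set.range e := by rw [Finset.range_orderEmbOfFin]; exact hi
    exact this
  have hsum2 : ∑ i ∈ K, g i = ∑ k, g (e k) := by
    symm
    refine Finset.sum_bij (fun k _ => e k) (fun k _ => heK k) (fun a _ b _ hab => e.injective hab)
      (fun i hi => ?_) (fun _ _ => rfl)
    obtain ⟨k, hk⟩ := hsurj i hi
    exact ⟨k, Finset.mem_univ _, hk⟩
  have hne : ∀ k, (g (e k)).support.Nonempty := fun k => Finsupp.support_nonempty_iff.2 (hene k)
  rw [hsum, hsum2]
  refine WIW.op l hl js K.card (fun k => g (e k)) (fun k => u (e k))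
    (fun k => hg _ (heF k) (hene k)) ⟨hne, ?_, ?_⟩ ?_
  · intro q r hqr
    exact blocks_of (hne q) (hne r) (hs _ (heF q) _ (heF r) (e.strictMono hqr))
  · have : Finset.univ.image (fun q => minSupp (g (e q))) = K.image (fun i => minSupp (g i)) := by
      ext m
      simp only [Finset.mem_image, Finset.mem_univ, true_and]
      constructor
      · rintro ⟨q, rfl⟩; exact ⟨e q, heK q, rfl⟩
      · rintro ⟨i, hi, rfl⟩
        obtain ⟨k, rfl⟩ := hsurj i hi
        exact ⟨k, rfl⟩
    rw [this]
    exact mem_Schreier_of_SE hn hadm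
  · intro q r hqr
    have : q < r := Fin.mk_lt_mk.2 (by omega)
    exact hv _ (heF q) _ (heF r) (e.strictMono this) (hene r) _ (maxSupp_mem (hne q))

lemma WIW_zero : WIW P 0 ((P.m 0 : ℕ) : ℕ∞) := by
  have := Wop (isType_single (P := P) 0) (∅ : Finset ℕ) (fun _ => 0) (fun _ => ⊤) (by simp)
    (by simp) (by simp) (by simpa using SE_empty _)
  simpa using this

lemma Dec.minSupp_lt {n d : ℕ} {f : Fin d → c00} {u : Fin d → ℕ∞} (h : Dec P n f u)
    {q r : Fin d} (hqr : q < r) : minSupp (f q) < minSupp (f r) :=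
  h.succ q r hqr _ (minSupp_mem (h.ne q)) _ (minSupp_mem (h.ne r))

lemma Dec.strictMono {n d : ℕ} {f : Fin d → c00} {u : Fin d → ℕ∞} (h : Dec P n f u) :
    StrictMono fun q => minSupp (f q) := fun _ _ hqr => h.minSupp_lt hqr

/-- Restricting the members of an admissible sequence keeps it admissible. -/
lemma Dec.adm_res {n d : ℕ} {f : Fin d → c00} {u : Fin d → ℕ∞} (h : Dec P n f u)
    (Q : Finset (Fin d)) (g : Fin d → c00) (hg : ∀ q ∈ Q, (g q).support ⊆ (f q).support)
    (hne : ∀ q ∈ Q, g q ≠ 0) : Q.image (fun q => minSupp (g q)) ∈ SE n := by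
  have hm : ∀ q ∈ Q, minSupp (g q) ∈ (g q).support := fun q hq =>
    minSupp_mem (Finsupp.support_nonempty_iff.2 (hne q hq))
  refine SE_spread (Finset.subset_univ Q) h.adm (h.strictMono.injective.injOn) ?_ ?_
  · intro q hq
    exact minSupp_le (hg q hq (hm q hq))
  · intro q hq r hr hqr
    exact h.succ q r (h.strictMono.lt_iff_lt.1 hqr) _ (hg q hq (hm q hq)) _ (hg r hr (hm r hr))

lemma WIW_res (E : Finset ℕ) {g : c00} {w : ℕ∞} (h : WIW P g w) :
    WIW P (res E g) w ∨ res E g = 0 := by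
  induction h using WIW_induct with
  | h0 i s hs =>
    by_cases hi : i ∈ E
    · left
      rw [res_of_subset (Finsupp.support_single_subset.trans (by simpa using hi))]
      exact WIW.unit i s hs
    · right
      ext k
      rw [res_apply]
      split_ifs with hk
      · rw [Finsupp.single_apply, if_neg (by rintro rfl; exact hi hk)]; rfl
      · rfl
  | h1 w n d f u ht hd ih _ =>
    left
    rw [map_smul, map_sum]
    refine Wop ht Finset.univ (fun q => res E (f q)) u (fun q _ hq => (ih q).resolve_right hq)
      ?_ ?_ ?_
    · intro q _ r _ hqr a ha b hb
      exact hd.succ q r hqr a (supp_res_subset' _ _ ha) b (supp_res_subset' _ _ hb)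
    · intro q _ r _ hqr _ a ha
      exact hd.vfg q r hqr a (supp_res_subset' _ _ ha)
    · exact hd.adm_res _ _ (fun q _ => supp_res_subset' _ _) (fun q hq => (Finset.mem_filter.1 hq).2)

lemma memW_res (E : Finset ℕ) {g : c00} (h : memWIW P g) : memWIW P (res E g) := by
  obtain ⟨w, h⟩ := h
  rcases WIW_res E h with h | h
  · exact ⟨w, h⟩
  · rw [h]; exact ⟨_, WIW_zero⟩

lemma WIW_neg {g : c00} {w : ℕ∞} (h : WIW P g w) : WIW P (-g) w := by
  induction h using WIW_induct with
  | h0 i s hs =>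
    rw [← Finsupp.single_neg]
    refine WIW.unit i _ ?_
    rcases hs with rfl | rfl <;> simp
  | h1 w n d f u ht hd ih _ =>
    rw [← smul_neg, ← Finset.sum_neg_distrib]
    refine Wop ht Finset.univ (fun q => - (f q)) u (fun q _ _ => ih q) ?_ ?_ ?_
    · intro q _ r _ hqr a ha b hb
      exact hd.succ q r hqr a (by simpa using ha) b (by simpa using hb)
    · intro q _ r _ hqr _ a ha
      exact hd.vfg q r hqr a (by simpa using ha)
    · exact hd.adm_res _ _ (fun q _ => by simp) (fun q hq => (Finset.mem_filter.1 hq).2)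

lemma WIW_two_le {g : c00} {w : ℕ∞} (h : WIW P g w) : 2 ≤ w := by
  rcases WIW_elim h with ⟨i, s, _, _, rfl⟩ | ⟨w0, n, d, f, u, ht, _, _, rfl⟩
  · exact le_top
  · exact_mod_cast ht.two_le

/-- A sum of functionals with disjoint supports is coordinatewise one of its terms. -/
lemma abs_sum_le_of_disj {ι : Type*} (F : Finset ι) (f : ι → c00) {b : ℝ} (hb : 0 ≤ b)
    (hf : ∀ q ∈ F, ∀ i, |f q i| ≤ b)
    (hd : ∀ q ∈ F, ∀ r ∈ F, q ≠ r → ∀ a ∈ (f q).support, a ∉ (f r).support) (i : ℕ) :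
    |(∑ q ∈ F, f q) i| ≤ b := by
  classical
  rw [Finsupp.finsetSum_apply]
  by_cases hz : ∀ q ∈ F, f q i = 0
  · rw [Finset.sum_eq_zero hz]; simpa using hb
  · push Not at hz
    obtain ⟨q, hq, hqi⟩ := hz
    rw [Finset.sum_eq_single_of_mem q hq]
    · exact hf q hq i
    · intro r hr hrq
      have := hd q hq r hr (Ne.symm hrq) i (Finsupp.mem_support_iff.2 hqi)
      simpa using this

lemma Dec.disj {n d : ℕ} {f : Fin d → c00} {u : Fin d → ℕ∞} (h : Dec P n f u)
    {q r : Fin d} (hqr : q ≠ r) : ∀ a ∈ (f q).support, a ∉ (f r).support := by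
  intro a ha hb
  rcases hqr.lt_or_gt with hlt | hlt
  · exact lt_irrefl _ (h.succ _ _ hlt a ha a hb)
  · exact lt_irrefl _ (h.succ _ _ hlt a hb a ha)

lemma WIW_coord {g : c00} {w : ℕ∞} (h : WIW P g w) :
    (∀ i, |g i| ≤ 1) ∧ ∀ w0 : ℕ, w = w0 → ∀ i, |g i| ≤ (w0 : ℝ)⁻¹ := by
  induction h using WIW_induct with
  | h0 i s hs =>
    refine ⟨fun k => ?_, fun w0 h => absurd h (by simp)⟩
    rw [Finsupp.single_apply]
    split_ifs
    · rcases hs with rfl | rfl <;> simp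
    · simp
  | h1 w n d f u ht hd ih _ =>
    have h2 : (2 : ℝ) ≤ w := by exact_mod_cast ht.two_le
    have key : ∀ i, |((w : ℝ)⁻¹ • ∑ q, f q) i| ≤ (w : ℝ)⁻¹ := by
      intro i
      rw [Finsupp.smul_apply, smul_eq_mul, abs_mul, abs_of_nonneg (by positivity)]
      exact mul_le_of_le_one_right (by positivity)
        (abs_sum_le_of_disj _ _ zero_le_one (fun q _ => (ih q).1) (fun q _ r _ hqr => hd.disj hqr) i)
    refine ⟨fun i => (key i).trans (inv_le_one_of_one_le₀ (by linarith)), fun w0 h => ?_⟩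
    have : w = w0 := by exact_mod_cast h
    subst this
    exact key

lemma WIW_pr_le {g : c00} {w : ℕ∞} (h : WIW P g w) (x : c00) : |pr g x| ≤ l1 x := by
  simpa using abs_pr_le (WIW_coord h).1 x

lemma WIW_pr_le_weight {g : c00} {w : ℕ} (h : WIW P g w) (x : c00) :
    |pr g x| ≤ (w : ℝ)⁻¹ * l1 x := abs_pr_le ((WIW_coord h).2 w rfl) x

/-! ### The norm and the dual norm -/

lemma bddAbove_norm (x : c00) : BddAbove {r | ∃ f, memWIW P f ∧ r = evalPair f x} := by
  refine ⟨l1 x, ?_⟩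
  rintro r ⟨f, ⟨w, hf⟩, rfl⟩
  exact (le_abs_self _).trans (WIW_pr_le hf x)

lemma pr_le_norm {g : c00} (h : memWIW P g) (x : c00) : pr g x ≤ iwNorm P x :=
  le_csSup (bddAbove_norm x) ⟨g, h, rfl⟩

lemma abs_pr_le_norm {g : c00} (h : memWIW P g) (x : c00) : |pr g x| ≤ iwNorm P x := by
  refine abs_le.2 ⟨?_, pr_le_norm h x⟩
  obtain ⟨w, h⟩ := h
  have := pr_le_norm ⟨w, WIW_neg h⟩ x
  simp only [map_neg, LinearMap.neg_apply] at this
  linarith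

lemma norm_le {x : c00} {b : ℝ} (h : ∀ g, memWIW P g → pr g x ≤ b) : iwNorm P x ≤ b := by
  refine csSup_le ⟨_, 0, ⟨_, WIW_zero⟩, rfl⟩ ?_
  rintro r ⟨f, hf, rfl⟩
  exact h f hf

lemma norm_nonneg' (x : c00) : 0 ≤ iwNorm P x :=
  (abs_nonneg _).trans (abs_pr_le_norm ⟨_, WIW_zero⟩ x)

lemma coord_le_norm (x : c00) (i : ℕ) : |x i| ≤ iwNorm P x := by
  have := abs_pr_le_norm (P := P) ⟨_, WIW.unit i 1 (Or.inl rfl)⟩ x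
  simpa [pr_single] using this

lemma norm_le_l1 (x : c00) : iwNorm P x ≤ l1 x :=
  norm_le fun _ ⟨_, hg⟩ => (le_abs_self _).trans (WIW_pr_le hg x)

lemma norm_res_le (E : Finset ℕ) (x : c00) : iwNorm P (res E x) ≤ iwNorm P x :=
  norm_le fun g hg => by rw [← pr_res]; exact pr_le_norm (memW_res E hg) x

lemma norm_smul_le (c : ℝ) (x : c00) : iwNorm P (c • x) ≤ |c| * iwNorm P x :=
  norm_le fun g hg => by
    rw [map_smul, smul_eq_mul]
    refine (le_abs_self _).trans ?_
    rw [abs_mul]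
    exact mul_le_mul_of_nonneg_left (abs_pr_le_norm hg x) (abs_nonneg _)

lemma norm_smul' (c : ℝ) (x : c00) : iwNorm P (c • x) = |c| * iwNorm P x := by
  refine le_antisymm (norm_smul_le c x) ?_
  rcases eq_or_ne c 0 with rfl | hc
  · simpa using norm_nonneg' (P := P) _
  · have := norm_smul_le (P := P) c⁻¹ (c • x)
    rw [smul_smul, inv_mul_cancel₀ hc, one_smul, abs_inv] at this
    have h2 : 0 < |c| := abs_pos.2 hc
    calc |c| * iwNorm P x ≤ |c| * (|c|⁻¹ * iwNorm P (c • x)) := by gcongr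
      _ = iwNorm P (c • x) := by field_simp

lemma norm_sum_le {ι : Type*} (F : Finset ι) (x : ι → c00) :
    iwNorm P (∑ i ∈ F, x i) ≤ ∑ i ∈ F, iwNorm P (x i) :=
  norm_le fun g hg => by
    rw [map_sum]
    exact Finset.sum_le_sum fun i _ => pr_le_norm hg _

lemma eq_zero_of_norm {x : c00} (h : iwNorm P x = 0) : x = 0 := by
  ext i
  have := coord_le_norm (P := P) x i
  rw [h] at this
  simpa using abs_nonpos_iff.1 this

lemma l1_mul_le (f x : c00) : |pr f x| ≤ l1 f * iwNorm P x := by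
  rw [pr_eq_sum subset_rfl, l1, Finset.sum_mul]
  refine (Finset.abs_sum_le_sum_abs _ _).trans (Finset.sum_le_sum fun i _ => ?_)
  rw [abs_mul]
  exact mul_le_mul_of_nonneg_left (coord_le_norm x i) (abs_nonneg _)

lemma bddAbove_dual (f : c00) : BddAbove {r | ∃ x : c00, iwNorm P x ≤ 1 ∧ r = evalPair f x} := by
  refine ⟨l1 f, ?_⟩
  rintro r ⟨x, hx, rfl⟩
  exact (le_abs_self _).trans ((l1_mul_le (P := P) f x).trans
    (mul_le_of_le_one_right (l1_nonneg _) hx))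

lemma norm_zero' : iwNorm P 0 = 0 := by
  have := norm_smul' (P := P) 0 0
  simpa using this

lemma pr_le_dual (f : c00) {x : c00} (hx : iwNorm P x ≤ 1) : pr f x ≤ iwDualNorm P f :=
  le_csSup (bddAbove_dual f) ⟨x, hx, rfl⟩

lemma dual_nonneg (f : c00) : 0 ≤ iwDualNorm P f := by
  have := pr_le_dual (P := P) f (x := 0) (by rw [norm_zero']; exact zero_le_one)
  simpa using this

lemma pr_le_dual_mul (f x : c00) : |pr f x| ≤ iwDualNorm P f * iwNorm P x := by
  have key : ∀ x : c00, pr f x ≤ iwDualNorm P f * iwNorm P x := by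
    intro x
    rcases (norm_nonneg' (P := P) x).eq_or_lt with h | h
    · rw [eq_zero_of_norm h.symm]; simp [norm_zero']
    · have := pr_le_dual (P := P) f (x := (iwNorm P x)⁻¹ • x) (by
        rw [norm_smul', abs_of_pos (inv_pos.2 h), inv_mul_cancel₀ h.ne'])
      rw [map_smul, smul_eq_mul, inv_mul_le_iff₀ h] at this
      linarith
  refine abs_le.2 ⟨?_, key x⟩
  have := key (-x)
  rw [map_neg, show -x = (-1 : ℝ) • x by simp, norm_smul'] at this
  simp at this
  linarith

lemma dual_le {f : c00} {b : ℝ} (hb : 0 ≤ b) (h : ∀ x, |pr f x| ≤ b * iwNorm P x) :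
    iwDualNorm P f ≤ b := by
  refine csSup_le ⟨_, 0, by rw [norm_zero']; exact zero_le_one, rfl⟩ ?_
  rintro r ⟨x, hx, rfl⟩
  exact (le_abs_self _).trans ((h x).trans (mul_le_of_le_one_right hb hx))

lemma dual_add_le (f g : c00) : iwDualNorm P (f + g) ≤ iwDualNorm P f + iwDualNorm P g := by
  refine dual_le (add_nonneg (dual_nonneg _) (dual_nonneg _)) fun x => ?_
  rw [map_add, LinearMap.add_apply, add_mul]
  exact (abs_add_le _ _).trans (add_le_add (pr_le_dual_mul f x) (pr_le_dual_mul g x))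

lemma dual_smul_le (c : ℝ) (f : c00) : iwDualNorm P (c • f) ≤ |c| * iwDualNorm P f := by
  refine dual_le (mul_nonneg (abs_nonneg _) (dual_nonneg _)) fun x => ?_
  rw [map_smul, LinearMap.smul_apply, smul_eq_mul, abs_mul, mul_assoc]
  exact mul_le_mul_of_nonneg_left (pr_le_dual_mul f x) (abs_nonneg _)

lemma dual_smul (c : ℝ) (f : c00) : iwDualNorm P (c • f) = |c| * iwDualNorm P f := by
  refine le_antisymm (dual_smul_le c f) ?_
  rcases eq_or_ne c 0 with rfl | hc
  · simpa using dual_nonneg (P := P) _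
  · have := dual_smul_le (P := P) c⁻¹ (c • f)
    rw [smul_smul, inv_mul_cancel₀ hc, one_smul, abs_inv] at this
    have h2 : 0 < |c| := abs_pos.2 hc
    calc |c| * iwDualNorm P f ≤ |c| * (|c|⁻¹ * iwDualNorm P (c • f)) := by gcongr
      _ = iwDualNorm P (c • f) := by field_simp

lemma dual_sum_le {ι : Type*} (F : Finset ι) (f : ι → c00) :
    iwDualNorm P (∑ i ∈ F, f i) ≤ ∑ i ∈ F, iwDualNorm P (f i) := by
  classical
  induction F using Finset.induction_on with
  | empty =>
    have := dual_smul (P := P) 0 0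
    simp at this
    simp [this]
  | insert a s ha ih =>
    rw [Finset.sum_insert ha, Finset.sum_insert ha]
    exact (dual_add_le _ _).trans (by gcongr)

lemma dual_neg (f : c00) : iwDualNorm P (-f) = iwDualNorm P f := by
  rw [show -f = (-1 : ℝ) • f by simp, dual_smul]; simp

lemma dual_sub_abs_le (f g : c00) :
    |iwDualNorm P f - iwDualNorm P g| ≤ iwDualNorm P (f - g) := by
  have h1 := dual_add_le (P := P) (f - g) g
  have h2 := dual_add_le (P := P) (g - f) f
  rw [sub_add_cancel] at h1 h2
  rw [← neg_sub f g, dual_neg] at h2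
  exact abs_le.2 ⟨by linarith, by linarith⟩

lemma dual_pos {f : c00} (h : f ≠ 0) : 0 < iwDualNorm P f := by
  refine (dual_nonneg f).lt_of_ne fun h0 => h ?_
  ext i
  have := pr_le_dual_mul (P := P) f (Finsupp.single i 1)
  rw [← h0, zero_mul, pr_eq_sum' f (E := {i}) Finsupp.support_single_subset] at this
  simpa using abs_nonpos_iff.1 this

/-- A vector almost norming a functional can be taken inside the support of the functional. -/
lemma exists_norming {f : c00} {b : ℝ} (hb : b < iwDualNorm P f) :
    ∃ x : c00, iwNorm P x ≤ 1 ∧ x.support ⊆ f.support ∧ b < pr f x := by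
  obtain ⟨r, ⟨x, hx, rfl⟩, hr⟩ := exists_lt_of_lt_csSup (⟨_, 0, by
    rw [norm_zero']; exact zero_le_one, rfl⟩ :
    ({r | ∃ x : c00, iwNorm P x ≤ 1 ∧ r = evalPair f x}).Nonempty) hb
  refine ⟨res f.support x, (norm_res_le _ x).trans hx, supp_res_subset _ _, ?_⟩
  rw [pr_of_subset subset_rfl]
  exact hr

end IWDual

namespace IWDual

/-! ### Special convex combinations -/

lemma sum_biUnion_le' {ι κ : Type*} [DecidableEq ι] (K : Finset κ) (G : κ → Finset ι)
    {c : ι → ℝ} (hc : ∀ q, 0 ≤ c q) :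
    ∑ q ∈ K.biUnion G, c q ≤ ∑ k ∈ K, ∑ q ∈ G k, c q := by
  classical
  induction K using Finset.induction_on with
  | empty => simp
  | insert a s ha ih =>
    rw [Finset.biUnion_insert, Finset.sum_insert ha]
    have h1 := Finset.sum_union_inter (s₁ := G a) (s₂ := s.biUnion G) (f := c)
    have h2 : 0 ≤ ∑ q ∈ G a ∩ s.biUnion G, c q := Finset.sum_nonneg fun q _ => hc q
    linarith

/-- Existence of special convex combinations.  Admissibility of the index set is measured with
the left end points `s q`, smallness of the coefficients with the right end points `t q`. -/
lemma exists_scc_aux {s t : ℕ → ℕ} (hst : ∀ q, s q ≤ t q)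
    (hts : ∀ q, t q < s (q + 1)) (n : ℕ) : ∀ k q0 : ℕ, ∃ (F : Finset ℕ) (c : ℕ → ℝ),
      F.Nonempty ∧ (∀ q ∈ F, q0 ≤ q) ∧ F.image s ∈ SE (n + 1) ∧ (∀ q, 0 ≤ c q) ∧
      ∑ q ∈ F, c q = 1 ∧
      ∀ G ⊆ F, G.image t ∈ SE n → ∑ q ∈ G, c q ≤ 1 / ((k : ℝ) + 1) := by
  classical
  have hs : StrictMono s := strictMono_nat_of_lt_succ fun q => (hst q).trans_lt (hts q)
  have ht : StrictMono t := strictMono_nat_of_lt_succ fun q => (hts q).trans_le (hst _)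
  induction n with
  | zero =>
    intro k q0
    let q1 := max q0 (k + 1)
    refine ⟨Finset.Ico q1 (q1 + (k + 1)), fun _ => 1 / ((k : ℝ) + 1), ?_, ?_, ?_, ?_, ?_, ?_⟩
    · simp
    · intro q hq
      exact (le_max_left _ _).trans (Finset.mem_Ico.1 hq).1
    · have := SE_biUnion (n := 0) (Finset.Ico q1 (q1 + (k + 1))) (fun q => {s q})
        (fun q _ => SE_singleton _) (by
          intro a _ b _ hab; simpa using hs hab) (by
          intro q hq
          have h2 := (Finset.mem_Ico.1 hq).1
          have h3 : k + 1 ≤ q1 := le_max_right _ _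
          have h4 := hs.le_apply (x := q)
          simp
          omega)
      rwa [Finset.biUnion_singleton] at this
    · intro q; positivity
    · simp; field_simp
    · intro G _ hG
      have hc : G.card ≤ 1 := by
        rw [← Finset.card_image_of_injective _ ht.injective]
        rcases hG with h | ⟨i, h⟩ <;> simp [h]
      rw [Finset.sum_const, nsmul_eq_mul]
      have : (G.card : ℝ) ≤ 1 := by exact_mod_cast hc
      exact mul_le_of_le_one_left (by positivity) this
  | succ n ih =>
    intro k q0
    choose F c hne hq0 hadm hc hsum hsmall using ih
    let N := 2 * (k + 1)
    let st : ℕ → ℕ × ℕ := fun i => Nat.rec (0, max q0 N)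
      (fun _ p => (N * ((F p.1 p.2).sup t + 1), (F p.1 p.2).sup id + 1)) i
    let Fs : ℕ → Finset ℕ := fun i => F (st i).1 (st i).2
    let cs : ℕ → ℕ → ℝ := fun i => c (st i).1 (st i).2
    have hst1 : ∀ i, (st (i + 1)).1 = N * ((Fs i).sup t + 1) := fun i => rfl
    have hst2 : ∀ i, (st (i + 1)).2 = (Fs i).sup id + 1 := fun i => rfl
    have hsucc : ∀ i j, i < j → ∀ a ∈ Fs i, ∀ b ∈ Fs j, a < b := by
      intro i j hij
      induction j, hij using Nat.le_induction with
      | base =>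
        intro a ha b hb
        have h2 := hq0 _ _ b hb
        rw [hst2] at h2
        have h3 := Finset.le_sup (f := id) ha
        simp only [id] at h3
        omega
      | succ j _ ihj =>
        intro a ha b hb
        obtain ⟨m, hm⟩ := hne (st j).1 (st j).2
        have h2 := hq0 _ _ b hb
        rw [hst2] at h2
        have h3 := Finset.le_sup (f := id) hm
        simp only [id] at h3
        have h4 := ihj a ha m hm
        have h5 : (F (st j).1 (st j).2).sup id = (Fs j).sup id := rfl
        omega
    have hge : ∀ i, ∀ a ∈ Fs i, max q0 N ≤ a := by
      intro i a ha
      rcases Nat.eq_zero_or_pos i with rfl | hi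
      · exact hq0 _ _ a ha
      · obtain ⟨m, hm⟩ := hne (st 0).1 (st 0).2
        exact (hq0 _ _ m hm).trans (hsucc 0 i hi m hm a ha).le
    have hNpos : (0 : ℝ) < N := by simp only [N]; push_cast; positivity
    have hdisj : ∀ i j, i ≠ j → ∀ a ∈ Fs i, a ∉ Fs j := by
      intro i j hij a ha hb
      rcases hij.lt_or_gt with h | h
      · exact lt_irrefl _ (hsucc _ _ h a ha a hb)
      · exact lt_irrefl _ (hsucc _ _ h a hb a ha)
    let C : ℕ → ℝ := fun q => (N : ℝ)⁻¹ * ∑ i ∈ Finset.range N, if q ∈ Fs i then cs i q else 0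
    have hC : ∀ i < N, ∀ q ∈ Fs i, C q = (N : ℝ)⁻¹ * cs i q := by
      intro i hi q hq
      simp only [C]
      rw [Finset.sum_eq_single_of_mem i (Finset.mem_range.2 hi)]
      · rw [if_pos hq]
      · intro j _ hj
        rw [if_neg (hdisj i j (Ne.symm hj) q hq)]
    have hsplit : ∀ G ⊆ (Finset.range N).biUnion Fs,
        ∑ q ∈ G, C q = ∑ i ∈ Finset.range N, (N : ℝ)⁻¹ * ∑ q ∈ G ∩ Fs i, cs i q := by
      intro G hG
      have : G = (Finset.range N).biUnion (fun i => G ∩ Fs i) := by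
        rw [← Finset.inter_biUnion]
        exact (Finset.inter_eq_left.2 hG).symm
      conv_lhs => rw [this]
      rw [Finset.sum_biUnion]
      · refine Finset.sum_congr rfl fun i hi => ?_
        rw [Finset.mul_sum]
        refine Finset.sum_congr rfl fun q hq => ?_
        exact hC i (Finset.mem_range.1 hi) q (Finset.mem_inter.1 hq).2
      · intro i _ j _ hij
        rw [Function.onFun, Finset.disjoint_left]
        intro a ha hb
        exact hdisj i j hij a (Finset.mem_inter.1 ha).2 (Finset.mem_inter.1 hb).2
    refine ⟨(Finset.range N).biUnion Fs, C, ?_, ?_, ?_, ?_, ?_, ?_⟩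
    · obtain ⟨m, hm⟩ := hne (st 0).1 (st 0).2
      exact ⟨m, Finset.mem_biUnion.2 ⟨0, by simp [N], hm⟩⟩
    · intro q hq
      obtain ⟨i, _, hi⟩ := Finset.mem_biUnion.1 hq
      exact (le_max_left _ _).trans (hge i q hi)
    · rw [Finset.biUnion_image]
      apply SE_biUnion
      · intro i _; exact hadm _ _
      · intro i _ j _ hij a ha b hb
        obtain ⟨a, ha', rfl⟩ := Finset.mem_image.1 ha
        obtain ⟨b, hb', rfl⟩ := Finset.mem_image.1 hb
        exact hs (hsucc i j hij a ha' b hb')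
      · intro i _ a ha
        obtain ⟨a, ha', rfl⟩ := Finset.mem_image.1 ha
        rw [Finset.card_range]
        exact ((le_max_right _ _).trans (hge i a ha')).trans hs.le_apply
    · intro q
      refine mul_nonneg (by positivity) (Finset.sum_nonneg fun i _ => ?_)
      split_ifs
      · exact hc _ _ _
      · exact le_rfl
    · rw [hsplit _ subset_rfl]
      have : ∀ i ∈ Finset.range N,
          (N : ℝ)⁻¹ * ∑ q ∈ (Finset.range N).biUnion Fs ∩ Fs i, cs i q = (N : ℝ)⁻¹ := by
        intro i hi
        rw [Finset.inter_eq_right.2 (Finset.subset_biUnion_of_mem Fs hi)]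
        have : ∑ q ∈ Fs i, cs i q = 1 := hsum _ _
        rw [this, mul_one]
      rw [Finset.sum_congr rfl this, Finset.sum_const, Finset.card_range, nsmul_eq_mul,
        mul_inv_cancel₀ hNpos.ne']
    · intro G hG hGt
      rcases G.eq_empty_or_nonempty with rfl | hGne
      · simp; positivity
      rcases hGt with h | ⟨d, H, hH, hHs, hd, hU⟩
      · rw [Finset.image_eq_empty] at h
        exact absurd h hGne.ne_empty
      have hex : ∃ i, (G ∩ Fs i).Nonempty := by
        obtain ⟨q, hq⟩ := hGne
        obtain ⟨i, _, hi⟩ := Finset.mem_biUnion.1 (hG hq)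
        exact ⟨i, q, Finset.mem_inter.2 ⟨hq, hi⟩⟩
      let i0 := Nat.find hex
      obtain ⟨q1, hq1⟩ := Nat.find_spec hex
      have hqmem := Finset.mem_inter.1 hq1
      have hd0 : d ≤ t q1 := hd _ (Finset.mem_image_of_mem _ hqmem.1)
      -- beyond the first block met by `G`, each block contributes at most `1 / N`
      have hlate : ∀ i, i0 < i → ∑ q ∈ G ∩ Fs i, cs i q ≤ (N : ℝ)⁻¹ := by
        intro i hi
        obtain ⟨j, rfl⟩ : ∃ j, i = j + 1 := ⟨i - 1, by omega⟩
        have hdT : d ≤ (Fs j).sup t := by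
          rcases (Nat.lt_succ_iff.1 hi).eq_or_lt with h | h
          · refine hd0.trans (Finset.le_sup (f := t) ?_)
            rw [← h]; exact hqmem.2
          · obtain ⟨m, hm⟩ := hne (st j).1 (st j).2
            have h2 := hsucc _ _ h q1 hqmem.2 m hm
            exact hd0.trans ((ht h2).le.trans (Finset.le_sup (f := t) hm))
        have hcov : G ∩ Fs (j + 1) ⊆
            (Finset.univ : Finset (Fin d)).biUnion (fun k =>
              (G ∩ Fs (j + 1)).filter (fun q => t q ∈ H k)) := by
          intro q hq
          have : t q ∈ G.image t := Finset.mem_image_of_mem _ (Finset.mem_inter.1 hq).1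
          rw [hU] at this
          obtain ⟨k, _, hk⟩ := Finset.mem_biUnion.1 this
          exact Finset.mem_biUnion.2 ⟨k, Finset.mem_univ _, Finset.mem_filter.2 ⟨hq, hk⟩⟩
        have hcnn : ∀ q, 0 ≤ cs (j + 1) q := fun q => hc _ _ q
        calc ∑ q ∈ G ∩ Fs (j + 1), cs (j + 1) q
            ≤ ∑ q ∈ (Finset.univ : Finset (Fin d)).biUnion (fun k =>
              (G ∩ Fs (j + 1)).filter (fun q => t q ∈ H k)), cs (j + 1) q :=
              Finset.sum_le_sum_of_subset_of_nonneg hcov fun q _ _ => hcnn q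
          _ ≤ ∑ k : Fin d, ∑ q ∈ (G ∩ Fs (j + 1)).filter (fun q => t q ∈ H k), cs (j + 1) q :=
              sum_biUnion_le' _ _ hcnn
          _ ≤ ∑ _k : Fin d, 1 / (((st (j + 1)).1 : ℝ) + 1) := by
              refine Finset.sum_le_sum fun k _ => hsmall _ _ _ ?_ ?_
              · exact (Finset.filter_subset _ _).trans Finset.inter_subset_right
              · refine SE_subset (Or.inr (hH k)) ?_
                intro m hm
                obtain ⟨q, hq, rfl⟩ := Finset.mem_image.1 hm
                exact (Finset.mem_filter.1 hq).2
          _ = d / (((st (j + 1)).1 : ℝ) + 1) := by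
              rw [Finset.sum_const, Finset.card_univ, Fintype.card_fin, nsmul_eq_mul]; ring
          _ ≤ (N : ℝ)⁻¹ := by
              rw [hst1, div_le_iff₀ (by positivity)]
              push_cast
              have : (d : ℝ) ≤ ((Fs j).sup t : ℕ) := by exact_mod_cast hdT
              rw [mul_add, ← mul_assoc, inv_mul_cancel₀ hNpos.ne']
              have h3 : (0 : ℝ) ≤ (N : ℝ)⁻¹ * 1 := by positivity
              linarith
      have hall : ∀ i, ∑ q ∈ G ∩ Fs i, cs i q ≤ (N : ℝ)⁻¹ + if i = i0 then 1 else 0 := by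
        intro i
        rcases lt_trichotomy i i0 with h | h | h
        · have : G ∩ Fs i = ∅ := Finset.not_nonempty_iff_eq_empty.1 (Nat.find_min hex h)
          rw [this, if_neg h.ne]; simp
        · rw [if_pos h]
          have : ∑ q ∈ G ∩ Fs i, cs i q ≤ ∑ q ∈ Fs i, cs i q :=
            Finset.sum_le_sum_of_subset_of_nonneg Finset.inter_subset_right
              fun q _ _ => hc _ _ q
          have h2 : ∑ q ∈ Fs i, cs i q = 1 := hsum _ _
          have h3 : (0 : ℝ) ≤ (N : ℝ)⁻¹ := by positivity
          linarith
        · rw [if_neg h.ne']; simpa using hlate i h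
      rw [hsplit G hG, ← Finset.mul_sum]
      have h5 : ∑ i ∈ Finset.range N, ∑ q ∈ G ∩ Fs i, cs i q ≤ 2 := by
        refine (Finset.sum_le_sum fun i _ => hall i).trans ?_
        rw [Finset.sum_add_distrib, Finset.sum_const, Finset.card_range, nsmul_eq_mul,
          mul_inv_cancel₀ hNpos.ne', Finset.sum_ite_eq']
        split_ifs <;> norm_num
      calc (N : ℝ)⁻¹ * ∑ i ∈ Finset.range N, ∑ q ∈ G ∩ Fs i, cs i q ≤ (N : ℝ)⁻¹ * 2 := by gcongr
        _ = 1 / ((k : ℝ) + 1) := by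
          simp only [N]; push_cast; field_simp

lemma exists_scc {s t : ℕ → ℕ} (hst : ∀ q, s q ≤ t q)
    (hts : ∀ q, t q < s (q + 1)) {n : ℕ} (hn : 1 ≤ n) {ε : ℝ} (hε : 0 < ε) (q0 : ℕ) :
    ∃ (F : Finset ℕ) (c : ℕ → ℝ), F.Nonempty ∧ (∀ q ∈ F, q0 ≤ q) ∧ F.image s ∈ SE n ∧
      (∀ q, 0 ≤ c q) ∧ ∑ q ∈ F, c q = 1 ∧
      ∀ G ⊆ F, G.image t ∈ SE (n - 1) → ∑ q ∈ G, c q ≤ ε := by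
  obtain ⟨n, rfl⟩ : ∃ k, n = k + 1 := ⟨n - 1, by omega⟩
  obtain ⟨k, hk⟩ := exists_nat_one_div_lt hε
  obtain ⟨F, c, h2, h3, h4, h5, h6, h7⟩ := exists_scc_aux hst hts n k q0
  exact ⟨F, c, h2, h3, h4, h5, h6, fun G hG hG' => (h7 G hG hG').trans hk.le⟩

/-! ### Dual functionals as almost convex combinations of the norming set -/

variable {P : IWParams}

/-- The members of the norming set supported in `E`. -/
def WE (P : IWParams) (E : Finset ℕ) : Set c00 := {g | memWIW P g ∧ g.support ⊆ E}

lemma zero_mem_WE (E : Finset ℕ) : (0 : c00) ∈ WE P E := ⟨⟨_, WIW_zero⟩, by simp⟩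

/-- By Hahn-Banach, a functional of dual norm at most one is nearly a convex combination of members
of the norming set, and these can be taken inside its support. -/
lemma exists_conv {z : c00} (hz : iwDualNorm P z ≤ 1) {δ : ℝ} (hδ : 0 < δ) :
    ∃ r ∈ convexHull ℝ (WE P z.support), ∀ x, |pr z x - pr r x| ≤ δ * iwNorm P x := by
  classical
  set E := z.support with hE
  let T : c00 →ₗ[ℝ] (E → ℝ) :=
    { toFun := fun f i => f i, map_add' := fun _ _ => rfl, map_smul' := fun _ _ => rfl }
  have hconv : Convex ℝ (T '' convexHull ℝ (WE P E)) := (convex_convexHull ℝ _).linear_image T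
  have hmem : T z ∈ closure (T '' convexHull ℝ (WE P E)) := by
    by_contra hnot
    obtain ⟨f, u, hfu, hu⟩ := geometric_hahn_banach_closed_point hconv.closure isClosed_closure hnot
    let x : c00 := ∑ i : E, Finsupp.single (i : ℕ) (f (Pi.single i 1))
    have hxs : x.support ⊆ E := by
      intro k hk
      obtain ⟨i, _, hi⟩ := Finset.mem_biUnion.1 (Finsupp.support_finsetSum hk)
      have := Finsupp.support_single_subset hi
      rw [Finset.mem_singleton] at this
      rw [this]; exact i.2
    have hx : ∀ g : c00, pr g x = f (T g) := by
      intro g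
      have h1 : T g = ∑ i : E, g i • (Pi.single i (1 : ℝ) : E → ℝ) := by
        ext k
        simp [Finset.sum_apply, Pi.single_apply]
        rfl
      rw [h1, map_sum, map_sum]
      refine Finset.sum_congr rfl fun i _ => ?_
      rw [map_smul, pr_eq_sum' g (E := {(i : ℕ)}) Finsupp.support_single_subset]
      simp
    have hxn : iwNorm P x ≤ u := by
      refine norm_le fun g hg => ?_
      rw [← pr_of_subset' hxs, hx]
      refine (hfu _ (subset_closure ⟨_, subset_convexHull ℝ _ ⟨memW_res E hg, supp_res_subset _ _⟩, rfl⟩)).le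
    have h3 := (le_abs_self _).trans (pr_le_dual_mul (P := P) z x)
    rw [hx] at h3
    have h4 : iwDualNorm P z * iwNorm P x ≤ iwNorm P x :=
      mul_le_of_le_one_left (norm_nonneg' _) hz
    linarith
  have hpos : 0 < δ / (E.card + 1) := by positivity
  obtain ⟨_, ⟨r, hr, rfl⟩, hd⟩ := Metric.mem_closure_iff.1 hmem _ hpos
  refine ⟨r, hr, fun x => ?_⟩
  have hrs : r.support ⊆ E := by
    have : convexHull ℝ (WE P E) ⊆ {f : c00 | f.support ⊆ E} := by
      refine convexHull_min (fun g hg => hg.2) ?_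
      intro f hf g hg a b _ _ _
      exact (Finsupp.support_add).trans (Finset.union_subset
        ((Finsupp.support_smul).trans hf) ((Finsupp.support_smul).trans hg))
    exact this hr
  rw [pr_eq_sum (f := z) subset_rfl, pr_eq_sum (f := r) hrs, ← Finset.sum_sub_distrib]
  refine (Finset.abs_sum_le_sum_abs _ _).trans ?_
  calc ∑ i ∈ E, |z i * x i - r i * x i| ≤ ∑ i ∈ E, δ / (E.card + 1) * iwNorm P x := by
        refine Finset.sum_le_sum fun i hi => ?_
        rw [← sub_mul, abs_mul]
        refine mul_le_mul ?_ (coord_le_norm x i) (abs_nonneg _) hpos.le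
        have h1 := (dist_le_pi_dist (T z) (T r) ⟨i, hi⟩).trans hd.le
        rwa [Real.dist_eq] at h1
    _ = (E.card / (E.card + 1)) * (δ * iwNorm P x) := by
        rw [Finset.sum_const, nsmul_eq_mul]; ring
    _ ≤ δ * iwNorm P x := by
        refine mul_le_of_le_one_left (mul_nonneg hδ.le (norm_nonneg' _)) ?_
        rw [div_le_one (by positivity)]
        linarith

end IWDual

namespace IWDual

variable {P : IWParams}

/-! ### Suprema over sets of norming functionals -/

/-- The supremum of `|g x|` over the members `g` of the norming set lying in `K`. -/
noncomputable def rho (P : IWParams) (K : Set c00) (x : c00) : ℝ :=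
  sSup {r | r = 0 ∨ ∃ g ∈ K, memWIW P g ∧ r = |pr g x|}

lemma rho_bdd (K : Set c00) (x : c00) :
    BddAbove {r | r = 0 ∨ ∃ g ∈ K, memWIW P g ∧ r = |pr g x|} := by
  refine ⟨iwNorm P x, ?_⟩
  rintro r (rfl | ⟨g, _, hg, rfl⟩)
  · exact norm_nonneg' x
  · exact abs_pr_le_norm hg x

lemma rho_nonneg (K : Set c00) (x : c00) : 0 ≤ rho P K x := le_csSup (rho_bdd K x) (Or.inl rfl)

lemma le_rho {K : Set c00} {g : c00} (hg : g ∈ K) (hW : memWIW P g) (x : c00) :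
    |pr g x| ≤ rho P K x := le_csSup (rho_bdd K x) (Or.inr ⟨g, hg, hW, rfl⟩)

lemma rho_le {K : Set c00} {x : c00} {b : ℝ} (hb : 0 ≤ b)
    (h : ∀ g ∈ K, memWIW P g → |pr g x| ≤ b) : rho P K x ≤ b := by
  refine csSup_le ⟨0, Or.inl rfl⟩ ?_
  rintro r (rfl | ⟨g, hg, hW, rfl⟩)
  · exact hb
  · exact h g hg hW

lemma rho_le_norm (K : Set c00) (x : c00) : rho P K x ≤ iwNorm P x :=
  rho_le (norm_nonneg' x) fun _ _ hg => abs_pr_le_norm hg x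

/-- Sums of suprema are controlled by sums over arbitrary choices. -/
lemma sum_rho_le {ι : Type*} (F : Finset ι) (K : ι → Set c00) (x : c00) {b : ℝ}
    (h : ∀ g : ι → c00, (∀ i ∈ F, (g i ∈ K i ∧ memWIW P (g i)) ∨ g i = 0) →
      ∑ i ∈ F, |pr (g i) x| ≤ b) : ∑ i ∈ F, rho P (K i) x ≤ b := by
  refine le_of_forall_pos_le_add fun δ hδ => ?_
  have hpos : 0 < δ / (F.card + 1) := by positivity
  have : ∀ i, ∃ g, ((g ∈ K i ∧ memWIW P g) ∨ g = 0) ∧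
      rho P (K i) x ≤ |pr g x| + δ / (F.card + 1) := by
    intro i
    obtain ⟨r, hr, hlt⟩ := exists_lt_of_lt_csSup
      (⟨0, Or.inl rfl⟩ : {r | r = 0 ∨ ∃ g ∈ K i, memWIW P g ∧ r = |pr g x|}.Nonempty)
      (show rho P (K i) x - δ / (F.card + 1) < _ from sub_lt_self _ hpos)
    rcases hr with rfl | ⟨g, hg, hW, rfl⟩
    · exact ⟨0, Or.inr rfl, by simp; linarith⟩
    · exact ⟨g, Or.inl ⟨hg, hW⟩, by linarith⟩
  choose g hg hr using this
  calc ∑ i ∈ F, rho P (K i) x ≤ ∑ i ∈ F, (|pr (g i) x| + δ / (F.card + 1)) :=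
        Finset.sum_le_sum fun i _ => hr i
    _ = ∑ i ∈ F, |pr (g i) x| + F.card * (δ / (F.card + 1)) := by
        rw [Finset.sum_add_distrib, Finset.sum_const, nsmul_eq_mul]
    _ ≤ b + δ := by
        refine add_le_add (h g fun i _ => hg i) ?_
        rw [← mul_div_assoc, div_le_iff₀ (by positivity)]
        nlinarith

/-- Functionals supported in `E` of the form `w⁻¹ ∑ f_q`, of type `(w, n)`, all of whose
components have weight above some member of `E`. -/
def Rest (P : IWParams) (E : Finset ℕ) (τ : ℕ × ℕ) : Set c00 :=
  {a | IsType P τ.1 τ.2 ∧ ∃ (d : ℕ) (f : Fin d → c00) (u : Fin d → ℕ∞), Dec P τ.2 f u ∧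
    (∀ q, ∃ e ∈ E, (e : ℕ∞) < u q) ∧ (∀ q, (f q).support ⊆ E) ∧
    a = (τ.1 : ℝ)⁻¹ • ∑ q, f q}

/-- Functionals of the norming set supported in `E` with a weight above `N`. -/
def Hi (P : IWParams) (E : Finset ℕ) (N : ℕ) : Set c00 :=
  {a | ∃ w, WIW P a w ∧ (N : ℕ∞) < w ∧ a.support ⊆ E}

lemma Dec.neg {n d : ℕ} {f : Fin d → c00} {u : Fin d → ℕ∞} (h : Dec P n f u) :
    Dec P n (fun q => - f q) u where
  wiw q := WIW_neg (h.wiw q)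
  ne q := by rw [Finsupp.support_neg]; exact h.ne q
  succ q r hqr a ha b hb := h.succ q r hqr a (by simpa using ha) b (by simpa using hb)
  vfg q r hqr a ha := h.vfg q r hqr a (by simpa using ha)
  adm := h.adm_res _ _ (fun q _ => by simp) (fun q _ => by
    simpa using Finsupp.support_nonempty_iff.1 (h.ne q))

lemma Dec.tail {n d : ℕ} {f : Fin (d + 1) → c00} {u : Fin (d + 1) → ℕ∞} (h : Dec P n f u) :
    Dec P n (fun q : Fin d => f q.succ) (fun q => u q.succ) where
  wiw q := h.wiw _
  ne q := h.ne _
  succ q r hqr := h.succ _ _ (Fin.succ_lt_succ_iff.2 hqr)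
  vfg q r hqr := h.vfg _ _ (Fin.succ_lt_succ_iff.2 hqr)
  adm := by
    refine SE_subset h.adm ?_
    intro m hm
    obtain ⟨q, _, rfl⟩ := Finset.mem_image.1 hm
    exact Finset.mem_image_of_mem _ (Finset.mem_univ _)

lemma Dec.op {w n d : ℕ} {f : Fin d → c00} {u : Fin d → ℕ∞} (h : Dec P n f u)
    (ht : IsType P w n) : WIW P ((w : ℝ)⁻¹ • ∑ q, f q) w :=
  Wop ht Finset.univ f u (fun q _ _ => h.wiw q) (fun q _ r _ => h.succ q r)
    (fun q _ r _ hqr _ => h.vfg q r hqr)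
    (h.adm_res _ _ (fun _ _ => subset_rfl) fun _ hq => (Finset.mem_filter.1 hq).2)

lemma Rest_neg {E : Finset ℕ} {τ : ℕ × ℕ} {a : c00} (h : a ∈ Rest P E τ) : -a ∈ Rest P E τ := by
  obtain ⟨ht, d, f, u, hd, hu, hE, rfl⟩ := h
  exact ⟨ht, d, _, u, hd.neg, hu, fun q => by simpa using hE q, by simp⟩

lemma Hi_neg {E : Finset ℕ} {N : ℕ} {a : c00} (h : a ∈ Hi P E N) : -a ∈ Hi P E N := by
  obtain ⟨w, hw, hN, hE⟩ := h
  exact ⟨w, WIW_neg hw, hN, by simpa using hE⟩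

lemma sum_abs_of_neg_closed {ι : Type*} (F : Finset ι) (K : ι → Set c00)
    (hneg : ∀ i, ∀ a ∈ K i, -a ∈ K i) (x : c00) {b : ℝ}
    (h : ∀ a : ι → c00, (∀ i ∈ F, a i ∈ K i) → ∑ i ∈ F, pr (a i) x ≤ b)
    (a : ι → c00) (ha : ∀ i ∈ F, a i ∈ K i) : ∑ i ∈ F, |pr (a i) x| ≤ b := by
  classical
  have := h (fun i => if 0 ≤ pr (a i) x then a i else - a i) (fun i hi => by
    split_ifs
    · exact ha i hi
    · exact hneg i _ (ha i hi))
  refine le_trans (Finset.sum_le_sum fun i _ => ?_) this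
  split_ifs with h
  · rw [abs_of_nonneg h]
  · rw [map_neg, LinearMap.neg_apply, abs_of_neg (not_le.1 h)]

/-- Members of `Rest` of a common type over an `S_{n_j}`-admissible family of sets are jointly
bounded: after division by `m_j` their sum is in the norming set. -/
lemma sum_Rest_le {j : ℕ} (F : Finset ℕ) (E : ℕ → Finset ℕ) (s : ℕ → ℕ)
    (hs : F.image s ∈ SE (P.n j)) (hsE : ∀ i ∈ F, s i ∈ E i) (hle : ∀ i ∈ F, ∀ m ∈ E i, s i ≤ m)
    (hE : ∀ i ∈ F, ∀ i' ∈ F, i < i' → ∀ a ∈ E i, ∀ b ∈ E i', a < b) (τ : ℕ × ℕ) (x : c00) :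
    ∑ i ∈ F, rho P (Rest P (E i) τ) x ≤ P.m j * iwNorm P x := by
  classical
  have hmpos : (0 : ℝ) < P.m j := by have := two_le_m (P := P) j; positivity
  by_cases ht : IsType P τ.1 τ.2
  swap
  · rw [Finset.sum_eq_zero]
    · exact mul_nonneg hmpos.le (norm_nonneg' x)
    · intro i _
      exact le_antisymm (rho_le le_rfl fun g hg => absurd hg.1 ht) (rho_nonneg _ _)
  have h0 : ∀ i, (0 : c00) ∈ Rest P (E i) τ := fun i =>
    ⟨ht, 0, Fin.elim0, Fin.elim0, ⟨fun q => q.elim0, fun q => q.elim0, fun q => q.elim0,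
      fun q => q.elim0, by simpa using SE_empty _⟩, fun q => q.elim0, fun q => q.elim0, by simp⟩
  refine sum_rho_le F _ x fun g hg => ?_
  refine sum_abs_of_neg_closed F (fun i => Rest P (E i) τ) (fun i a => Rest_neg) x ?_ g (fun i hi => by
    rcases hg i hi with h | h
    · exact h.1
    · rw [h]; exact h0 i)
  clear hg g
  intro a ha
  have hpos : (0 : ℝ) < τ.1 := by have := ht.two_le; positivity
  have hsmono : ∀ i ∈ F, ∀ i' ∈ F, i < i' → s i < s i' := fun i hi i' hi' h =>
    hE i hi i' hi' h _ (hsE i hi) _ (hsE i' hi')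
  have hslt : ∀ i ∈ F, ∀ i' ∈ F, s i < s i' → i < i' := by
    intro i hi i' hi' h
    by_contra hc
    rcases (not_lt.1 hc).eq_or_lt with rfl | h'
    · exact lt_irrefl _ h
    · exact absurd (hsmono _ hi' _ hi h') (by omega)
  have ha' : ∀ i, ∃ (d : ℕ) (f : Fin d → c00) (u : Fin d → ℕ∞), i ∈ F → (Dec P τ.2 f u ∧
    (∀ q, ∃ e ∈ E i, (e : ℕ∞) < u q) ∧ (∀ q, (f q).support ⊆ E i) ∧
    a i = (τ.1 : ℝ)⁻¹ • ∑ q, f q) := by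
    intro i
    by_cases hi : i ∈ F
    · obtain ⟨_, d, f, u, h⟩ := ha i hi
      exact ⟨d, f, u, fun _ => h⟩
    · exact ⟨0, Fin.elim0, Fin.elim0, fun h => absurd h hi⟩
  choose d f u hfu using ha'
  let D := F.sup d
  let G : ℕ ×ₗ ℕ → c00 := fun p =>
    if h : (ofLex p).2 < d (ofLex p).1 then f (ofLex p).1 ⟨(ofLex p).2, h⟩ else 0
  let U : ℕ ×ₗ ℕ → ℕ∞ := fun p =>
    if h : (ofLex p).2 < d (ofLex p).1 then u (ofLex p).1 ⟨(ofLex p).2, h⟩ else 0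
  let FF : Finset (ℕ ×ₗ ℕ) := (F ×ˢ Finset.range D).map toLex.toEmbedding
  have hFF : ∀ p ∈ FF, (ofLex p).1 ∈ F := by
    intro p hp
    obtain ⟨v, hv, rfl⟩ := Finset.mem_map.1 hp
    exact (Finset.mem_product.1 hv).1
  have hG : ∀ p, G p ≠ 0 → ∃ h : (ofLex p).2 < d (ofLex p).1,
      G p = f (ofLex p).1 ⟨(ofLex p).2, h⟩ ∧ U p = u (ofLex p).1 ⟨(ofLex p).2, h⟩ := by
    intro p hp
    by_cases h : (ofLex p).2 < d (ofLex p).1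
    · exact ⟨h, dif_pos h, dif_pos h⟩
    · exact absurd (dif_neg h) hp
  have hGs : ∀ p a, a ∈ (G p).support → G p ≠ 0 := by
    intro p a ha h
    rw [h] at ha; simp at ha
  have hlex : ∀ p r : ℕ ×ₗ ℕ, p < r → (ofLex p).1 < (ofLex r).1 ∨
      ((ofLex p).1 = (ofLex r).1 ∧ (ofLex p).2 < (ofLex r).2) := fun p r h => Prod.lex_def.1 h
  have hW := Wop ((isType_single (P := P) j).mul ht) FF G U (by
      intro p hp hne
      obtain ⟨h, h1, h2⟩ := hG p hne
      rw [h1, h2]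
      exact (hfu _ (hFF p hp)).1.wiw _) (by
      intro p hp r hr hpr b hb c hc
      obtain ⟨h, h1, -⟩ := hG p (hGs p b hb)
      obtain ⟨h', h1', -⟩ := hG r (hGs r c hc)
      rw [h1] at hb
      rw [h1'] at hc
      rcases hlex p r hpr with hlt | ⟨heq, hlt⟩
      · exact hE _ (hFF p hp) _ (hFF r hr) hlt b ((hfu _ (hFF p hp)).2.2.1 _ hb) c
          ((hfu _ (hFF r hr)).2.2.1 _ hc)
      · obtain ⟨p1, p2⟩ := p
        obtain ⟨r1, r2⟩ := r
        change p1 = r1 at heq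
        subst heq
        exact (hfu _ (hFF _ hp)).1.succ _ _ (Fin.mk_lt_mk.2 hlt) b hb c hc) (by
      intro p hp r hr hpr hne b hb
      obtain ⟨h, h1, -⟩ := hG p (hGs p b hb)
      obtain ⟨h', h1', h2'⟩ := hG r hne
      rw [h1] at hb
      rw [h2']
      rcases hlex p r hpr with hlt | ⟨heq, hlt⟩
      · obtain ⟨e, he, heu⟩ := (hfu _ (hFF r hr)).2.1 ⟨(ofLex r).2, h'⟩
        refine lt_trans ?_ heu
        exact_mod_cast hE _ (hFF p hp) _ (hFF r hr) hlt b ((hfu _ (hFF p hp)).2.2.1 _ hb) e he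
      · obtain ⟨p1, p2⟩ := p
        obtain ⟨r1, r2⟩ := r
        change p1 = r1 at heq
        subst heq
        exact (hfu _ (hFF _ hp)).1.vfg _ _ (Fin.mk_lt_mk.2 hlt) b hb) (by
      have h1 := SE_comp (a := P.n j) (b := τ.2) F s
        (fun i => Finset.univ.image fun q => minSupp (f i q)) hs (by
          intro i hi i' hi' h
          by_contra hne
          rcases lt_or_gt_of_ne hne with h' | h'
          · exact absurd (hsmono _ hi _ hi' h') (by omega)
          · exact absurd (hsmono _ hi' _ hi h') (by omega)) (fun i hi => (hfu i hi).1.adm) (by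
          intro i hi m hm
          obtain ⟨q, _, rfl⟩ := Finset.mem_image.1 hm
          exact hle i hi _ ((hfu i hi).2.2.1 q (minSupp_mem ((hfu i hi).1.ne q)))) (by
          intro i hi i' hi' hss m hm m' hm'
          obtain ⟨q, _, rfl⟩ := Finset.mem_image.1 hm
          obtain ⟨q', _, rfl⟩ := Finset.mem_image.1 hm'
          exact hE i hi i' hi' (hslt i hi i' hi' hss) _
            ((hfu i hi).2.2.1 q (minSupp_mem ((hfu i hi).1.ne q))) _
            ((hfu i' hi').2.2.1 q' (minSupp_mem ((hfu i' hi').1.ne q'))))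
      refine SE_subset h1 ?_
      intro m hm
      obtain ⟨p, hp, rfl⟩ := Finset.mem_image.1 hm
      obtain ⟨hp1, hp2⟩ := Finset.mem_filter.1 hp
      obtain ⟨h, h1, -⟩ := hG p hp2
      refine Finset.mem_biUnion.2 ⟨(ofLex p).1, hFF p hp1, ?_⟩
      rw [h1]
      exact Finset.mem_image_of_mem _ (Finset.mem_univ _))
  have hsum : ∑ p ∈ FF, G p = ∑ i ∈ F, (τ.1 : ℝ) • a i := by
    rw [Finset.sum_map, Finset.sum_product]
    refine Finset.sum_congr rfl fun i hi => ?_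
    rw [(hfu i hi).2.2.2, smul_smul, mul_inv_cancel₀ hpos.ne', one_smul]
    have hdD : d i ≤ D := Finset.le_sup hi
    rw [← Finset.sum_range_add_sum_Ico _ hdD]
    rw [Finset.sum_eq_zero (s := Finset.Ico (d i) D), add_zero, Finset.sum_range]
    · refine Finset.sum_congr rfl fun q _ => ?_
      exact dif_pos q.2
    · intro q hq
      exact dif_neg (by simpa using (Finset.mem_Ico.1 hq).1)
  rw [hsum] at hW
  have h2 := pr_le_norm ⟨_, hW⟩ x
  rw [map_smul, map_sum, LinearMap.smul_apply, LinearMap.sum_apply, smul_eq_mul] at h2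
  have h3 : ∑ i ∈ F, pr ((τ.1 : ℝ) • a i) x = τ.1 * ∑ i ∈ F, pr (a i) x := by
    rw [Finset.mul_sum]
    refine Finset.sum_congr rfl fun i _ => ?_
    rw [map_smul, LinearMap.smul_apply, smul_eq_mul]
  rw [h3] at h2
  push_cast at h2
  rw [mul_inv, mul_assoc, inv_mul_cancel_left₀ hpos.ne', inv_mul_le_iff₀ hmpos] at h2
  exact h2

/-- The same joint bound for functionals of large weight. -/
lemma sum_Hi_le {j : ℕ} (F : Finset ℕ) (E : ℕ → Finset ℕ) (s : ℕ → ℕ) (N : ℕ → ℕ)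
    (hs : F.image s ∈ SE (P.n j)) (hsE : ∀ i ∈ F, s i ∈ E i) (hle : ∀ i ∈ F, ∀ m ∈ E i, s i ≤ m)
    (hE : ∀ i ∈ F, ∀ i' ∈ F, i < i' → ∀ a ∈ E i, ∀ b ∈ E i', a < b)
    (hN : ∀ i ∈ F, ∀ i' ∈ F, i < i' → ∀ a ∈ E i, a ≤ N i') (x : c00) :
    ∑ i ∈ F, rho P (Hi P (E i) (N i)) x ≤ P.m j * iwNorm P x := by
  classical
  have hmpos : (0 : ℝ) < P.m j := by have := two_le_m (P := P) j; positivity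
  refine sum_rho_le F _ x fun g hg => ?_
  refine sum_abs_of_neg_closed F (fun i => {a | a ∈ Hi P (E i) (N i) ∨ a = 0}) (fun i a h => by
      rcases h with h | h
      · exact Or.inl (Hi_neg h)
      · right; rw [h, neg_zero]) x ?_ g (fun i hi => by
    rcases hg i hi with h | h
    · exact Or.inl h.1
    · exact Or.inr h)
  clear hg g
  intro a ha
  have ha' : ∀ i, ∃ w, i ∈ F → a i ≠ 0 → WIW P (a i) w ∧ (N i : ℕ∞) < w ∧ (a i).support ⊆ E i := by
    intro i
    by_cases hi : i ∈ F
    · rcases ha i hi with ⟨w, h⟩ | h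
      · exact ⟨w, fun _ _ => h⟩
      · exact ⟨0, fun _ h' => absurd h h'⟩
    · exact ⟨0, fun h => absurd h hi⟩
  choose w hw using ha'
  have hsub : ∀ i ∈ F, (a i).support ⊆ E i := by
    intro i hi
    by_cases h : a i = 0
    · rw [h]; simp
    · exact (hw i hi h).2.2
  have hsmono : ∀ i ∈ F, ∀ i' ∈ F, i < i' → s i < s i' := fun i hi i' hi' h =>
    hE i hi i' hi' h _ (hsE i hi) _ (hsE i' hi')
  have hslt : ∀ i ∈ F, ∀ i' ∈ F, s i < s i' → i < i' := by
    intro i hi i' hi' h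
    by_contra hc
    rcases (not_lt.1 hc).eq_or_lt with rfl | h'
    · exact lt_irrefl _ h
    · exact absurd (hsmono _ hi' _ hi h') (by omega)
  have hW := Wop (isType_single (P := P) j) F a w (fun i hi h => (hw i hi h).1)
    (fun i hi i' hi' h b hb c hc => hE i hi i' hi' h b (hsub i hi hb) c (hsub i' hi' hc))
    (fun i hi i' hi' h hne b hb => lt_of_le_of_lt
      (by exact_mod_cast hN i hi i' hi' h b (hsub i hi hb)) (hw i' hi' hne).2.1) (by
    have hm : ∀ i ∈ F.filter (fun i => a i ≠ 0), i ∈ F ∧ minSupp (a i) ∈ E i := by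
      intro i hi
      obtain ⟨h1, h2⟩ := Finset.mem_filter.1 hi
      exact ⟨h1, hsub i h1 (minSupp_mem (Finsupp.support_nonempty_iff.2 h2))⟩
    refine SE_spread (Finset.filter_subset _ _) hs ?_ ?_ ?_
    · intro i hi i' hi' h
      by_contra hne
      rcases lt_or_gt_of_ne hne with h' | h'
      · exact absurd (hsmono _ hi _ hi' h') (by omega)
      · exact absurd (hsmono _ hi' _ hi h') (by omega)
    · intro i hi
      exact hle i (hm i hi).1 _ (hm i hi).2
    · intro i hi i' hi' h
      exact hE i (hm i hi).1 i' (hm i' hi').1 (hslt i (hm i hi).1 i' (hm i' hi').1 h) _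
        (hm i hi).2 _ (hm i' hi').2)
  have h2 := pr_le_norm ⟨_, hW⟩ x
  rw [map_smul, map_sum, LinearMap.smul_apply, LinearMap.sum_apply, smul_eq_mul,
    inv_mul_le_iff₀ hmpos] at h2
  exact h2

end IWDual

namespace IWDual

variable {P : IWParams}

/-! ### Upper estimates for admissible sums in the dual -/

/-- A finite set containing every type of weight at most `N`. -/
def Low (P : IWParams) (N : ℕ) : Finset (ℕ × ℕ) :=
  Finset.Icc 1 N ×ˢ Finset.range (N * P.n N + 1)

lemma Low_mono {N M : ℕ} (h : N ≤ M) : Low P N ⊆ Low P M := by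
  refine Finset.product_subset_product (Finset.Icc_subset_Icc le_rfl h) ?_
  refine Finset.range_subset_range.2 ?_
  have := Nat.mul_le_mul h (P.n_mono.monotone h)
  omega

lemma lt_of_notMem_Low {N w n : ℕ} (h : IsType P w n) (hN : (w, n) ∉ Low P N) : N < w := by
  by_contra hc
  refine hN (Finset.mem_product.2 ⟨Finset.mem_Icc.2 ⟨?_, not_lt.1 hc⟩, Finset.mem_range.2 ?_⟩)
  · have := h.two_le; simp; omega
  · have := h.order_le (not_lt.1 hc)
    exact Nat.lt_succ_of_le this

/-- Splitting off the first component of a norming functional. -/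
lemma split_one {E : Finset ℕ} {g : c00} (hg : g ∈ WE P E) :
    ∃ (a b : c00) (τ : ℕ × ℕ), b ∈ convexHull ℝ (WE P E) ∧ g = a + (2 : ℝ)⁻¹ • b ∧
      ∀ (N : ℕ) (x : c00), (τ ∈ Low P N → |pr a x| ≤ rho P (Rest P E τ) x) ∧
        (τ ∉ Low P N → |pr a x| ≤ rho P (Hi P E N) x) := by
  obtain ⟨⟨w, hw⟩, hE⟩ := hg
  have h0 : (0 : c00) ∈ convexHull ℝ (WE P E) := subset_convexHull ℝ _ (zero_mem_WE E)
  have hnot : ∀ N, ((0, 0) : ℕ × ℕ) ∉ Low P N := by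
    intro N h
    have := (Finset.mem_Icc.1 (Finset.mem_product.1 h).1).1
    simp at this
  rcases WIW_elim hw with ⟨i, s, hs, rfl, rfl⟩ | ⟨w0, n, d, f, u, ht, hd, rfl, rfl⟩
  · refine ⟨_, 0, (0, 0), h0, by rw [smul_zero, add_zero], fun N x => ⟨fun h => absurd h (hnot N),
      fun _ => ?_⟩⟩
    exact le_rho (K := Hi P E N) ⟨⊤, hw, ENat.natCast_lt_top N, hE⟩ ⟨_, hw⟩ x
  rcases d with _ | d
  · refine ⟨0, 0, (0, 0), h0, by simp, fun N x => ⟨fun h => absurd h (hnot N), fun _ => ?_⟩⟩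
    simpa using rho_nonneg (P := P) _ x
  have hpos : (0 : ℝ) < w0 := by have := ht.two_le; positivity
  have hfE : ∀ q, (f q).support ⊆ E := by
    intro q a ha
    apply hE
    rw [Finsupp.mem_support_iff, Finsupp.smul_apply, Finsupp.finsetSum_apply,
      Finset.sum_eq_single_of_mem q (Finset.mem_univ q)]
    · exact smul_ne_zero (inv_ne_zero hpos.ne') (Finsupp.mem_support_iff.1 ha)
    · intro r _ hr
      simpa using hd.disj (Ne.symm hr) a ha
  refine ⟨(w0 : ℝ)⁻¹ • ∑ q : Fin d, f q.succ, (2 * (w0 : ℝ)⁻¹) • f 0, (w0, n), ?_, ?_, ?_⟩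
  · have h2 : (2 : ℝ) ≤ w0 := by exact_mod_cast ht.two_le
    have hf0 : f 0 ∈ convexHull ℝ (WE P E) := subset_convexHull ℝ _ ⟨⟨_, hd.wiw 0⟩, hfE 0⟩
    have := (convex_convexHull ℝ (WE P E)).smul_mem_of_zero_mem h0 hf0
      (t := 2 * (w0 : ℝ)⁻¹) ⟨by positivity, by rw [← div_eq_mul_inv, div_le_one hpos]; exact h2⟩
    exact this
  · rw [Fin.sum_univ_succ, smul_add, smul_smul, ← mul_assoc, inv_mul_cancel₀ two_ne_zero, one_mul,
      add_comm]
  · have hW := hd.tail.op ht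
    have hs : ((w0 : ℝ)⁻¹ • ∑ q : Fin d, f q.succ).support ⊆ E := by
      refine Finsupp.support_smul.trans (Finsupp.support_finsetSum.trans ?_)
      exact Finset.biUnion_subset.2 fun q _ => hfE _
    refine fun N x => ⟨fun _ => le_rho (K := Rest P E (w0, n))
        ⟨ht, d, _, _, hd.tail, ?_, fun q => hfE _, rfl⟩ ⟨_, hW⟩ x,
      fun h => le_rho (K := Hi P E N) ⟨_, hW, ?_, hs⟩ ⟨_, hW⟩ x⟩
    · intro q
      obtain ⟨e, he⟩ := hd.ne 0
      exact ⟨e, hfE 0 he, hd.vfg 0 q.succ (Fin.succ_pos q) e he⟩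
    · exact_mod_cast lt_of_notMem_Low ht h

/-- Splitting off the first components in a convex combination; `μ` is the distribution of the
types that occur. -/
lemma split_conv {E : Finset ℕ} {r : c00} (hr : r ∈ convexHull ℝ (WE P E)) :
    ∃ r' ∈ convexHull ℝ (WE P E), ∃ μ : ℕ × ℕ → ℝ, (∀ τ, 0 ≤ μ τ) ∧
      (∀ T : Finset (ℕ × ℕ), ∑ τ ∈ T, μ τ ≤ 1) ∧
      ∀ (N : ℕ) (x : c00), |pr r x| ≤ ∑ τ ∈ Low P N, μ τ * rho P (Rest P E τ) x
        + rho P (Hi P E N) x + 2⁻¹ * |pr r' x| := by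
  classical
  obtain ⟨ι, _, lam, g, hl0, hl1, hg, rfl⟩ := mem_convexHull_iff_exists_fintype.1 hr
  choose a b τ hb hab hN using fun i => split_one (hg i)
  have hsumT : ∀ (T : Finset (ℕ × ℕ)) (v : ℕ × ℕ → ℝ),
      ∑ t ∈ T, (∑ i, if τ i = t then lam i else 0) * v t =
      ∑ i, if τ i ∈ T then lam i * v (τ i) else 0 := by
    intro T v
    simp_rw [Finset.sum_mul, ite_mul, zero_mul]
    rw [Finset.sum_comm]
    refine Finset.sum_congr rfl fun i _ => ?_
    rw [Finset.sum_ite_eq]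
  refine ⟨∑ i, lam i • b i, (convex_convexHull ℝ _).sum_mem (fun i _ => hl0 i) hl1 fun i _ => hb i,
    fun t => ∑ i, if τ i = t then lam i else 0, ?_, ?_, ?_⟩
  · intro t
    refine Finset.sum_nonneg fun i _ => ?_
    split_ifs
    · exact hl0 i
    · exact le_rfl
  · intro T
    have := hsumT T (fun _ => 1)
    simp only [mul_one] at this
    rw [this, ← hl1]
    refine Finset.sum_le_sum fun i _ => ?_
    split_ifs
    · exact le_rfl
    · exact hl0 i
  · intro N x
    have h1 : pr (∑ i, lam i • g i) x = ∑ i, lam i * pr (a i) x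
        + 2⁻¹ * pr (∑ i, lam i • b i) x := by
      simp only [map_sum, map_smul, LinearMap.sum_apply, LinearMap.smul_apply, smul_eq_mul]
      rw [Finset.mul_sum, ← Finset.sum_add_distrib]
      refine Finset.sum_congr rfl fun i _ => ?_
      rw [hab i, map_add, map_smul, LinearMap.add_apply, LinearMap.smul_apply, smul_eq_mul]
      ring
    rw [h1]
    refine (abs_add_le _ _).trans ?_
    refine add_le_add ?_ (by rw [abs_mul, abs_of_pos (by norm_num)])
    rw [hsumT (Low P N) (fun t => rho P (Rest P E t) x)]
    calc |∑ i, lam i * pr (a i) x| ≤ ∑ i, lam i * |pr (a i) x| := by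
          refine (Finset.abs_sum_le_sum_abs _ _).trans (Finset.sum_le_sum fun i _ => ?_)
          rw [abs_mul, abs_of_nonneg (hl0 i)]
      _ ≤ ∑ i, ((if τ i ∈ Low P N then lam i * rho P (Rest P E (τ i)) x else 0) +
            lam i * rho P (Hi P E N) x) := by
          refine Finset.sum_le_sum fun i _ => ?_
          have h3 : 0 ≤ lam i * rho P (Hi P E N) x := mul_nonneg (hl0 i) (rho_nonneg _ _)
          split_ifs with h
          · have := mul_le_mul_of_nonneg_left ((hN i N x).1 h) (hl0 i)
            linarith
          · have := mul_le_mul_of_nonneg_left ((hN i N x).2 h) (hl0 i)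
            linarith
      _ = _ := by
          rw [Finset.sum_add_distrib, ← Finset.sum_mul, hl1, one_mul]

lemma conv_le_norm {E : Finset ℕ} {r : c00} (hr : r ∈ convexHull ℝ (WE P E)) (x : c00) :
    |pr r x| ≤ iwNorm P x := by
  obtain ⟨ι, _, lam, g, hl0, hl1, hg, rfl⟩ := mem_convexHull_iff_exists_fintype.1 hr
  simp only [map_sum, map_smul, LinearMap.sum_apply, LinearMap.smul_apply, smul_eq_mul]
  calc |∑ i, lam i * pr (g i) x| ≤ ∑ i, lam i * iwNorm P x := by
        refine (Finset.abs_sum_le_sum_abs _ _).trans (Finset.sum_le_sum fun i _ => ?_)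
        rw [abs_mul, abs_of_nonneg (hl0 i)]
        exact mul_le_mul_of_nonneg_left (abs_pr_le_norm (hg i).1 x) (hl0 i)
    _ = iwNorm P x := by rw [← Finset.sum_mul, hl1, one_mul]

/-- Iterating `split_conv`: a functional of dual norm at most one is dominated by a sequence of
sub-probability weights on types, with geometrically decreasing coefficients. -/
lemma exists_mu {z : c00} (hz : iwDualNorm P z ≤ 1) {δ : ℝ} (hδ : 0 < δ) :
    ∃ μ : ℕ → ℕ × ℕ → ℝ, (∀ t τ, 0 ≤ μ t τ) ∧ (∀ t (T : Finset (ℕ × ℕ)), ∑ τ ∈ T, μ t τ ≤ 1) ∧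
      ∀ (L N : ℕ) (x : c00), |pr z x| ≤ ∑ t ∈ Finset.range L, (2⁻¹ : ℝ) ^ t *
        (∑ τ ∈ Low P N, μ t τ * rho P (Rest P z.support τ) x + rho P (Hi P z.support N) x)
        + (2⁻¹ : ℝ) ^ L * iwNorm P x + δ * iwNorm P x := by
  obtain ⟨r, hr, hrz⟩ := exists_conv hz hδ
  have step : ∀ r : convexHull ℝ (WE P z.support), ∃ r' : convexHull ℝ (WE P z.support),
      ∃ μ : ℕ × ℕ → ℝ, (∀ τ, 0 ≤ μ τ) ∧ (∀ T : Finset (ℕ × ℕ), ∑ τ ∈ T, μ τ ≤ 1) ∧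
      ∀ (N : ℕ) (x : c00), |pr r.1 x| ≤ ∑ τ ∈ Low P N, μ τ * rho P (Rest P z.support τ) x
        + rho P (Hi P z.support N) x + 2⁻¹ * |pr r'.1 x| := by
    rintro ⟨r, hr⟩
    obtain ⟨r', hr', μ, h⟩ := split_conv hr
    exact ⟨⟨r', hr'⟩, μ, h⟩
  choose nxt mu h0 h1 h2 using step
  let R : ℕ → convexHull ℝ (WE P z.support) := fun t => nxt^[t] ⟨r, hr⟩
  refine ⟨fun t => mu (R t), fun t => h0 _, fun t => h1 _, fun L N x => ?_⟩
  have key : |pr r x| ≤ ∑ t ∈ Finset.range L, (2⁻¹ : ℝ) ^ t *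
        (∑ τ ∈ Low P N, mu (R t) τ * rho P (Rest P z.support τ) x + rho P (Hi P z.support N) x)
        + (2⁻¹ : ℝ) ^ L * |pr (R L).1 x| := by
    induction L with
    | zero => simp [R]
    | succ L ih =>
      refine ih.trans ?_
      rw [Finset.sum_range_succ, add_assoc]
      have h3 := h2 (R L) N x
      have h4 : nxt (R L) = R (L + 1) := (Function.iterate_succ_apply' nxt L _).symm
      rw [h4] at h3
      have h5 := mul_le_mul_of_nonneg_left h3 (show (0 : ℝ) ≤ (2⁻¹ : ℝ) ^ L by positivity)
      rw [pow_succ]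
      nlinarith
  have h6 := conv_le_norm (R L).2 x
  have h7 := mul_le_mul_of_nonneg_left h6 (show (0 : ℝ) ≤ (2⁻¹ : ℝ) ^ L by positivity)
  have h8 := hrz x
  have h9 : |pr z x| ≤ |pr z x - pr r x| + |pr r x| := by
    have := abs_add_le (pr z x - pr r x) (pr r x)
    rwa [sub_add_cancel] at this
  linarith

end IWDual

namespace IWDual

variable {P : IWParams}

/-- A bounded real sequence converges along the hyperfilter. -/
lemma exists_ulim {u : ℕ → ℝ} {a b : ℝ} (h : ∀ k, u k ∈ Set.Icc a b) :
    ∃ c ∈ Set.Icc a b, Tendsto u (hyperfilter ℕ : Filter ℕ) (𝓝 c) := by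
  obtain ⟨c, hc, hle⟩ := isCompact_Icc.ultrafilter_le_nhds (s := Set.Icc a b)
    ((hyperfilter ℕ).map u) (by
      rw [Filter.le_principal_iff]
      exact Filter.mem_map.2 (Filter.univ_mem' h))
  exact ⟨c, hc, hle⟩

lemma sum_half_le (F : Finset ℕ) : ∑ i ∈ F, (2⁻¹ : ℝ) ^ i ≤ 2 := by
  have h := summable_geometric_of_lt_one (r := (2⁻¹ : ℝ)) (by norm_num) (by norm_num)
  refine (h.sum_le_tsum F fun i _ => by positivity).trans ?_
  rw [tsum_geometric_of_lt_one (by norm_num) (by norm_num)]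
  norm_num

/-- Every block sequence in the dual ball has a subsequence whose `S_{n_j}`-admissible sums are
bounded, up to the factor `8`, by `m_j`. The subsequence stabilises the type distributions given
by `exists_mu`. -/
lemma exists_subseq_upper {y : ℕ → c00} (hne : ∀ k, (y k).support.Nonempty)
    (hb : ∀ k, Blocks (y k) (y (k + 1))) (hz : ∀ k, iwDualNorm P (y k) ≤ 1) :
    ∃ φ : ℕ → ℕ, StrictMono φ ∧ ∀ (j : ℕ) (F : Finset ℕ),
      F.image (fun i => minSupp (y (φ i))) ∈ SE (P.n j) → ∀ x,
      ∑ i ∈ F, |pr (y (φ i)) x| ≤ 8 * P.m j * iwNorm P x := by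
  classical
  have hp : ∀ k : ℕ, (0 : ℝ) < (2⁻¹ : ℝ) ^ k := fun k => by positivity
  choose μ h0 h1 h2 using fun k => exists_mu (hz k) (hp k)
  have hIcc : ∀ t τ k, μ k t τ ∈ Set.Icc (0 : ℝ) 1 := fun t τ k =>
    ⟨h0 k t τ, by simpa using h1 k t {τ}⟩
  choose M hM0 hM using fun t τ => exists_ulim (hIcc t τ)
  have hMsum : ∀ t (T : Finset (ℕ × ℕ)), ∑ τ ∈ T, M t τ ≤ 1 := by
    intro t T
    exact le_of_tendsto (tendsto_finsetSum T fun τ _ => hM t τ) (Eventually.of_forall fun k => h1 k t T)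
  have hpick : ∀ i N p, ∃ k > p, ∀ t ∈ Finset.range (i + 1), ∀ τ ∈ Low P N,
      μ k t τ ≤ M t τ + (2⁻¹ : ℝ) ^ i / ((Low P N).card + 1) := by
    intro i N p
    have e1 : ∀ᶠ k in (hyperfilter ℕ : Filter ℕ), k > p :=
      (Nat.hyperfilter_le_atTop) (eventually_gt_atTop p)
    have e2 : ∀ᶠ k in (hyperfilter ℕ : Filter ℕ), ∀ t ∈ Finset.range (i + 1), ∀ τ ∈ Low P N,
        μ k t τ ≤ M t τ + (2⁻¹ : ℝ) ^ i / ((Low P N).card + 1) := by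
      refine (Filter.eventually_all_finset _).2 fun t _ =>
        (Filter.eventually_all_finset _).2 fun τ _ => ?_
      exact (hM t τ).eventually (Iic_mem_nhds (lt_add_of_pos_right _ (by positivity)))
    exact (e1.and e2).exists
  choose pick hpk hpk2 using hpick
  let φ : ℕ → ℕ := fun i => Nat.rec (pick 0 0 0) (fun i p => pick (i + 1) (maxSupp (y p)) p) i
  let N : ℕ → ℕ := fun i => Nat.rec 0 (fun i _ => maxSupp (y (φ i))) i
  have hφs : ∀ i, φ (i + 1) = pick (i + 1) (maxSupp (y (φ i))) (φ i) := fun i => rfl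
  have hmono : StrictMono φ := strictMono_nat_of_lt_succ fun i => by
    rw [hφs]; exact hpk _ _ _
  have hφμ : ∀ i, ∀ t ∈ Finset.range (i + 1), ∀ τ ∈ Low P (N i),
      μ (φ i) t τ ≤ M t τ + (2⁻¹ : ℝ) ^ i / ((Low P (N i)).card + 1) := by
    intro i
    cases i with
    | zero => exact hpk2 0 0 0
    | succ i => exact hpk2 (i + 1) _ _
  have hNle : ∀ i i', i < i' → ∀ a ∈ (y (φ i)).support, a ≤ N i' := by
    intro i i' hi a ha
    cases i' with
    | zero => omega
    | succ i' =>
      change a ≤ maxSupp (y (φ i'))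
      rcases Nat.lt_succ_iff_lt_or_eq.1 hi with h | rfl
      · have := Blocks.lt (blocks_of_lt hne hb (hmono h)) ha (maxSupp_mem (hne _))
        exact this.le
      · exact le_maxSupp ha
  have hone : ∀ i x, |pr (y (φ i)) x| ≤
      ∑ t ∈ Finset.range (i + 1), (2⁻¹ : ℝ) ^ t * ∑ τ ∈ Low P (N i),
        M t τ * rho P (Rest P (y (φ i)).support τ) x
      + 2 * rho P (Hi P (y (φ i)).support (N i)) x + 4 * (2⁻¹ : ℝ) ^ i * iwNorm P x := by
    intro i x
    have hX := norm_nonneg' (P := P) x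
    set Hh := rho P (Hi P (y (φ i)).support (N i)) x
    have hH0 : 0 ≤ Hh := rho_nonneg _ _
    refine (h2 (φ i) (i + 1) (N i) x).trans ?_
    have hin : ∀ t ∈ Finset.range (i + 1), (2⁻¹ : ℝ) ^ t *
        (∑ τ ∈ Low P (N i), μ (φ i) t τ * rho P (Rest P (y (φ i)).support τ) x + Hh) ≤
        (2⁻¹ : ℝ) ^ t * (∑ τ ∈ Low P (N i), M t τ * rho P (Rest P (y (φ i)).support τ) x)
          + (2⁻¹ : ℝ) ^ t * ((2⁻¹ : ℝ) ^ i * iwNorm P x + Hh) := by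
      intro t ht
      rw [← mul_add]
      refine mul_le_mul_of_nonneg_left ?_ (hp t).le
      rw [← add_assoc]
      refine add_le_add ?_ le_rfl
      calc _ ≤ ∑ τ ∈ Low P (N i), (M t τ * rho P (Rest P (y (φ i)).support τ) x
              + (2⁻¹ : ℝ) ^ i / ((Low P (N i)).card + 1) * iwNorm P x) := by
            refine Finset.sum_le_sum fun τ hτ => ?_
            have a1 := hφμ i t ht τ hτ
            have a2 := rho_nonneg (P := P) (Rest P (y (φ i)).support τ) x
            have a3 := rho_le_norm (P := P) (Rest P (y (φ i)).support τ) x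
            have a4 : 0 ≤ (2⁻¹ : ℝ) ^ i / ((Low P (N i)).card + 1) := by positivity
            nlinarith [mul_le_mul_of_nonneg_right a1 a2, mul_le_mul_of_nonneg_left a3 a4]
        _ ≤ _ := by
            rw [Finset.sum_add_distrib, Finset.sum_const, nsmul_eq_mul]
            refine add_le_add le_rfl ?_
            rw [← mul_assoc]
            refine mul_le_mul_of_nonneg_right ?_ hX
            rw [← mul_div_assoc, div_le_iff₀ (by positivity)]
            nlinarith [hp i]
    have hsum := Finset.sum_le_sum hin
    rw [Finset.sum_add_distrib, ← Finset.sum_mul] at hsum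
    have h3 := mul_le_mul_of_nonneg_right (sum_half_le (Finset.range (i + 1)))
      (show 0 ≤ (2⁻¹ : ℝ) ^ i * iwNorm P x + Hh by have := hp i; positivity)
    have h4 : (2⁻¹ : ℝ) ^ (φ i) * iwNorm P x ≤ (2⁻¹ : ℝ) ^ i * iwNorm P x :=
      mul_le_mul_of_nonneg_right (pow_le_pow_of_le_one (by norm_num) (by norm_num)
        (hmono.le_apply)) hX
    have h5 : (2⁻¹ : ℝ) ^ (i + 1) * iwNorm P x ≤ (2⁻¹ : ℝ) ^ i * iwNorm P x :=
      mul_le_mul_of_nonneg_right (pow_le_pow_of_le_one (by norm_num) (by norm_num)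
        (Nat.le_succ i)) hX
    nlinarith
  refine ⟨φ, hmono, fun j F hF x => ?_⟩
  have hX := norm_nonneg' (P := P) x
  have hm2 : (2 : ℝ) ≤ P.m j := by exact_mod_cast two_le_m (P := P) j
  have hsE : ∀ i ∈ F, minSupp (y (φ i)) ∈ (y (φ i)).support := fun i _ => minSupp_mem (hne _)
  have hle : ∀ i ∈ F, ∀ m ∈ (y (φ i)).support, minSupp (y (φ i)) ≤ m := fun i _ m hm =>
    minSupp_le hm
  have hE : ∀ i ∈ F, ∀ i' ∈ F, i < i' → ∀ a ∈ (y (φ i)).support, ∀ b ∈ (y (φ i')).support,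
      a < b := fun i _ i' _ h a ha b hb' => Blocks.lt (blocks_of_lt hne hb (hmono h)) ha hb'
  have hHi := sum_Hi_le (P := P) F (fun i => (y (φ i)).support) _ N hF hsE hle hE
    (fun i _ i' _ h => hNle i i' h) x
  have hRe := fun τ => sum_Rest_le (P := P) F (fun i => (y (φ i)).support) _ hF hsE hle hE τ x
  have hmain : ∑ i ∈ F, ∑ t ∈ Finset.range (i + 1), (2⁻¹ : ℝ) ^ t * ∑ τ ∈ Low P (N i),
        M t τ * rho P (Rest P (y (φ i)).support τ) x ≤ 2 * (P.m j * iwNorm P x) := by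
    have hnn : ∀ i t τ, 0 ≤ M t τ * rho P (Rest P (y (φ i)).support τ) x := fun i t τ =>
      mul_nonneg (hM0 t τ).1 (rho_nonneg _ _)
    calc _ ≤ ∑ i ∈ F, ∑ t ∈ Finset.range (F.sup id + 1), (2⁻¹ : ℝ) ^ t *
          ∑ τ ∈ Low P (F.sup N), M t τ * rho P (Rest P (y (φ i)).support τ) x := by
          refine Finset.sum_le_sum fun i hi => ?_
          refine (Finset.sum_le_sum fun t _ => mul_le_mul_of_nonneg_left
            (Finset.sum_le_sum_of_subset_of_nonneg (Low_mono (Finset.le_sup hi))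
              fun τ _ _ => hnn i t τ) (hp t).le).trans ?_
          refine Finset.sum_le_sum_of_subset_of_nonneg ?_ fun t _ _ =>
            mul_nonneg (hp t).le (Finset.sum_nonneg fun τ _ => hnn i t τ)
          exact Finset.range_subset_range.2 (Nat.succ_le_succ (Finset.le_sup (f := id) hi))
      _ = ∑ t ∈ Finset.range (F.sup id + 1), (2⁻¹ : ℝ) ^ t * ∑ τ ∈ Low P (F.sup N),
            M t τ * ∑ i ∈ F, rho P (Rest P (y (φ i)).support τ) x := by
          rw [Finset.sum_comm]
          refine Finset.sum_congr rfl fun t _ => ?_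
          rw [← Finset.mul_sum, Finset.sum_comm]
          simp_rw [← Finset.mul_sum]
      _ ≤ ∑ t ∈ Finset.range (F.sup id + 1), (2⁻¹ : ℝ) ^ t * (P.m j * iwNorm P x) := by
          refine Finset.sum_le_sum fun t _ => mul_le_mul_of_nonneg_left ?_ (hp t).le
          refine (Finset.sum_le_sum fun τ _ => mul_le_mul_of_nonneg_left (hRe τ)
            (hM0 t τ).1).trans ?_
          rw [← Finset.sum_mul]
          exact mul_le_of_le_one_left (by positivity) (hMsum t _)
      _ ≤ _ := by
          rw [← Finset.sum_mul]
          exact mul_le_mul_of_nonneg_right (sum_half_le _) (by positivity)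
  refine (Finset.sum_le_sum fun i _ => hone i x).trans ?_
  rw [Finset.sum_add_distrib, Finset.sum_add_distrib, ← Finset.mul_sum, ← Finset.sum_mul,
    ← Finset.mul_sum]
  have h6 := mul_le_mul_of_nonneg_right (sum_half_le F) hX
  nlinarith

end IWDual

namespace IWDual

variable {P : IWParams}

/-! ### Admissible sums of norm nearly one -/

/-- Recursive construction of a sequence, where each term may depend on the size of the previous
one. -/
lemma exists_rec {α : Type*} (Q : ℕ → ℕ → α → Prop) (sz : α → ℕ) (h : ∀ p b, ∃ a, Q p b a) :
    ∃ s : ℕ → α, Q 0 0 (s 0) ∧ ∀ p, Q (p + 1) (sz (s p)) (s (p + 1)) := by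
  choose g hg using h
  let s : ℕ → α := fun p => Nat.rec (g 0 0) (fun p a => g (p + 1) (sz a)) p
  exact ⟨s, hg 0 0, fun p => hg _ _⟩

lemma supp_sum_blocks {h : ℕ → c00} (hne : ∀ k, (h k).support.Nonempty)
    (hb : ∀ k, Blocks (h k) (h (k + 1))) (F : Finset ℕ) (c : ℕ → ℝ) (hc : ∀ k ∈ F, c k ≠ 0) :
    (∑ k ∈ F, c k • h k).support = F.biUnion fun k => (h k).support := by
  classical
  ext a
  rw [Finset.mem_biUnion]
  constructor
  · intro ha
    obtain ⟨k, hk, h'⟩ := Finset.mem_biUnion.1 (Finsupp.support_finsetSum ha)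
    exact ⟨k, hk, Finsupp.support_smul h'⟩
  · rintro ⟨k, hk, ha⟩
    rw [Finsupp.mem_support_iff, Finsupp.finsetSum_apply, Finset.sum_eq_single_of_mem k hk]
    · exact smul_ne_zero (hc k hk) (Finsupp.mem_support_iff.1 ha)
    · intro r _ hr
      have : a ∉ (h r).support := by
        intro har
        rcases lt_or_gt_of_ne hr with hlt | hlt
        · exact lt_irrefl _ (Blocks.lt (blocks_of_lt hne hb hlt) har ha)
        · exact lt_irrefl _ (Blocks.lt (blocks_of_lt hne hb hlt) ha har)
      rw [Finsupp.smul_apply, Finsupp.notMem_support_iff.1 this, smul_zero]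

lemma minSupp_strictMono {h : ℕ → c00} (hne : ∀ k, (h k).support.Nonempty)
    (hb : ∀ k, Blocks (h k) (h (k + 1))) : StrictMono fun k => minSupp (h k) :=
  fun _ _ hkl => Blocks.lt (blocks_of_lt hne hb hkl) (minSupp_mem (hne _)) (minSupp_mem (hne _))

/-- A special convex combination over intervals `[s q, t q]`, `q ∈ F`: the left end points are
`S_n`-admissible, and the coefficients `c` have small sum over every subset of `F` whose right end
points are `S_{n-1}`-admissible. -/
def SpecialComb (n : ℕ) (ε : ℝ) (s t : ℕ → ℕ) (F : Finset ℕ) (c : ℕ → ℝ) : Prop :=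
  F.Nonempty ∧ F.image s ∈ SE n ∧ (∀ q, 0 ≤ c q) ∧ ∑ q ∈ F, c q = 1 ∧
    ∀ G ⊆ F, G.image t ∈ SE (n - 1) → ∑ q ∈ G, c q ≤ ε

/-- Since `C^{n_j} / m_j → ∞`, the powers of `1 + ε` obtained by iterating `S_n` within `S_{n_j}`
beat the weights `m_j`. -/
lemma exists_growth {n : ℕ} (hn : 1 ≤ n) {ε : ℝ} (hε : 0 < ε) (K : ℝ) :
    ∃ j l : ℕ, n * l ≤ P.n j ∧ K * P.m j < (1 + ε) ^ l := by
  set C : ℝ := (1 + ε) ^ ((n : ℝ)⁻¹) with hC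
  have hn0 : (0 : ℝ) < n := by exact_mod_cast hn
  have hC1 : 1 < C := Real.one_lt_rpow (by linarith) (by positivity)
  have hCn : C ^ n = 1 + ε := Real.rpow_inv_natCast_pow (by linarith) (by omega)
  obtain ⟨j, hj⟩ := ((P.growth_exp C hC1).eventually (eventually_gt_atTop (K * (1 + ε)))).exists
  have hm : (0 : ℝ) < P.m j := by have := two_le_m (P := P) j; positivity
  refine ⟨j, P.n j / n, Nat.mul_div_le _ _, ?_⟩
  rw [lt_div_iff₀ hm] at hj
  have h1 : C ^ (P.n j) ≤ (1 + ε) ^ (P.n j / n) * (1 + ε) := by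
    rw [← pow_succ, ← hCn, ← pow_mul]
    refine pow_le_pow_right₀ hC1.le ?_
    have := Nat.div_add_mod (P.n j) n
    have := Nat.mod_lt (P.n j) hn
    nlinarith
  have h2 : K * P.m j * (1 + ε) < (1 + ε) ^ (P.n j / n) * (1 + ε) := by linarith
  exact lt_of_mul_lt_mul_right h2 (by linarith)

/-- Every block subspace of the dual contains a normalized block sequence with a special family
whose plain sum has norm nearly one. Otherwise iterated sums would grow like `(1 + ε)^l`, which
the upper estimate of `exists_subseq_upper` forbids. -/
lemma exists_almost_isometric {y : ℕ → c00} (hy : IsNormBlockSeq (iwDualNorm P) y) {n : ℕ}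
    (hn : 1 ≤ n) {ε ε' : ℝ} (hε : 0 < ε) (hε' : 0 < ε') (b : ℕ) :
    ∃ h : ℕ → c00, IsNormBlockSeq (iwDualNorm P) h ∧
      (∀ k, h k ∈ Submodule.span ℝ (Set.range y)) ∧ (∀ k, b < minSupp (h k)) ∧
      ∃ F c, SpecialComb n ε' (fun k => minSupp (h k)) (fun k => maxSupp (h k)) F c ∧
        iwDualNorm P (∑ k ∈ F, h k) ≤ 1 + ε := by
  classical
  by_contra hcon
  push Not at hcon
  obtain ⟨hne, hb, h1⟩ := hy
  have hne1 : ∀ k, (y (k + b + 1)).support.Nonempty := fun k => hne _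
  have hb1 : ∀ k, Blocks (y (k + b + 1)) (y (k + 1 + b + 1)) := fun k =>
    blocks_of_lt hne hb (by omega)
  obtain ⟨φ, hφ, hup⟩ := exists_subseq_upper (P := P) hne1 hb1 (fun k => (h1 _).le)
  set y' : ℕ → c00 := fun i => y (φ i + b + 1) with hy'
  have hyne : ∀ k, (y' k).support.Nonempty := fun k => hne _
  have hyb : ∀ k, Blocks (y' k) (y' (k + 1)) := fun k => blocks_of_lt hne hb (by
    have := hφ (Nat.lt_add_one k); omega)
  have hymin : ∀ k, b < minSupp (y' k) := fun k => by
    have := le_minSupp_seq hne hb (φ k + b + 1)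
    change b < minSupp (y (φ k + b + 1)); omega
  have hymono := minSupp_strictMono hyne hyb
  obtain ⟨j, l, hjl, hgr⟩ := exists_growth (P := P) hn hε 8
  have hiter : ∀ l : ℕ, ∃ (h : ℕ → c00) (G : ℕ → Finset ℕ), IsNormBlockSeq (iwDualNorm P) h ∧
      (∀ k, h k ∈ Submodule.span ℝ (Set.range y)) ∧ (∀ k, b < minSupp (h k)) ∧
      (∀ i i', i < i' → ∀ m ∈ G i, ∀ m' ∈ G i', m < m') ∧
      (∀ i, (G i).image (fun m => minSupp (y' m)) ∈ SE (n * l)) ∧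
      (∀ i, ∀ m ∈ G i, minSupp (h i) ≤ minSupp (y' m)) ∧
      ∀ i x, |pr (h i) x| ≤ ((1 + ε) ^ l)⁻¹ * ∑ m ∈ G i, |pr (y' m) x| := by
    intro l
    induction l with
    | zero =>
      refine ⟨y', fun i => {i}, ⟨hyne, hyb, fun k => h1 _⟩,
        fun k => Submodule.subset_span ⟨_, rfl⟩, hymin, ?_, ?_, ?_, ?_⟩
      · simp
      · intro i
        simpa using SE_singleton _
      · simp
      · simp
    | succ l ih =>
      obtain ⟨h, G, hh, hspan, hmin, hG, hGadm, hGle, hbd⟩ := ih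
      have hhmono := minSupp_strictMono hh.1 hh.2.1
      have hscc : ∀ p q0 : ℕ, ∃ F : Finset ℕ, (∀ q ∈ F, q0 ≤ q) ∧ F.Nonempty ∧
          F.image (fun k => minSupp (h k)) ∈ SE n ∧ 1 + ε < iwDualNorm P (∑ k ∈ F, h k) := by
        intro _ q0
        obtain ⟨F, c, hF, hq, hs, hc0, hc1, hsm⟩ := exists_scc (s := fun k => minSupp (h k))
          (t := fun k => maxSupp (h k)) (fun q => minSupp_le_maxSupp (hh.1 q))
          (fun q => hh.2.1 q) hn hε' q0
        exact ⟨F, hq, hF, hs, hcon h hh hspan hmin F c ⟨hF, hs, hc0, hc1, hsm⟩⟩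
      obtain ⟨F, hF0, hFs⟩ := exists_rec _ (fun F : Finset ℕ => F.sup id + 1) hscc
      have hF : ∀ p, (F p).Nonempty ∧ (F p).image (fun k => minSupp (h k)) ∈ SE n ∧
          1 + ε < iwDualNorm P (∑ k ∈ F p, h k) := by
        intro p
        cases p with
        | zero => exact hF0.2
        | succ p => exact (hFs p).2
      have hFstep : ∀ p, ∀ q ∈ F p, ∀ q' ∈ F (p + 1), q < q' := fun p q hq q' hq' =>
        lt_of_lt_of_le (Nat.lt_succ_of_le (Finset.le_sup (f := id) hq)) ((hFs p).1 q' hq')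
      have hFlt : ∀ p p', p < p' → ∀ q ∈ F p, ∀ q' ∈ F p', q < q' := by
        intro p p' hpp
        induction p', hpp using Nat.le_induction with
        | base => exact hFstep p
        | succ r _ ih =>
          intro q hq q' hq'
          obtain ⟨e, he⟩ := (hF r).1
          exact (ih q hq e he).trans (hFstep r e he q' hq')
      set N : ℕ → ℝ := fun p => iwDualNorm P (∑ k ∈ F p, h k) with hN
      have hNpos : ∀ p, 0 < N p := fun p => by have := (hF p).2.2; linarith
      have hsupp : ∀ p, ((N p)⁻¹ • ∑ k ∈ F p, h k).support =
          (F p).biUnion fun k => (h k).support := by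
        intro p
        rw [Finset.smul_sum]
        exact supp_sum_blocks hh.1 hh.2.1 _ (fun _ => (N p)⁻¹) fun k _ => inv_ne_zero (hNpos p).ne'
      have hsne : ∀ p, ((N p)⁻¹ • ∑ k ∈ F p, h k).support.Nonempty := by
        intro p
        rw [hsupp p]
        obtain ⟨e, he⟩ := (hF p).1
        obtain ⟨a, ha⟩ := hh.1 e
        exact ⟨a, Finset.mem_biUnion.2 ⟨e, he, ha⟩⟩
      refine ⟨fun p => (N p)⁻¹ • ∑ k ∈ F p, h k, fun p => (F p).biUnion G, ⟨hsne, ?_, ?_⟩, ?_, ?_,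
        ?_, ?_, ?_, ?_⟩
      · intro p
        refine blocks_of (hsne _) (hsne _) fun a ha b hb => ?_
        rw [hsupp] at ha hb
        obtain ⟨k, hk, hak⟩ := Finset.mem_biUnion.1 ha
        obtain ⟨k', hk', hbk⟩ := Finset.mem_biUnion.1 hb
        exact Blocks.lt (blocks_of_lt hh.1 hh.2.1 (hFstep p k hk k' hk')) hak hbk
      · intro p
        rw [dual_smul, abs_of_pos (inv_pos.2 (hNpos p))]
        exact inv_mul_cancel₀ (hNpos p).ne'
      · intro p
        exact Submodule.smul_mem _ _ (Submodule.sum_mem _ fun k _ => hspan k)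
      · intro p
        have hm := minSupp_mem (hsne p)
        rw [hsupp] at hm
        obtain ⟨k, hk, hak⟩ := Finset.mem_biUnion.1 hm
        exact (hmin k).trans_le (minSupp_le hak)
      · intro p p' hpp m hm m' hm'
        obtain ⟨k, hk, hmk⟩ := Finset.mem_biUnion.1 hm
        obtain ⟨k', hk', hmk'⟩ := Finset.mem_biUnion.1 hm'
        exact hG k k' (hFlt p p' hpp k hk k' hk') m hmk m' hmk'
      · intro p
        rw [Finset.biUnion_image, Nat.mul_succ, Nat.add_comm]
        refine SE_comp (F p) (fun k => minSupp (h k)) _ (hF p).2.1 (hhmono.injective.injOn)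
          (fun k _ => hGadm k) ?_ ?_
        · intro k _ m hm
          obtain ⟨e, he, rfl⟩ := Finset.mem_image.1 hm
          exact hGle k e he
        · intro k _ k' _ hkk m hm m' hm'
          obtain ⟨e, he, rfl⟩ := Finset.mem_image.1 hm
          obtain ⟨e', he', rfl⟩ := Finset.mem_image.1 hm'
          exact hymono (hG k k' (hhmono.lt_iff_lt.1 hkk) e he e' he')
      · intro p m hm
        obtain ⟨k, hk, hmk⟩ := Finset.mem_biUnion.1 hm
        refine le_trans (minSupp_le ?_) (hGle k m hmk)
        rw [hsupp]
        exact Finset.mem_biUnion.2 ⟨k, hk, minSupp_mem (hh.1 k)⟩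
      · intro p x
        have hdis : Set.PairwiseDisjoint (F p : Set ℕ) G := by
          intro k _ k' _ hkk
          refine Finset.disjoint_left.2 fun m hm hm' => ?_
          rcases lt_or_gt_of_ne hkk with hlt | hlt
          · exact lt_irrefl _ (hG _ _ hlt m hm m hm')
          · exact lt_irrefl _ (hG _ _ hlt m hm' m hm)
        rw [Finset.sum_biUnion hdis]
        simp only [map_smul, map_sum, LinearMap.smul_apply, LinearMap.sum_apply, smul_eq_mul]
        rw [abs_mul, abs_of_pos (inv_pos.2 (hNpos p)), pow_succ, mul_inv_rev, mul_assoc]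
        have hS : |∑ k ∈ F p, pr (h k) x| ≤
            ((1 + ε) ^ l)⁻¹ * ∑ k ∈ F p, ∑ m ∈ G k, |pr (y' m) x| := by
          rw [Finset.mul_sum]
          exact (Finset.abs_sum_le_sum_abs _ _).trans (Finset.sum_le_sum fun k _ => hbd k x)
        refine mul_le_mul ?_ hS (abs_nonneg _) (by positivity)
        exact inv_anti₀ (by positivity) (hF p).2.2.le
  obtain ⟨h, G, hh, -, -, -, hadm, -, hbd⟩ := hiter l
  have hpos : (0 : ℝ) < (1 + ε) ^ l := by positivity
  have hfin : iwDualNorm P (h 0) ≤ ((1 + ε) ^ l)⁻¹ * (8 * P.m j) := by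
    refine dual_le (by positivity) fun x => (hbd 0 x).trans ?_
    rw [mul_assoc]
    refine mul_le_mul_of_nonneg_left (hup j (G 0) ?_ x) (by positivity)
    refine SE_mono hjl (hadm 0) ?_
    intro i hi
    obtain ⟨m, _, rfl⟩ := Finset.mem_image.1 hi
    exact Nat.one_le_iff_ne_zero.2 (Nat.ne_zero_of_lt (hymin m))
  rw [hh.2.2 0, ← div_eq_inv_mul, le_div_iff₀ hpos] at hfin
  linarith

end IWDual

namespace IWDual

variable {P : IWParams}

/-! ### Nearly normed pairs of prescribed complexity -/

/-- If distinct indices `k ∈ K` are assigned distinct components `f (ρ k)` meeting `x k`, then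
the upper endpoints of the blocks `x k` are as admissible as the family `f`. -/
lemma SE_of_sel {n d : ℕ} {f : Fin d → c00} {u : Fin d → ℕ∞} (hd : Dec P n f u)
    {x : ℕ → c00} {t : ℕ → ℕ} (K : Finset ℕ) (ρ : ℕ → Fin d)
    (hx : ∀ k ∈ K, ∀ k' ∈ K, k < k' → ∀ a ∈ (x k).support, ∀ b ∈ (x k').support, a < b)
    (ht : ∀ k ∈ K, ∀ a ∈ (x k).support, a ≤ t k) (htm : StrictMono t)
    (hinj : Set.InjOn ρ K) (hhit : ∀ k ∈ K, pr (f (ρ k)) (x k) ≠ 0) :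
    K.image t ∈ SE n := by
  classical
  have hs : K.image (fun k => minSupp (f (ρ k))) ∈ SE n := by
    refine SE_subset hd.adm ?_
    intro a ha
    obtain ⟨k, _, rfl⟩ := Finset.mem_image.1 ha
    exact Finset.mem_image_of_mem _ (Finset.mem_univ _)
  refine SE_spread subset_rfl hs ?_ ?_ ?_
  · intro k hk k' hk' h
    exact hinj hk hk' (hd.strictMono.injective h)
  · intro k hk
    obtain ⟨a, ha, ha'⟩ := exists_of_pr_ne (hhit k hk)
    exact (minSupp_le ha).trans (ht k hk a ha')
  · intro k hk k' hk' h
    refine htm ?_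
    have hlt : ρ k < ρ k' := hd.strictMono.lt_iff_lt.1 h
    by_contra hc
    rcases (not_lt.1 hc).lt_or_eq with h' | h'
    · obtain ⟨a, ha, ha'⟩ := exists_of_pr_ne (hhit k hk)
      obtain ⟨b, hb, hb'⟩ := exists_of_pr_ne (hhit k' hk')
      exact lt_asymm (hd.succ _ _ hlt a ha b hb) (hx k' hk' k hk h' b hb' a ha')
    · rw [h'] at hlt
      exact lt_irrefl _ hlt

/-- The blocks met by at least two components of an admissible family are themselves
admissible. -/
lemma SE_multi {n d : ℕ} {f : Fin d → c00} {u : Fin d → ℕ∞} (hd : Dec P n f u)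
    {x : ℕ → c00} {t : ℕ → ℕ} (K : Finset ℕ)
    (hx : ∀ k ∈ K, ∀ k' ∈ K, k < k' → ∀ a ∈ (x k).support, ∀ b ∈ (x k').support, a < b)
    (ht : ∀ k ∈ K, ∀ a ∈ (x k).support, a ≤ t k) (htm : StrictMono t)
    (hhit : ∀ k ∈ K, ∃ r r', r < r' ∧ pr (f r) (x k) ≠ 0 ∧ pr (f r') (x k) ≠ 0) :
    K.image t ∈ SE n := by
  classical
  rcases K.eq_empty_or_nonempty with rfl | ⟨k0, hk0⟩
  · simpa using SE_empty n
  have : Nonempty (Fin d) := ⟨(hhit k0 hk0).choose⟩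
  choose! r r' hrr h1 h2 using hhit
  refine SE_of_sel hd K r' hx ht htm ?_ h2
  have key : ∀ k ∈ K, ∀ k' ∈ K, k < k' → r' k ≠ r' k' := by
    intro k hk k' hk' hlt he
    obtain ⟨a, ha, ha'⟩ := exists_of_pr_ne (h2 k hk)
    obtain ⟨b, hb, hb'⟩ := exists_of_pr_ne (h1 k' hk')
    have hl : r k' < r' k := he ▸ hrr k' hk'
    exact lt_asymm (hd.succ _ _ hl b hb a ha) (hx k hk k' hk' hlt a ha' b hb')
  intro k hk k' hk' he
  rcases lt_trichotomy k k' with h | h | h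
  · exact absurd he (key k hk k' hk' h)
  · exact h
  · exact absurd he.symm (key k' hk' k hk h)

/-- A sum in which at most one term is nonzero. -/
lemma single_hit {d : ℕ} {f : Fin d → c00} (R : Finset (Fin d)) {v : c00} {B : ℝ} (hB0 : 0 ≤ B)
    (hB : ∀ r ∈ R, |pr (f r) v| ≤ B)
    (h : ∀ r ∈ R, ∀ r' ∈ R, r < r' → ¬ (pr (f r) v ≠ 0 ∧ pr (f r') v ≠ 0)) :
    |∑ r ∈ R, pr (f r) v| ≤ B := by
  by_cases hex : ∃ r ∈ R, pr (f r) v ≠ 0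
  · obtain ⟨r, hr, hne⟩ := hex
    rw [Finset.sum_eq_single_of_mem r hr]
    · exact hB r hr
    · intro r' hr' hn
      by_contra hc
      rcases lt_or_gt_of_ne hn with hlt | hlt
      · exact h r' hr' r hr hlt ⟨hc, hne⟩
      · exact h r hr r' hr' hlt ⟨hne, hc⟩
  · push Not at hex
    rw [Finset.sum_eq_zero hex, abs_zero]
    exact hB0

/-- Functionals of weight below `m_j` are small on `S_{n_j}` special combinations. -/
lemma low_weight_scc {j : ℕ} {ε : ℝ} {h x : ℕ → c00} {F : Finset ℕ} {c : ℕ → ℝ}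
    (hne : ∀ k, (h k).support.Nonempty) (hb : ∀ k, Blocks (h k) (h (k + 1)))
    (hpos : ∀ k, 0 < minSupp (h k))
    (hF : SpecialComb (P.n j) ε (fun k => minSupp (h k)) (fun k => maxSupp (h k)) F c)
    (hxs : ∀ k, (x k).support ⊆ (h k).support) (hx1 : ∀ k, iwNorm P (x k) ≤ 1)
    {g : c00} {w : ℕ} (hg : WIW P g w) (hw : w < P.m j) :
    |pr g (∑ k ∈ F, c k • x k)| ≤ (1 + w * ε) / w := by
  classical
  obtain ⟨-, -, hc0, hc1, hsm⟩ := hF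
  rcases WIW_elim hg with ⟨i, s, hs, -, h'⟩ | ⟨w0, n, d, f, u, ht, hd, rfl, h'⟩
  · exact absurd h' (ENat.natCast_ne_top w)
  obtain rfl : w = w0 := by exact_mod_cast h'
  have hwpos : (0 : ℝ) < w := by have := ht.two_le; positivity
  have hmax : StrictMono fun k => maxSupp (h k) := fun k k' hkk =>
    Blocks.lt (blocks_of_lt hne hb hkk) (maxSupp_mem (hne _)) (maxSupp_mem (hne _))
  have hS : ∀ v, pr ((w : ℝ)⁻¹ • ∑ q, f q) v = (w : ℝ)⁻¹ * ∑ q, pr (f q) v := by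
    intro v
    simp only [map_smul, map_sum, LinearMap.smul_apply, LinearMap.sum_apply, smul_eq_mul]
  set K := F.filter fun k => ∃ r r', r < r' ∧ pr (f r) (x k) ≠ 0 ∧ pr (f r') (x k) ≠ 0 with hK
  have hKs : ∑ k ∈ K, c k ≤ ε := by
    refine hsm K (Finset.filter_subset _ _) ?_
    refine SE_mono (n := n) ?_ (SE_multi hd (x := x) K ?_ ?_ hmax fun k hk =>
      (Finset.mem_filter.1 hk).2) ?_
    · have := ht.order_lt hw; omega
    · intro k _ k' _ hkk a ha b hb'
      exact Blocks.lt (blocks_of_lt hne hb hkk) (hxs k ha) (hxs k' hb')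
    · intro k _ a ha
      exact le_maxSupp (hxs k ha)
    · intro i hi
      obtain ⟨k, _, rfl⟩ := Finset.mem_image.1 hi
      exact (hpos k).trans_le (minSupp_le_maxSupp (hne k))
  have hmul : ∀ k, |∑ q, pr (f q) (x k)| ≤ w := by
    intro k
    have h1 := (abs_pr_le_norm ⟨_, hg⟩ (x k)).trans (hx1 k)
    rw [hS, abs_mul, abs_of_pos (inv_pos.2 hwpos), ← div_eq_inv_mul, div_le_one hwpos] at h1
    exact h1
  have hsin : ∀ k ∈ F, k ∉ K → |∑ q, pr (f q) (x k)| ≤ 1 := by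
    intro k hk hkK
    refine single_hit Finset.univ zero_le_one
      (fun r _ => (abs_pr_le_norm ⟨_, hd.wiw r⟩ _).trans (hx1 k)) ?_
    intro r _ r' _ hrr hh
    exact hkK (Finset.mem_filter.2 ⟨hk, r, r', hrr, hh⟩)
  have htot : |∑ k ∈ F, c k * ∑ q, pr (f q) (x k)| ≤ 1 + w * ε := by
    calc _ ≤ ∑ k ∈ F, (c k + if k ∈ K then w * c k else 0) := by
          refine (Finset.abs_sum_le_sum_abs _ _).trans (Finset.sum_le_sum fun k hk => ?_)
          rw [abs_mul, abs_of_nonneg (hc0 k)]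
          split_ifs with hkK
          · have := mul_le_mul_of_nonneg_left (hmul k) (hc0 k)
            linarith [hc0 k]
          · have := mul_le_mul_of_nonneg_left (hsin k hk hkK) (hc0 k)
            linarith [hc0 k]
      _ = 1 + w * ∑ k ∈ K, c k := by
          rw [Finset.sum_add_distrib, hc1, Finset.sum_ite_mem,
            Finset.inter_eq_right.2 (Finset.filter_subset _ _), Finset.mul_sum]
      _ ≤ _ := by
          have := mul_le_mul_of_nonneg_left hKs hwpos.le
          linarith
  have hexp : pr ((w : ℝ)⁻¹ • ∑ q, f q) (∑ k ∈ F, c k • x k) =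
      (w : ℝ)⁻¹ * ∑ k ∈ F, c k * ∑ q, pr (f q) (x k) := by
    rw [map_sum, Finset.mul_sum]
    refine Finset.sum_congr rfl fun k _ => ?_
    rw [map_smul, hS, smul_eq_mul]
    ring
  rw [hexp, abs_mul, abs_of_pos (inv_pos.2 hwpos), ← div_eq_inv_mul]
  exact div_le_div_of_nonneg_right htot hwpos.le

/-- In every block subspace of the dual there are functionals `z` in the unit ball, almost normed
by a vector `x` of the unit ball supported in `supp z`, on which functionals of weight below `m_j`
are small; consequently `z` is, up to `η`, dominated by functionals of weight at least `m_j`. -/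
lemma exists_exact {y : ℕ → c00} (hy : IsNormBlockSeq (iwDualNorm P) y) (j : ℕ) {η : ℝ}
    (hη : 0 < η) (hη1 : η ≤ 1) (b : ℕ) :
    ∃ z x : c00, z ∈ Submodule.span ℝ (Set.range y) ∧ z.support.Nonempty ∧
      x.support ⊆ z.support ∧ (∀ a ∈ z.support, b < a) ∧ iwDualNorm P z ≤ 1 ∧ iwNorm P x ≤ 1 ∧
      1 - η ≤ pr z x ∧ (∀ i, |x i| ≤ η) ∧
      (∀ (g : c00) (w : ℕ), WIW P g w → w < P.m j → |pr g x| ≤ 2 / w) ∧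
      ∀ x', |pr z x'| ≤ η * iwNorm P x' + rho P (Hi P z.support (P.m j - 1)) x' := by
  classical
  set ε := η / 9 with hεdef
  have hε : 0 < ε := by positivity
  have hε9 : ε ≤ 1 / 9 := by rw [hεdef]; linarith
  have hm2 : (2 : ℝ) ≤ P.m j := by exact_mod_cast two_le_m (P := P) j
  obtain ⟨h, hh, hspan, hmin, F, c, hF, hFn⟩ := exists_almost_isometric hy
    (one_le_n (P := P) j) hε (show 0 < ε / P.m j by positivity) b
  have hpos : ∀ k, 0 < minSupp (h k) := fun k => (Nat.zero_le b).trans_lt (hmin k)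
  choose v hv1 hvs hvh using fun k => exists_norming (P := P) (f := h k) (b := 1 - ε)
    (by rw [hh.2.2 k]; linarith)
  obtain ⟨hFne, hFadm, hc0, hc1, hsm⟩ := id hF
  have hlow := fun (g : c00) (w : ℕ) (hg : WIW P g w) (hw : w < P.m j) =>
    low_weight_scc hh.1 hh.2.1 hpos hF hvs hv1 hg hw
  set x := ∑ k ∈ F, c k • v k with hx
  set z := (1 + ε)⁻¹ • ∑ k ∈ F, h k with hz
  have h1ε : (0 : ℝ) < 1 + ε := by linarith
  have hzs : z.support = F.biUnion fun k => (h k).support := by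
    rw [hz, Finset.smul_sum]
    exact supp_sum_blocks hh.1 hh.2.1 F (fun _ => (1 + ε)⁻¹) fun _ _ => inv_ne_zero h1ε.ne'
  have hzn : iwDualNorm P z ≤ 1 := by
    rw [hz, dual_smul, abs_of_pos (inv_pos.2 h1ε), ← div_eq_inv_mul, div_le_one h1ε]
    exact hFn
  have hxn : iwNorm P x ≤ 1 := by
    rw [hx]
    refine (norm_sum_le _ _).trans ?_
    rw [← hc1]
    refine Finset.sum_le_sum fun k _ => ?_
    rw [norm_smul', abs_of_nonneg (hc0 k)]
    exact mul_le_of_le_one_right (hc0 k) (hv1 k)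
  have hdisj : ∀ k k', k ≠ k' → ∀ a ∈ (h k).support, a ∉ (h k').support := by
    intro k k' hkk a ha ha'
    rcases lt_or_gt_of_ne hkk with hlt | hlt
    · exact lt_irrefl _ (Blocks.lt (blocks_of_lt hh.1 hh.2.1 hlt) ha ha')
    · exact lt_irrefl _ (Blocks.lt (blocks_of_lt hh.1 hh.2.1 hlt) ha' ha)
  have hzx : 1 - 2 * ε ≤ pr z x := by
    have e1 : pr z x = (1 + ε)⁻¹ * ∑ k ∈ F, c k * pr (h k) (v k) := by
      rw [hz, hx, map_smul, LinearMap.smul_apply, smul_eq_mul, map_sum]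
      congr 1
      refine Finset.sum_congr rfl fun k hk => ?_
      rw [map_smul, smul_eq_mul, map_sum, LinearMap.sum_apply, Finset.sum_eq_single_of_mem k hk]
      intro k' _ hkk
      by_contra hc
      obtain ⟨a, ha, ha'⟩ := exists_of_pr_ne hc
      exact hdisj k' k hkk a ha (hvs k ha')
    have e2 : 1 - ε ≤ ∑ k ∈ F, c k * pr (h k) (v k) := by
      calc 1 - ε = ∑ k ∈ F, c k * (1 - ε) := by rw [← Finset.sum_mul, hc1, one_mul]
        _ ≤ _ := Finset.sum_le_sum fun k _ => mul_le_mul_of_nonneg_left (hvh k).le (hc0 k)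
    rw [e1, ← div_eq_inv_mul, le_div_iff₀ h1ε]
    nlinarith
  have hlow' : ∀ (g : c00) (w : ℕ), WIW P g w → w < P.m j → |pr g x| ≤ (1 + ε) / w := by
    intro g w hg hw
    have hwp : (0 : ℝ) < w := by
      rcases WIW_elim hg with ⟨i, s, hs, -, h'⟩ | ⟨w0, n, d, f, u, ht, hd, -, h'⟩
      · exact absurd h' (ENat.natCast_ne_top w)
      · obtain rfl : w = w0 := by exact_mod_cast h'
        have := ht.two_le; positivity
    refine (hlow g w hg hw).trans (div_le_div_of_nonneg_right ?_ hwp.le)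
    have hw' : (w : ℝ) ≤ P.m j := by exact_mod_cast hw.le
    have : (w : ℝ) * (ε / P.m j) ≤ ε := by
      rw [← mul_div_assoc, div_le_iff₀ (by linarith)]
      nlinarith
    linarith
  refine ⟨z, x, Submodule.smul_mem _ _ (Submodule.sum_mem _ fun k _ => hspan k), ?_, ?_, ?_, hzn,
    hxn, by linarith, ?_, ?_, ?_⟩
  · rw [hzs]
    obtain ⟨k, hk⟩ := hFne
    obtain ⟨a, ha⟩ := hh.1 k
    exact ⟨a, Finset.mem_biUnion.2 ⟨k, hk, ha⟩⟩
  · rw [hzs, hx]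
    refine Finsupp.support_finsetSum.trans (Finset.biUnion_subset.2 fun k hk => ?_)
    exact (Finsupp.support_smul.trans (hvs k)).trans
      (Finset.subset_biUnion_of_mem (fun k => (h k).support) hk)
  · intro a ha
    rw [hzs] at ha
    obtain ⟨k, _, hk⟩ := Finset.mem_biUnion.1 ha
    exact (hmin k).trans_le (minSupp_le hk)
  · intro i
    have hck : ∀ k ∈ F, c k ≤ η := by
      intro k hk
      have h1 := hsm {k} (Finset.singleton_subset_iff.2 hk) (by
        rw [Finset.image_singleton]
        refine SE_mono (Nat.zero_le _) (SE_singleton _) ?_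
        intro a ha
        rw [Finset.mem_singleton] at ha
        rw [ha]
        exact (hpos k).trans_le (minSupp_le_maxSupp (hh.1 k)))
      rw [Finset.sum_singleton] at h1
      have : ε / P.m j ≤ ε := div_le_self hε.le (by linarith)
      linarith
    by_cases hex : ∃ k ∈ F, i ∈ (h k).support
    · obtain ⟨k, hk, hik⟩ := hex
      rw [hx, Finsupp.finsetSum_apply, Finset.sum_eq_single_of_mem k hk]
      · rw [Finsupp.smul_apply, smul_eq_mul, abs_mul, abs_of_nonneg (hc0 k)]
        have h1 := (coord_le_norm (P := P) (v k) i).trans (hv1 k)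
        nlinarith [hc0 k, hck k hk]
      · intro k' _ hkk
        have : i ∉ (v k').support := fun hi => hdisj k k' hkk.symm i hik (hvs k' hi)
        rw [Finsupp.smul_apply, Finsupp.notMem_support_iff.1 this, smul_zero]
    · push Not at hex
      rw [hx, Finsupp.finsetSum_apply, Finset.sum_eq_zero]
      · simpa using hη.le
      · intro k hk
        have : i ∉ (v k).support := fun hi => hex k hk (hvs k hi)
        rw [Finsupp.smul_apply, Finsupp.notMem_support_iff.1 this, smul_zero]
  · intro g w hg hw
    refine (hlow' g w hg hw).trans (div_le_div_of_nonneg_right (by linarith) (by positivity))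
  · intro x'
    obtain ⟨r, hr, hzr⟩ := exists_conv hzn hε
    obtain ⟨ι, _, lam, g, hl0, hl1, hg, rfl⟩ := mem_convexHull_iff_exists_fintype.1 hr
    have hpr : ∀ u, pr (∑ i, lam i • g i) u = ∑ i, lam i * pr (g i) u := by
      intro u
      simp only [map_sum, map_smul, LinearMap.sum_apply, LinearMap.smul_apply, smul_eq_mul]
    -- the indices carrying a functional of weight below `m_j`
    set Lw : Finset ι := Finset.univ.filter fun i => ∃ w : ℕ, WIW P (g i) w ∧ w < P.m j with hLw
    have hlam : ∑ i ∈ Lw, lam i ≤ 8 * ε := by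
      have e1 : pr (∑ i, lam i • g i) x ≤ ∑ i, (lam i - if i ∈ Lw then (1 - ε) / 2 * lam i else 0) := by
        rw [hpr]
        refine Finset.sum_le_sum fun i _ => ?_
        have a1 := (le_abs_self _).trans ((abs_pr_le_norm (hg i).1 x).trans hxn)
        split_ifs with hi
        · obtain ⟨w, hw, hwj⟩ := (Finset.mem_filter.1 hi).2
          have a2 := (le_abs_self _).trans (hlow' (g i) w hw hwj)
          have a3 : (2 : ℝ) ≤ w := by exact_mod_cast WIW_two_le hw
          have a4 : (1 + ε) / w ≤ (1 + ε) / 2 := div_le_div_of_nonneg_left h1ε.le (by norm_num) a3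
          nlinarith [mul_le_mul_of_nonneg_left (a2.trans a4) (hl0 i)]
        · nlinarith [mul_le_mul_of_nonneg_left a1 (hl0 i)]
      rw [Finset.sum_sub_distrib, hl1, Finset.sum_ite_mem, Finset.univ_inter,
        ← Finset.mul_sum] at e1
      have e2 := hzr x
      have e3 := (abs_le.1 e2).2
      have e4 : ε * iwNorm P x ≤ ε := mul_le_of_le_one_right hε.le hxn
      have e5 : 0 ≤ ∑ i ∈ Lw, lam i := Finset.sum_nonneg fun i _ => hl0 i
      nlinarith
    have hX := norm_nonneg' (P := P) x'
    have hR := rho_nonneg (P := P) (Hi P z.support (P.m j - 1)) x'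
    have e6 : |pr (∑ i, lam i • g i) x'| ≤ 8 * ε * iwNorm P x' +
        rho P (Hi P z.support (P.m j - 1)) x' := by
      rw [hpr]
      calc _ ≤ ∑ i, ((if i ∈ Lw then lam i * iwNorm P x' else 0)
            + lam i * rho P (Hi P z.support (P.m j - 1)) x') := by
            refine (Finset.abs_sum_le_sum_abs _ _).trans (Finset.sum_le_sum fun i _ => ?_)
            rw [abs_mul, abs_of_nonneg (hl0 i)]
            have a0 := mul_nonneg (hl0 i) hR
            split_ifs with hi
            · have := mul_le_mul_of_nonneg_left (abs_pr_le_norm (hg i).1 x') (hl0 i)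
              linarith
            · rw [zero_add]
              refine mul_le_mul_of_nonneg_left ?_ (hl0 i)
              obtain ⟨⟨w, hw⟩, hE⟩ := hg i
              refine le_rho (K := Hi P z.support (P.m j - 1)) ⟨w, hw, ?_, hE⟩ ⟨w, hw⟩ x'
              by_contra hc
              obtain ⟨w', rfl⟩ := ENat.ne_top_iff_exists.1
                (ne_top_of_le_ne_top (ENat.natCast_ne_top _) (not_lt.1 hc))
              have hle : w' ≤ P.m j - 1 := by exact_mod_cast not_lt.1 hc
              have := two_le_m (P := P) j
              exact hi (Finset.mem_filter.2 ⟨Finset.mem_univ _, w', hw, by omega⟩)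
        _ ≤ _ := by
            rw [Finset.sum_add_distrib, ← Finset.sum_mul, hl1, one_mul, Finset.sum_ite_mem,
              Finset.univ_inter, ← Finset.sum_mul]
            have := mul_le_mul_of_nonneg_right hlam hX
            linarith
    have e7 := hzr x'
    have e8 : |pr z x'| ≤ |pr z x' - pr (∑ i, lam i • g i) x'| + |pr (∑ i, lam i • g i) x'| := by
      have := abs_add_le (pr z x' - pr (∑ i, lam i • g i) x') (pr (∑ i, lam i • g i) x')
      rwa [sub_add_cancel] at this
    have e9 : η = 9 * ε := by rw [hεdef]; ring
    rw [e9]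
    linarith

end IWDual

namespace IWDual

variable {P : IWParams}

/-! ### Rapidly increasing sequences -/

/-- A rapidly increasing sequence of nearly normed pairs `(z_q, x_q)`, with the functionals `z_q`
in the span of `y`. Functionals of weight outside `[M_q, M_{q+1})` are small on `x_q`. -/
structure RIS (P : IWParams) (y : ℕ → c00) where
  z : ℕ → c00
  x : ℕ → c00
  M : ℕ → ℕ
  span : ∀ q, z q ∈ Submodule.span ℝ (Set.range y)
  ne : ∀ q, (z q).support.Nonempty
  blocks : ∀ q, Blocks (z q) (z (q + 1))
  pos : ∀ q, 0 < minSupp (z q)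
  xs : ∀ q, (x q).support ⊆ (z q).support
  xn : ∀ q, iwNorm P (x q) ≤ 1
  zx : ∀ q, 1 / 2 ≤ pr (z q) (x q)
  mono : StrictMono M
  Mpos : ∀ q, 0 < M q
  gap : ∀ q, maxSupp (z q) < M (q + 1)
  low : ∀ (q : ℕ) (g : c00) (w : ℕ), WIW P g w → w < M q → |pr g (x q)| ≤ 2 / w
  high : ∀ (q : ℕ) (g : c00) (w : ℕ∞), WIW P g w → (M (q + 1) : ℕ∞) ≤ w →
    |pr g (x q)| ≤ (2⁻¹ : ℝ) ^ q
  zHi : ∀ (q : ℕ) (v : c00), |pr (z q) v| ≤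
    (2⁻¹ : ℝ) ^ (q + 1) * iwNorm P v + rho P (Hi P (z q).support (M q - 1)) v

lemma exists_RIS {y : ℕ → c00} (hy : IsNormBlockSeq (iwDualNorm P) y) : Nonempty (RIS P y) := by
  classical
  have hstep : ∀ p b : ℕ, ∃ a : c00 × c00 × ℕ, ∃ j, a.2.2 = P.m j ∧ b * 2 ^ p < a.2.2 ∧
      a.1 ∈ Submodule.span ℝ (Set.range y) ∧ a.1.support.Nonempty ∧
      a.2.1.support ⊆ a.1.support ∧ (∀ i ∈ a.1.support, b < i) ∧ iwNorm P a.2.1 ≤ 1 ∧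
      1 / 2 ≤ pr a.1 a.2.1 ∧ (∀ i, |a.2.1 i| ≤ (2⁻¹ : ℝ) ^ p) ∧
      (∀ (g : c00) (w : ℕ), WIW P g w → w < a.2.2 → |pr g a.2.1| ≤ 2 / w) ∧
      ∀ v, |pr a.1 v| ≤ (2⁻¹ : ℝ) ^ (p + 1) * iwNorm P v
        + rho P (Hi P a.1.support (a.2.2 - 1)) v := by
    intro p b
    have hη : (2⁻¹ : ℝ) ^ (p + 1) ≤ 2⁻¹ := by
      simpa using pow_le_pow_of_le_one (a := (2⁻¹ : ℝ)) (by norm_num) (by norm_num)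
        (show 1 ≤ p + 1 by omega)
    obtain ⟨z, x, h1, h2, h3, h4, -, h6, h7, h8, h9, h10⟩ := exists_exact hy (b * 2 ^ p + 1)
      (η := (2⁻¹ : ℝ) ^ (p + 1)) (by positivity) (hη.trans (by norm_num)) b
    refine ⟨(z, x, P.m (b * 2 ^ p + 1)), b * 2 ^ p + 1, rfl, ?_, h1, h2, h3, h4, h6, ?_, ?_, h9,
      h10⟩
    · exact lt_of_lt_of_le (Nat.lt_succ_self _) P.m_mono.le_apply
    · change 1 / 2 ≤ pr z x
      norm_num at hη ⊢
      linarith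
    · exact fun i => (h8 i).trans (pow_le_pow_of_le_one (by norm_num) (by norm_num) (by omega))
  obtain ⟨s, h0, hs⟩ := exists_rec _
    (fun a : c00 × c00 × ℕ => max (maxSupp a.1) (max ⌈l1 a.2.1⌉₊ a.2.2)) hstep
  have hall : ∀ p, ∃ b j, (s p).2.2 = P.m j ∧ b * 2 ^ p < (s p).2.2 ∧
      (s p).1 ∈ Submodule.span ℝ (Set.range y) ∧ (s p).1.support.Nonempty ∧
      (s p).2.1.support ⊆ (s p).1.support ∧ (∀ i ∈ (s p).1.support, b < i) ∧
      iwNorm P (s p).2.1 ≤ 1 ∧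
      1 / 2 ≤ pr (s p).1 (s p).2.1 ∧ (∀ i, |(s p).2.1 i| ≤ (2⁻¹ : ℝ) ^ p) ∧
      (∀ (g : c00) (w : ℕ), WIW P g w → w < (s p).2.2 → |pr g (s p).2.1| ≤ 2 / w) ∧
      ∀ v, |pr (s p).1 v| ≤ (2⁻¹ : ℝ) ^ (p + 1) * iwNorm P v
        + rho P (Hi P (s p).1.support ((s p).2.2 - 1)) v := by
    intro p
    cases p with
    | zero => exact ⟨_, h0⟩
    | succ p => exact ⟨_, hs p⟩
  choose b j hM hbM hspan hne hxs hb hxn hzx hsm hlow hHi using hall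
  have hbig : ∀ p, max (maxSupp (s p).1) (max ⌈l1 (s p).2.1⌉₊ (s p).2.2) * 2 ^ (p + 1)
      < (s (p + 1)).2.2 := fun p => by
    obtain ⟨-, -, h, -⟩ := hs p
    exact h
  have hbig1 : ∀ p, max (maxSupp (s p).1) (max ⌈l1 (s p).2.1⌉₊ (s p).2.2)
      < (s (p + 1)).2.2 := fun p =>
    lt_of_le_of_lt (Nat.le_mul_of_pos_right _ (by positivity)) (hbig p)
  refine ⟨⟨fun q => (s q).1, fun q => (s q).2.1, fun q => (s q).2.2, hspan, hne, ?_, ?_, hxs, hxn,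
    hzx, ?_, ?_, ?_, hlow, ?_, hHi⟩⟩
  · intro q
    refine blocks_of (hne _) (hne _) fun a ha c hc => ?_
    obtain ⟨-, -, -, -, -, -, h, -⟩ := hs q
    exact (le_maxSupp ha).trans_lt ((le_max_left _ _).trans_lt (h c hc))
  · exact fun q => (Nat.zero_le _).trans_lt (hb q _ (minSupp_mem (hne q)))
  · exact strictMono_nat_of_lt_succ fun q =>
      ((le_max_right _ _).trans (le_max_right _ _)).trans_lt (hbig1 q)
  · intro q
    exact (Nat.zero_le _).trans_lt (hbM q)
  · exact fun q => (le_max_left _ _).trans_lt (hbig1 q)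
  · intro q g w hg hw
    rcases WIW_elim hg with ⟨i, e, he, rfl, rfl⟩ | ⟨w0, n, d, f, u, ht, hd, -, rfl⟩
    · rw [pr_single, abs_mul]
      have : |e| = 1 := by rcases he with rfl | rfl <;> simp
      rw [this, one_mul]
      exact hsm q i
    · have hw' : (s (q + 1)).2.2 ≤ w0 := by exact_mod_cast hw
      have hwp : (0 : ℝ) < w0 := by have := ht.two_le; positivity
      refine (WIW_pr_le_weight hg _).trans ?_
      rw [← div_eq_inv_mul, div_le_iff₀ hwp]
      have h1 : l1 (s q).2.1 * 2 ^ (q + 1) ≤ w0 := by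
        have h2 : ⌈l1 (s q).2.1⌉₊ * 2 ^ (q + 1) ≤ w0 :=
          ((Nat.mul_le_mul_right _ ((le_max_left _ _).trans (le_max_right _ _))).trans
            (hbig q).le).trans hw'
        have h3 : ((⌈l1 (s q).2.1⌉₊ : ℕ) : ℝ) * 2 ^ (q + 1) ≤ w0 := by exact_mod_cast h2
        exact (mul_le_mul_of_nonneg_right (Nat.le_ceil _) (by positivity)).trans h3
      have h4 := l1_nonneg (s q).2.1
      have h5 : (0 : ℝ) < 2 ^ q := by positivity
      rw [inv_pow, ← div_eq_inv_mul, le_div_iff₀ h5]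
      rw [pow_succ] at h1
      nlinarith

end IWDual

namespace IWDual

variable {P : IWParams} {y : ℕ → c00}

lemma RIS.maxMono (S : RIS P y) : StrictMono fun q => maxSupp (S.z q) := fun _ _ h =>
  Blocks.lt (blocks_of_lt S.ne S.blocks h) (maxSupp_mem (S.ne _)) (maxSupp_mem (S.ne _))

lemma RIS.lt (S : RIS P y) {q q' : ℕ} (h : q < q') {a b : ℕ} (ha : a ∈ (S.z q).support)
    (hb : b ∈ (S.z q').support) : a < b :=
  Blocks.lt (blocks_of_lt S.ne S.blocks h) ha hb

/-- An admissible family of functionals, of complexity below `n_J` and with weights at least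
`M'`, acts like at most two small terms on an `S_{n_J}` special combination of a rapidly
increasing sequence. -/
lemma RIS.family_le (S : RIS P y) {J : ℕ} {ε θ D : ℝ} {F : Finset ℕ} {c : ℕ → ℝ}
    (hF : SpecialComb (P.n J) ε (fun k => minSupp (S.z k)) (fun k => maxSupp (S.z k)) F c)
    (hθ : ∀ q ∈ F, (2⁻¹ : ℝ) ^ q ≤ θ) {n d : ℕ} {f : Fin d → c00} {u : Fin d → ℕ∞}
    (hd : Dec P n f u) (hn : n ≤ P.n J - 1) (R : Finset (Fin d)) {M' : ℕ} (hM' : 0 < M')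
    (hR : ∀ r ∈ R, (M' : ℕ∞) ≤ u r) (hD0 : 0 ≤ D)
    (hD : ∀ q, |∑ r ∈ R, pr (f r) (S.x q)| ≤ D) :
    |∑ r ∈ R, pr (f r) (∑ q ∈ F, c q • S.x q)| ≤ 2 / M' + θ + ε + D * ε := by
  classical
  obtain ⟨hFne, -, hc0, hc1, hsm⟩ := hF
  have hθ0 : 0 ≤ θ := by
    obtain ⟨q, hq⟩ := hFne
    exact le_trans (by positivity) (hθ q hq)
  have hx : ∀ K : Finset ℕ, ∀ k ∈ K, ∀ k' ∈ K, k < k' → ∀ a ∈ (S.x k).support,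
      ∀ b ∈ (S.x k').support, a < b := fun K k _ k' _ hkk a ha b hb =>
    S.lt hkk (S.xs k ha) (S.xs k' hb)
  have ht : ∀ K : Finset ℕ, ∀ k ∈ K, ∀ a ∈ (S.x k).support, a ≤ maxSupp (S.z k) :=
    fun K k _ a ha => le_maxSupp (S.xs k ha)
  have hpos : ∀ K : Finset ℕ, ∀ i ∈ K.image (fun k => maxSupp (S.z k)), 1 ≤ i := by
    intro K i hi
    obtain ⟨k, _, rfl⟩ := Finset.mem_image.1 hi
    exact (S.pos k).trans_le (minSupp_le_maxSupp (S.ne k))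
  -- blocks met by two members of the family
  set K2 := F.filter fun q => ∃ r ∈ R, ∃ r' ∈ R, r < r' ∧ pr (f r) (S.x q) ≠ 0 ∧
    pr (f r') (S.x q) ≠ 0 with hK2
  -- blocks met by a member whose weight lies in the critical window
  set K4 := F.filter fun q => ∃ r ∈ R, pr (f r) (S.x q) ≠ 0 ∧ (S.M q : ℕ∞) ≤ u r ∧
    u r < (S.M (q + 1) : ℕ∞) with hK4
  have hs2 : ∑ q ∈ K2, c q ≤ ε := by
    refine hsm K2 (Finset.filter_subset _ _) (SE_mono hn ?_ (hpos _))
    refine SE_multi hd (x := S.x) K2 (hx _) (ht _) S.maxMono fun q hq => ?_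
    obtain ⟨r, _, r', _, h⟩ := (Finset.mem_filter.1 hq).2
    exact ⟨r, r', h⟩
  have hs4 : ∑ q ∈ K4, c q ≤ ε := by
    refine hsm K4 (Finset.filter_subset _ _) (SE_mono hn ?_ (hpos _))
    rcases K4.eq_empty_or_nonempty with h | ⟨k0, hk0⟩
    · rw [h]; simpa using SE_empty n
    have hne : Nonempty (Fin d) := ⟨(Finset.mem_filter.1 hk0).2.choose⟩
    have hex : ∀ q ∈ K4, ∃ r, pr (f r) (S.x q) ≠ 0 ∧ (S.M q : ℕ∞) ≤ u r ∧
        u r < (S.M (q + 1) : ℕ∞) := fun q hq => by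
      obtain ⟨r, _, h⟩ := (Finset.mem_filter.1 hq).2
      exact ⟨r, h⟩
    choose! ρ h1 h2 h3 using hex
    refine SE_of_sel hd K4 ρ (hx _) (ht _) S.maxMono ?_ h1
    have key : ∀ q ∈ K4, ∀ q' ∈ K4, q < q' → ρ q ≠ ρ q' := by
      intro q hq q' hq' hlt he
      have a1 := h3 q hq
      have a2 := h2 q' hq'
      rw [← he] at a2
      have a3 : (S.M (q + 1) : ℕ∞) ≤ S.M q' := by exact_mod_cast S.mono.monotone hlt
      exact absurd (a3.trans a2) (not_le.2 a1)
    intro q hq q' hq' he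
    rcases lt_trichotomy q q' with h | h | h
    · exact absurd he (key q hq q' hq' h)
    · exact h
    · exact absurd he.symm (key q' hq' q hq h)
  have hB0 : 0 ≤ 2 / (M' : ℝ) + θ := by positivity
  have hone : ∀ q ∈ F, |∑ r ∈ R, pr (f r) (S.x q)| ≤ (2 / M' + θ) + (if q ∈ K4 then 1 else 0)
      + (if q ∈ K2 then D else 0) := by
    intro q hq
    by_cases h2 : q ∈ K2
    · rw [if_pos h2]
      refine (hD q).trans ?_
      have : (0 : ℝ) ≤ if q ∈ K4 then 1 else 0 := by split_ifs <;> norm_num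
      linarith
    rw [if_neg h2, add_zero]
    have hmul : ∀ r ∈ R, ∀ r' ∈ R, r < r' → ¬ (pr (f r) (S.x q) ≠ 0 ∧ pr (f r') (S.x q) ≠ 0) :=
      fun r hr r' hr' hlt hh => h2 (Finset.mem_filter.2 ⟨hq, r, hr, r', hr', hlt, hh⟩)
    by_cases h4 : q ∈ K4
    · rw [if_pos h4]
      refine (single_hit R zero_le_one
        (fun r _ => (abs_pr_le_norm ⟨_, hd.wiw r⟩ _).trans (S.xn q)) hmul).trans ?_
      linarith
    · rw [if_neg h4, add_zero]
      refine single_hit R hB0 (fun r hr => ?_) hmul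
      by_cases h0 : pr (f r) (S.x q) = 0
      · rw [h0, abs_zero]; exact hB0
      by_cases hlo : u r < (S.M q : ℕ∞)
      · obtain ⟨w, hw⟩ := ENat.ne_top_iff_exists.1 (ne_top_of_lt hlo)
        have hg := hd.wiw r
        rw [← hw] at hg hlo
        have hMw := hR r hr
        rw [← hw] at hMw
        have b1 : M' ≤ w := by exact_mod_cast hMw
        have b2 := S.low q (f r) w hg (by exact_mod_cast hlo)
        have b3 : (2 : ℝ) / w ≤ 2 / M' := div_le_div_of_nonneg_left (by norm_num)
          (by positivity) (by exact_mod_cast b1)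
        linarith
      · have hhi : (S.M (q + 1) : ℕ∞) ≤ u r := by
          by_contra hc
          exact h4 (Finset.mem_filter.2 ⟨hq, r, hr, h0, not_lt.1 hlo, not_le.1 hc⟩)
        have b2 := (S.high q (f r) _ (hd.wiw r) hhi).trans (hθ q hq)
        have : (0 : ℝ) ≤ 2 / M' := by positivity
        linarith
  have hexp : ∑ r ∈ R, pr (f r) (∑ q ∈ F, c q • S.x q) =
      ∑ q ∈ F, c q * ∑ r ∈ R, pr (f r) (S.x q) := by
    simp_rw [map_sum, map_smul, smul_eq_mul]
    rw [Finset.sum_comm]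
    simp_rw [Finset.mul_sum]
  rw [hexp]
  calc _ ≤ ∑ q ∈ F, (c q * (2 / M' + θ) + (if q ∈ K4 then c q else 0)
        + (if q ∈ K2 then D * c q else 0)) := by
        refine (Finset.abs_sum_le_sum_abs _ _).trans (Finset.sum_le_sum fun q hq => ?_)
        rw [abs_mul, abs_of_nonneg (hc0 q)]
        refine (mul_le_mul_of_nonneg_left (hone q hq) (hc0 q)).trans (le_of_eq ?_)
        split_ifs <;> ring
    _ = (2 / M' + θ) + ∑ q ∈ K4, c q + D * ∑ q ∈ K2, c q := by
        rw [Finset.sum_add_distrib, Finset.sum_add_distrib, ← Finset.sum_mul, hc1, one_mul,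
          Finset.sum_ite_mem, Finset.sum_ite_mem,
          Finset.inter_eq_right.2 (Finset.filter_subset _ _),
          Finset.inter_eq_right.2 (Finset.filter_subset _ _), Finset.mul_sum]
    _ ≤ _ := by
        have := mul_le_mul_of_nonneg_left hs2 hD0
        linarith

/-- A functional of weight at least `M'` is small on special combinations of a rapidly increasing
sequence. -/
lemma RIS.single_le (S : RIS P y) {J : ℕ} {ε θ : ℝ} {F : Finset ℕ} {c : ℕ → ℝ}
    (hF : SpecialComb (P.n J) ε (fun k => minSupp (S.z k)) (fun k => maxSupp (S.z k)) F c)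
    (hε : 0 ≤ ε) (hθ : ∀ q ∈ F, (2⁻¹ : ℝ) ^ q ≤ θ) {g : c00} {w : ℕ∞} (hg : WIW P g w) {M' : ℕ}
    (hM' : 0 < M') (hw : (M' : ℕ∞) ≤ w) :
    |pr g (∑ q ∈ F, c q • S.x q)| ≤ 2 / M' + θ + 2 * ε := by
  classical
  have hθ0 : 0 ≤ θ := by
    obtain ⟨q, hq⟩ := hF.1
    exact le_trans (by positivity) (hθ q hq)
  by_cases h0 : g.support.Nonempty
  swap
  · rw [Finset.not_nonempty_iff_eq_empty, Finsupp.support_eq_empty] at h0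
    rw [h0, map_zero, LinearMap.zero_apply, abs_zero]
    positivity
  have hd : Dec P 0 (fun _ : Fin 1 => g) (fun _ => w) := by
    refine ⟨fun _ => hg, fun _ => h0, fun q r h => ?_, fun q r h => ?_, ?_⟩
    · exact absurd h (by rw [Subsingleton.elim q r]; exact lt_irrefl r)
    · exact absurd h (by rw [Subsingleton.elim q r]; exact lt_irrefl r)
    · exact SE_zero_of_card (Finset.card_image_le.trans (by simp))
  have := S.family_le hF hθ hd (Nat.zero_le _) Finset.univ hM' (fun _ _ => hw) zero_le_one
    (fun q => by simpa using (abs_pr_le_norm ⟨w, hg⟩ (S.x q)).trans (S.xn q))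
  simp only [Finset.univ_unique, Finset.sum_const, Finset.card_singleton, one_smul] at this
  linarith

/-! ### The rows of the array -/

/-- Special combinations indexed by `p`, successive in `p`, where the index `p` encodes the
position `(i, k)` in the array and the complexity of the combination depends on the row `i` only,
through `J i`. -/
structure Rows (S : RIS P y) where
  J : ℕ → ℕ
  F : ℕ → Finset ℕ
  c : ℕ → ℕ → ℝ
  lac : ∀ i, 2 * P.m (J i) ≤ P.m (J (i + 1))
  scc : ∀ p, SpecialComb (P.n (J p.unpair.1))
    ((2⁻¹ : ℝ) ^ p / (P.m (J p.unpair.1) * (1 + P.m (J p.unpair.1))))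
    (fun k => minSupp (S.z k)) (fun k => maxSupp (S.z k)) (F p) (c p)
  small : ∀ p, ∀ q ∈ F p, (2⁻¹ : ℝ) ^ q ≤ (2⁻¹ : ℝ) ^ p / P.m (J p.unpair.1)
  large : ∀ p, ∀ q ∈ F p, p ≤ q
  succ : ∀ p p', p < p' → ∀ q ∈ F p, ∀ q' ∈ F p', q < q'

lemma exists_Rows (S : RIS P y) : Nonempty (Rows S) := by
  classical
  obtain ⟨J0, hJ0⟩ : ∃ J0, ∀ j ≥ J0, (P.m j : ℝ) / P.m (j + 1) ≤ 1 / 2 :=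
    eventually_atTop.1 (P.growth_ratio.eventually (Iic_mem_nhds (by norm_num)))
  have hm : ∀ j, (0 : ℝ) < P.m j := fun j => by have := two_le_m (P := P) j; positivity
  have hstep : ∀ p b : ℕ, ∃ a : Finset ℕ × (ℕ → ℝ), SpecialComb (P.n (J0 + p.unpair.1))
      ((2⁻¹ : ℝ) ^ p / (P.m (J0 + p.unpair.1) * (1 + P.m (J0 + p.unpair.1))))
      (fun k => minSupp (S.z k)) (fun k => maxSupp (S.z k)) a.1 a.2 ∧
      (∀ q ∈ a.1, b ≤ q ∧ p ≤ q ∧ (2⁻¹ : ℝ) ^ q ≤ (2⁻¹ : ℝ) ^ p / P.m (J0 + p.unpair.1)) := by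
    intro p b
    have hmp := hm (J0 + p.unpair.1)
    obtain ⟨N, hN⟩ := exists_pow_lt_of_lt_one
      (show (0 : ℝ) < (2⁻¹ : ℝ) ^ p / P.m (J0 + p.unpair.1) by positivity)
      (show (2⁻¹ : ℝ) < 1 by norm_num)
    obtain ⟨F, c, hF, hq, hs, hc0, hc1, hsm⟩ := exists_scc (s := fun k => minSupp (S.z k))
      (t := fun k => maxSupp (S.z k)) (fun q => minSupp_le_maxSupp (S.ne q))
      (fun q => S.blocks q) (one_le_n (P := P) (J0 + p.unpair.1))
      (ε := (2⁻¹ : ℝ) ^ p / (P.m (J0 + p.unpair.1) * (1 + P.m (J0 + p.unpair.1))))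
      (by positivity) (max N (max b p))
    refine ⟨(F, c), ⟨hF, hs, hc0, hc1, hsm⟩, fun q hqF => ?_⟩
    have h := hq q hqF
    refine ⟨by omega, by omega, le_trans ?_ hN.le⟩
    exact pow_le_pow_of_le_one (by norm_num) (by norm_num) (by omega)
  obtain ⟨s, h0, hs⟩ := exists_rec _ (fun a : Finset ℕ × (ℕ → ℝ) => a.1.sup id + 1) hstep
  have hall : ∀ p, SpecialComb (P.n (J0 + p.unpair.1))
      ((2⁻¹ : ℝ) ^ p / (P.m (J0 + p.unpair.1) * (1 + P.m (J0 + p.unpair.1))))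
      (fun k => minSupp (S.z k)) (fun k => maxSupp (S.z k)) (s p).1 (s p).2 ∧
      (∀ q ∈ (s p).1, p ≤ q ∧ (2⁻¹ : ℝ) ^ q ≤ (2⁻¹ : ℝ) ^ p / P.m (J0 + p.unpair.1)) := by
    intro p
    cases p with
    | zero => exact ⟨h0.1, fun q hq => (h0.2 q hq).2⟩
    | succ p => exact ⟨(hs p).1, fun q hq => ((hs p).2 q hq).2⟩
  have hstep1 : ∀ p, ∀ q ∈ (s p).1, ∀ q' ∈ (s (p + 1)).1, q < q' := fun p q hq q' hq' =>
    lt_of_lt_of_le (Nat.lt_succ_of_le (Finset.le_sup (f := id) hq)) ((hs p).2 q' hq').1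
  refine ⟨⟨fun i => J0 + i, fun p => (s p).1, fun p => (s p).2, ?_, fun p => (hall p).1,
    fun p q hq => ((hall p).2 q hq).2, fun p q hq => ((hall p).2 q hq).1, ?_⟩⟩
  · intro i
    have h := hJ0 (J0 + i) (Nat.le_add_right _ _)
    rw [div_le_iff₀ (hm _)] at h
    have h' : (2 : ℝ) * P.m (J0 + i) ≤ P.m (J0 + i + 1) := by linarith
    exact_mod_cast h'
  · intro p p' hpp
    induction p', hpp using Nat.le_induction with
    | base => exact hstep1 p
    | succ r _ ih =>
      intro q hq q' hq'
      obtain ⟨e, he⟩ := (hall r).1.1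
      exact (ih q hq e he).trans (hstep1 r e he q' hq')

end IWDual

namespace IWDual

variable {P : IWParams} {y : ℕ → c00} {S : RIS P y}

/-! ### The array and its `c_0`-like test vectors -/

/-- The weight parameter `m_{J_i}` attached to the position `p = (i, k)`. -/
noncomputable def Rows.w (T : Rows S) (p : ℕ) : ℕ := P.m (T.J p.unpair.1)

/-- The unnormalized members of the array. -/
noncomputable def Rows.f (T : Rows S) (p : ℕ) : c00 := (T.w p : ℝ)⁻¹ • ∑ q ∈ T.F p, S.z q

/-- Vectors almost biorthogonal to the members of the array. -/
noncomputable def Rows.X (T : Rows S) (p : ℕ) : c00 := (T.w p : ℝ) • ∑ q ∈ T.F p, T.c p q • S.x q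

lemma Rows.two_le_w (T : Rows S) (p : ℕ) : (2 : ℝ) ≤ T.w p := by
  exact_mod_cast two_le_m (P := P) _

lemma Rows.f_supp (T : Rows S) (p : ℕ) :
    (T.f p).support = (T.F p).biUnion fun q => (S.z q).support := by
  rw [Rows.f, Finset.smul_sum]
  refine supp_sum_blocks S.ne S.blocks _ (fun _ => (T.w p : ℝ)⁻¹) fun _ _ => ?_
  have := T.two_le_w p
  positivity

lemma Rows.f_ne (T : Rows S) (p : ℕ) : (T.f p).support.Nonempty := by
  rw [T.f_supp]
  obtain ⟨q, hq⟩ := (T.scc p).1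
  obtain ⟨a, ha⟩ := S.ne q
  exact ⟨a, Finset.mem_biUnion.2 ⟨q, hq, ha⟩⟩

lemma Rows.f_lt (T : Rows S) {p p' : ℕ} (h : p < p') : ∀ a ∈ (T.f p).support,
    ∀ b ∈ (T.f p').support, a < b := by
  intro a ha b hb
  rw [T.f_supp] at ha hb
  obtain ⟨q, hq, hqa⟩ := Finset.mem_biUnion.1 ha
  obtain ⟨q', hq', hqb⟩ := Finset.mem_biUnion.1 hb
  exact S.lt (T.succ p p' h q hq q' hq') hqa hqb

lemma Rows.le_supp (T : Rows S) {p a : ℕ} (ha : a ∈ (T.f p).support) : p ≤ a := by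
  rw [T.f_supp] at ha
  obtain ⟨q, hq, hqa⟩ := Finset.mem_biUnion.1 ha
  exact (T.large p q hq).trans ((le_minSupp_seq S.ne S.blocks q).trans (minSupp_le hqa))

lemma Rows.X_supp (T : Rows S) (p : ℕ) : (T.X p).support ⊆ (T.f p).support := by
  classical
  rw [T.f_supp, Rows.X]
  refine Finsupp.support_smul.trans (Finsupp.support_finsetSum.trans ?_)
  refine Finset.biUnion_subset.2 fun q hq => ?_
  exact (Finsupp.support_smul.trans (S.xs q)).trans
    (Finset.subset_biUnion_of_mem (fun q => (S.z q).support) hq)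

lemma Rows.fX_ne (T : Rows S) {p p' : ℕ} (h : p ≠ p') : pr (T.f p) (T.X p') = 0 := by
  by_contra hc
  obtain ⟨a, ha, ha'⟩ := exists_of_pr_ne hc
  have ha' := T.X_supp p' ha'
  rcases lt_or_gt_of_ne h with hlt | hlt
  · exact lt_irrefl _ (T.f_lt hlt a ha a ha')
  · exact lt_irrefl _ (T.f_lt hlt a ha' a ha)

lemma Rows.fX (T : Rows S) (p : ℕ) : 1 / 2 ≤ pr (T.f p) (T.X p) := by
  have hw := T.two_le_w p
  obtain ⟨-, -, hc0, hc1, -⟩ := T.scc p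
  have e1 : pr (T.f p) (T.X p) = ∑ q ∈ T.F p, T.c p q * pr (S.z q) (S.x q) := by
    rw [Rows.f, Rows.X, map_smul, map_smul, LinearMap.smul_apply, smul_eq_mul, smul_eq_mul,
      ← mul_assoc, mul_inv_cancel₀ (by positivity), one_mul, map_sum]
    refine Finset.sum_congr rfl fun q hq => ?_
    rw [map_smul, smul_eq_mul, map_sum, LinearMap.sum_apply, Finset.sum_eq_single_of_mem q hq]
    intro q' _ hqq
    by_contra hc
    obtain ⟨a, ha, ha'⟩ := exists_of_pr_ne hc
    have ha' := S.xs q ha'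
    rcases lt_or_gt_of_ne hqq with hlt | hlt
    · exact lt_irrefl _ (S.lt hlt ha ha')
    · exact lt_irrefl _ (S.lt hlt ha' ha)
  rw [e1]
  calc (1 / 2 : ℝ) = ∑ q ∈ T.F p, T.c p q * (1 / 2) := by rw [← Finset.sum_mul, hc1, one_mul]
    _ ≤ _ := Finset.sum_le_sum fun q _ => mul_le_mul_of_nonneg_left (S.zx q) (hc0 q)

/-- By the choice of the gaps, the high-weight parts of the `z_q` are jointly very fast growing, so
that their admissible sum is bounded by the weight. -/
lemma Rows.f_dual_le (T : Rows S) (p : ℕ) : iwDualNorm P (T.f p) ≤ 2 := by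
  have hw := T.two_le_w p
  have hwp : (0 : ℝ) < T.w p := by linarith
  refine dual_le (by norm_num) fun v => ?_
  have hv := norm_nonneg' (P := P) v
  have hHi := sum_Hi_le (P := P) (j := T.J p.unpair.1) (T.F p) (fun q => (S.z q).support)
    (fun q => minSupp (S.z q)) (fun q => S.M q - 1) (T.scc p).2.1
    (fun q _ => minSupp_mem (S.ne q)) (fun q _ m hm => minSupp_le hm)
    (fun q _ q' _ h a ha b hb => S.lt h ha hb)
    (fun q _ q' _ h a ha => by
      have h1 := le_maxSupp ha
      have h2 := S.gap q
      have h3 := S.mono.monotone (show q + 1 ≤ q' from h)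
      change a ≤ S.M q' - 1
      omega) v
  rw [Rows.f, map_smul, LinearMap.smul_apply, smul_eq_mul, abs_mul, abs_of_pos (inv_pos.2 hwp),
    ← div_eq_inv_mul, div_le_iff₀ hwp, map_sum, LinearMap.sum_apply]
  have h1 : |∑ q ∈ T.F p, pr (S.z q) v| ≤ ∑ q ∈ T.F p, ((2⁻¹ : ℝ) ^ q * (2⁻¹ * iwNorm P v) +
      rho P (Hi P (S.z q).support (S.M q - 1)) v) := by
    refine (Finset.abs_sum_le_sum_abs _ _).trans (Finset.sum_le_sum fun q _ => ?_)
    refine (S.zHi q v).trans (le_of_eq ?_)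
    ring
  rw [Finset.sum_add_distrib, ← Finset.sum_mul] at h1
  have h2 := mul_le_mul_of_nonneg_right (sum_half_le (T.F p))
    (show 0 ≤ 2⁻¹ * iwNorm P v by positivity)
  have h3 : (P.m (T.J p.unpair.1) : ℝ) = T.w p := rfl
  rw [h3] at hHi
  nlinarith

/-- A functional of large weight is small on `X p`, except for the factor `w p`. -/
lemma Rows.X_single (T : Rows S) (p : ℕ) {g : c00} {w : ℕ∞} (hg : WIW P g w) {M' : ℕ}
    (hM' : 0 < M') (hw : (M' : ℕ∞) ≤ w) :
    |pr g (T.X p)| ≤ 2 * T.w p / M' + 2 * (2⁻¹ : ℝ) ^ p := by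
  have hw2 := T.two_le_w p
  have hwp : (0 : ℝ) < T.w p := by linarith
  have h := S.single_le (T.scc p) (by positivity) (T.small p) hg hM' hw
  rw [show (P.m (T.J p.unpair.1) : ℝ) = T.w p from rfl] at h
  rw [Rows.X, map_smul, smul_eq_mul, abs_mul, abs_of_pos hwp]
  refine (mul_le_mul_of_nonneg_left h hwp.le).trans ?_
  have e : (T.w p : ℝ) * (2 / M' + (2⁻¹ : ℝ) ^ p / T.w p + 2 * ((2⁻¹ : ℝ) ^ p /
      (T.w p * (1 + T.w p)))) = 2 * T.w p / M' + (2⁻¹ : ℝ) ^ p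
        + (2⁻¹ : ℝ) ^ p * (2 / (1 + T.w p)) := by
    have : (0 : ℝ) < M' := by exact_mod_cast hM'
    field_simp
  rw [e]
  have h2 : 2 / (1 + (T.w p : ℝ)) ≤ 1 := by rw [div_le_one (by linarith)]; linarith
  have h3 : (0 : ℝ) < (2⁻¹ : ℝ) ^ p := by positivity
  nlinarith

/-- An admissible family of lower complexity, with components of large weight, is small on `X p`. -/
lemma Rows.X_family (T : Rows S) (p : ℕ) {n d : ℕ} {f : Fin d → c00} {u : Fin d → ℕ∞}
    (hd : Dec P n f u) {w : ℕ} (ht : IsType P w n) (hw : w < T.w p) (R : Finset (Fin d)) {M' : ℕ}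
    (hM' : 0 < M') (hR : ∀ r ∈ R, (M' : ℕ∞) ≤ u r) :
    |∑ r ∈ R, pr (f r) (T.X p)| ≤ 2 * T.w p / M' + 2 * (2⁻¹ : ℝ) ^ p := by
  classical
  have hw2 := T.two_le_w p
  have hwp : (0 : ℝ) < T.w p := by linarith
  have hwpos : (0 : ℝ) < w := by have := ht.two_le; positivity
  have hW : WIW P ((w : ℝ)⁻¹ • ∑ q ∈ R, f q) w :=
    Wop ht R f u (fun q _ _ => hd.wiw q) (fun q _ r _ => hd.succ q r)
      (fun q _ r _ hqr _ => hd.vfg q r hqr)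
      (hd.adm_res _ _ (fun _ _ => subset_rfl) fun _ hq => (Finset.mem_filter.1 hq).2)
  have hD : ∀ q, |∑ r ∈ R, pr (f r) (S.x q)| ≤ w := by
    intro q
    have h1 := (abs_pr_le_norm ⟨_, hW⟩ (S.x q)).trans (S.xn q)
    rw [map_smul, LinearMap.smul_apply, smul_eq_mul, abs_mul, abs_of_pos (inv_pos.2 hwpos),
      ← div_eq_inv_mul, div_le_one hwpos, map_sum, LinearMap.sum_apply] at h1
    exact h1
  have h := S.family_le (T.scc p) (T.small p) hd (by
    have := ht.order_lt (j := T.J p.unpair.1) hw; omega) R hM' hR hwpos.le hD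
  rw [show (P.m (T.J p.unpair.1) : ℝ) = T.w p from rfl] at h
  have e0 : ∑ r ∈ R, pr (f r) (T.X p) =
      T.w p * ∑ r ∈ R, pr (f r) (∑ q ∈ T.F p, T.c p q • S.x q) := by
    rw [Finset.mul_sum]
    refine Finset.sum_congr rfl fun r _ => ?_
    rw [Rows.X, map_smul, smul_eq_mul]
  rw [e0, abs_mul, abs_of_pos hwp]
  refine (mul_le_mul_of_nonneg_left h hwp.le).trans ?_
  have e : (T.w p : ℝ) * (2 / M' + (2⁻¹ : ℝ) ^ p / T.w p + (2⁻¹ : ℝ) ^ p /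
      (T.w p * (1 + T.w p)) + w * ((2⁻¹ : ℝ) ^ p / (T.w p * (1 + T.w p)))) =
        2 * T.w p / M' + (2⁻¹ : ℝ) ^ p + (2⁻¹ : ℝ) ^ p * ((1 + w) / (1 + T.w p)) := by
    have : (0 : ℝ) < M' := by exact_mod_cast hM'
    field_simp
    ring
  rw [e]
  have hww : (w : ℝ) ≤ T.w p := by exact_mod_cast hw.le
  have h2 : (1 + (w : ℝ)) / (1 + (T.w p : ℝ)) ≤ 1 := by rw [div_le_one (by linarith)]; linarith
  have h3 : (0 : ℝ) < (2⁻¹ : ℝ) ^ p := by positivity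
  nlinarith

/-- A partial sum of a lacunary sequence is dominated by its largest term. -/
lemma sum_lacunary {a : ℕ → ℝ} (h0 : ∀ i, 0 ≤ a i) (h : ∀ i, 2 * a i ≤ a (i + 1)) {w : ℝ}
    (hw : 0 ≤ w) (l : ℕ) : ∑ i ∈ (Finset.range l).filter (fun i => a i ≤ w), a i ≤ 2 * w := by
  have hfull : ∀ l, ∑ i ∈ Finset.range (l + 1), a i ≤ 2 * a l := by
    intro l
    induction l with
    | zero => simp; linarith [h0 0]
    | succ l ih =>
      rw [Finset.sum_range_succ]
      linarith [h l]
  induction l with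
  | zero => simpa using hw
  | succ l ih =>
    by_cases hl : a l ≤ w
    · refine (Finset.sum_le_sum_of_subset_of_nonneg (Finset.filter_subset _ _)
        fun i _ _ => h0 i).trans ((hfull l).trans (by linarith))
    · rwa [Finset.range_add_one, Finset.filter_insert, if_neg hl]

/-- The vectors `X` in finitely many different rows span `c_0` uniformly, far enough out. -/
lemma Rows.c0 (T : Rows S) {l N : ℕ} (hN0 : 0 < N)
    (hN : ∀ i < l, l * (2 * (P.m (T.J i) : ℝ) / N + 2 * (2⁻¹ : ℝ) ^ N) ≤ 1) {p : Fin l → ℕ}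
    (hp : ∀ i, (p i).unpair.1 = i) (hpN : ∀ i, N ≤ p i) {g : c00} {w : ℕ∞} (hg : WIW P g w) :
    ∀ e : Fin l → ℝ, (∀ i, |e i| ≤ 1) → |pr g (∑ i, e i • T.X (p i))| ≤ 11 := by
  classical
  have hwp : ∀ i, T.w (p i) = P.m (T.J i) := fun i => by rw [Rows.w, hp i]
  have hNp : (0 : ℝ) < N := by exact_mod_cast hN0
  have hpow : ∀ i, 2 * (2⁻¹ : ℝ) ^ (p i) ≤ 2 * (2⁻¹ : ℝ) ^ N := fun i =>
    mul_le_mul_of_nonneg_left (pow_le_pow_of_le_one (by norm_num) (by norm_num) (hpN i))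
      (by norm_num)
  have htiny : ∑ i : Fin l, (2 * (T.w (p i) : ℝ) / N + 2 * (2⁻¹ : ℝ) ^ (p i)) ≤ 1 := by
    rcases Nat.eq_zero_or_pos l with rfl | hl
    · simp
    have hl' : (0 : ℝ) < l := by exact_mod_cast hl
    calc _ ≤ ∑ i : Fin l, (1 / l : ℝ) := by
          refine Finset.sum_le_sum fun i _ => ?_
          rw [le_div_iff₀ hl', mul_comm]
          refine le_trans (mul_le_mul_of_nonneg_left ?_ hl'.le) (hN i i.2)
          rw [hwp i]
          linarith [hpow i]
      _ = 1 := by simp [hl'.ne']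
  have hpr : ∀ (g : c00) (e : Fin l → ℝ), pr g (∑ i, e i • T.X (p i)) =
      ∑ i, e i * pr g (T.X (p i)) := by
    intro g e
    simp only [map_sum, map_smul, smul_eq_mul]
  have htop : ∀ (g : c00) (e : Fin l → ℝ), (∀ i, |e i| ≤ 1) →
      |pr g (∑ i, e i • T.X (p i))| ≤ ∑ i, |pr g (T.X (p i))| := by
    intro g e he
    rw [hpr]
    refine (Finset.abs_sum_le_sum_abs _ _).trans (Finset.sum_le_sum fun i _ => ?_)
    rw [abs_mul]
    exact mul_le_of_le_one_left (abs_nonneg _) (he i)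
  induction hg using WIW_induct with
  | h0 i s hs =>
    intro e he
    refine (htop _ e he).trans ?_
    have hWu : WIW P (Finsupp.single i s) ⊤ := WIW.unit i s hs
    refine (Finset.sum_le_sum fun i _ => T.X_single (p i) hWu hN0 le_top).trans ?_
    linarith
  | h1 w n d f u ht hd ih _ =>
    intro e he
    have hW := hd.op ht
    have hw2 : (2 : ℝ) ≤ w := by exact_mod_cast ht.two_le
    have hw0 : (0 : ℝ) < w := by linarith
    set e1 : Fin l → ℝ := fun i => if P.m (T.J i) ≤ w then e i else 0 with he1
    set e2 : Fin l → ℝ := fun i => if P.m (T.J i) ≤ w then 0 else e i with he2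
    have he2' : ∀ i, |e2 i| ≤ 1 := by
      intro i
      simp only [he2]
      split_ifs
      · simp
      · exact he i
    have hsplit : ∑ i, e i • T.X (p i) = ∑ i, e1 i • T.X (p i) + ∑ i, e2 i • T.X (p i) := by
      rw [← Finset.sum_add_distrib]
      refine Finset.sum_congr rfl fun i _ => ?_
      rw [← add_smul]
      congr 1
      simp only [he1, he2]
      split_ifs <;> simp
    -- rows whose weight parameter does not exceed the weight of the functional
    have hV1 : |pr ((w : ℝ)⁻¹ • ∑ q, f q) (∑ i, e1 i • T.X (p i))| ≤ 5 := by
      rw [hpr]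
      calc _ ≤ ∑ i : Fin l, ((if (P.m (T.J i) : ℝ) ≤ w then (P.m (T.J i) : ℝ) else 0) * (2 / w)
            + (2 * (T.w (p i) : ℝ) / N + 2 * (2⁻¹ : ℝ) ^ (p i))) := by
            refine (Finset.abs_sum_le_sum_abs _ _).trans (Finset.sum_le_sum fun i _ => ?_)
            have hnn : 0 ≤ 2 * (T.w (p i) : ℝ) / N := by positivity
            by_cases hi : P.m (T.J i) ≤ w
            · have hi' : (P.m (T.J i) : ℝ) ≤ w := by exact_mod_cast hi
              rw [if_pos hi']
              simp only [he1, if_pos hi]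
              have h1 := T.X_single (p i) hW (by have := ht.two_le; omega : 0 < w) le_rfl
              rw [abs_mul]
              have h2 := mul_le_of_le_one_left (abs_nonneg (pr ((w : ℝ)⁻¹ • ∑ q, f q)
                (T.X (p i)))) (he i)
              rw [hwp i] at h1 hnn ⊢
              have h3 : 2 * (P.m (T.J i) : ℝ) / w = P.m (T.J i) * (2 / w) := by ring
              linarith
            · simp only [he1, if_neg hi, zero_mul, abs_zero]
              positivity
        _ ≤ 2 * w * (2 / w) + 1 := by
            rw [Finset.sum_add_distrib, ← Finset.sum_mul]
            refine add_le_add (mul_le_mul_of_nonneg_right ?_ (by positivity)) htiny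
            have h := sum_lacunary (a := fun i => (P.m (T.J i) : ℝ)) (fun i => by positivity)
              (fun i => by exact_mod_cast T.lac i) hw0.le l
            rw [Finset.sum_filter] at h
            rwa [Fin.sum_univ_eq_sum_range
              (fun i => if (P.m (T.J i) : ℝ) ≤ w then (P.m (T.J i) : ℝ) else 0) l]
        _ = 5 := by field_simp; norm_num
    have hV2 : |pr ((w : ℝ)⁻¹ • ∑ q, f q) (∑ i, e2 i • T.X (p i))| ≤ 6 := by
      set V := ∑ i, e2 i • T.X (p i) with hV
      have hVs : ∀ a ∈ V.support, N ≤ a := by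
        intro a ha
        obtain ⟨i, _, hi⟩ := Finset.mem_biUnion.1 (Finsupp.support_finsetSum ha)
        exact (hpN i).trans (T.le_supp (T.X_supp _ (Finsupp.support_smul hi)))
      -- components following one that reaches beyond `N`: their weights exceed `N`
      set R : Finset (Fin d) := Finset.univ.filter fun r => ∃ r' < r, ∃ a ∈ (f r').support, N ≤ a
        with hR
      have hRu : ∀ r ∈ R, (N : ℕ∞) ≤ u r := by
        intro r hr
        obtain ⟨r', hlt, a, ha, hNa⟩ := (Finset.mem_filter.1 hr).2
        have h1 := hd.vfg r' r hlt a ha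
        exact le_trans (by exact_mod_cast hNa) h1.le
      have hA : |∑ r ∈ Rᶜ, pr (f r) V| ≤ 11 := by
        refine single_hit _ (by norm_num) (fun r _ => ih r e2 he2') ?_
        intro r _ r' hr' hlt hh
        obtain ⟨a, ha, ha'⟩ := exists_of_pr_ne hh.1
        refine (Finset.mem_compl.1 hr') (Finset.mem_filter.2 ⟨Finset.mem_univ _, r, hlt, a, ha, ?_⟩)
        exact hVs a ha'
      have hB : |∑ r ∈ R, pr (f r) V| ≤ 1 := by
        have e0 : ∑ r ∈ R, pr (f r) V = ∑ i, e2 i * ∑ r ∈ R, pr (f r) (T.X (p i)) := by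
          simp_rw [hV, hpr]
          rw [Finset.sum_comm]
          simp_rw [Finset.mul_sum]
        rw [e0]
        refine le_trans ?_ htiny
        refine (Finset.abs_sum_le_sum_abs _ _).trans (Finset.sum_le_sum fun i _ => ?_)
        by_cases hi : P.m (T.J i) ≤ w
        · simp only [he2, if_pos hi, zero_mul, abs_zero]
          positivity
        · rw [abs_mul]
          refine (mul_le_of_le_one_left (abs_nonneg _) (he2' i)).trans ?_
          exact T.X_family (p i) hd ht (by rw [hwp i]; exact not_le.1 hi) R hN0 hRu
      clear_value V
      rw [map_smul, LinearMap.smul_apply, smul_eq_mul, abs_mul, abs_of_pos (inv_pos.2 hw0),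
        ← div_eq_inv_mul, div_le_iff₀ hw0, map_sum, LinearMap.sum_apply,
        ← Finset.sum_add_sum_compl R]
      refine (abs_add_le _ _).trans ?_
      linarith
    rw [hsplit, map_add]
    refine (abs_add_le _ _).trans ?_
    linarith

end IWDual

namespace IWDual

variable {P : IWParams} {y : ℕ → c00} {S : RIS P y}

/-! ### Two-sided `ℓ_1` estimates -/

/-- The `k`-th member of the `i`-th row of the normalized array. -/
noncomputable def Rows.A (T : Rows S) (i k : ℕ) : c00 :=
  (iwDualNorm P (T.f (Nat.pair i k)))⁻¹ • T.f (Nat.pair i k)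

lemma Rows.f_pos (T : Rows S) (p : ℕ) : 0 < iwDualNorm P (T.f p) :=
  dual_pos (Finsupp.support_nonempty_iff.1 (T.f_ne p))

lemma Rows.A_norm (T : Rows S) (i k : ℕ) : iwDualNorm P (T.A i k) = 1 := by
  rw [Rows.A, dual_smul, abs_of_pos (inv_pos.2 (T.f_pos _)), inv_mul_cancel₀ (T.f_pos _).ne']

lemma Rows.A_supp (T : Rows S) (i k : ℕ) : (T.A i k).support = (T.f (Nat.pair i k)).support :=
  Finsupp.support_smul_eq (inv_pos.2 (T.f_pos _)).ne'

lemma Rows.A_span (T : Rows S) (i k : ℕ) : T.A i k ∈ Submodule.span ℝ (Set.range y) :=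
  Submodule.smul_mem _ _ (Submodule.smul_mem _ _ (Submodule.sum_mem _ fun q _ => S.span q))

lemma Rows.A_blocks (T : Rows S) (i : ℕ) {k k' : ℕ} (h : k < k') :
    Blocks (T.A i k) (T.A i k') := by
  have h1 : (T.A i k).support.Nonempty := by rw [T.A_supp]; exact T.f_ne _
  have h2 : (T.A i k').support.Nonempty := by rw [T.A_supp]; exact T.f_ne _
  have h3 := maxSupp_mem h1
  have h4 := minSupp_mem h2
  rw [T.A_supp] at h3 h4
  exact T.f_lt (Nat.pair_lt_pair_right i h) _ h3 _ h4

/-- Far enough out, the rows of the array dominate `ℓ_1`: test against the `c_0`-like vectors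
`X`. -/
lemma Rows.lower (T : Rows S) (l : ℕ) : ∃ N : ℕ, ∀ k : Fin l → ℕ, (∀ i, N ≤ k i) →
    ∀ a : Fin l → ℝ, (1 / 44) * ∑ i, |a i| ≤ iwDualNorm P (∑ i, a i • T.A i (k i)) := by
  have hev : ∀ᶠ N : ℕ in atTop, ∀ i ∈ Finset.range l,
      l * (2 * (P.m (T.J i) : ℝ) / N + 2 * (2⁻¹ : ℝ) ^ N) ≤ 1 := by
    rw [Finset.eventually_all]
    intro i _
    have h1 : Tendsto (fun N : ℕ => 2 * (P.m (T.J i) : ℝ) / N) atTop (𝓝 0) :=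
      tendsto_const_div_atTop_nhds_zero_nat _
    have h2 : Tendsto (fun N : ℕ => (2⁻¹ : ℝ) ^ N) atTop (𝓝 0) :=
      tendsto_pow_atTop_nhds_zero_of_lt_one (by norm_num) (by norm_num)
    have h3 := (h1.add (h2.const_mul 2)).const_mul (l : ℝ)
    simp only [mul_zero, add_zero] at h3
    exact h3.eventually (Iic_mem_nhds one_pos)
  obtain ⟨N, hN, hN0⟩ := (hev.and (eventually_gt_atTop 0)).exists
  refine ⟨N, fun k hk a => ?_⟩
  set p : Fin l → ℕ := fun i => Nat.pair i (k i) with hp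
  have hp1 : ∀ i, (p i).unpair.1 = i := fun i => by simp [hp]
  have hpN : ∀ i, N ≤ p i := fun i => (hk i).trans (Nat.right_le_pair _ _)
  have hpi : ∀ i i', i ≠ i' → p i ≠ p i' := by
    intro i i' h h'
    apply h
    have := hp1 i
    rw [h', hp1 i'] at this
    exact Fin.ext this.symm
  set e : Fin l → ℝ := fun i => SignType.sign (a i) with he
  have he1 : ∀ i, |e i| ≤ 1 := by
    intro i
    simp only [he]
    rcases lt_trichotomy (a i) 0 with h | h | h <;> simp [h]
  have hV : iwNorm P (∑ i, e i • T.X (p i)) ≤ 11 := norm_le fun g ⟨w, hg⟩ =>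
    (le_abs_self _).trans
      (T.c0 hN0 (fun i hi => hN i (Finset.mem_range.2 hi)) hp1 hpN hg e he1)
  have hval : pr (∑ i, a i • T.A i (k i)) (∑ i, e i • T.X (p i)) =
      ∑ i, |a i| * ((iwDualNorm P (T.f (p i)))⁻¹ * pr (T.f (p i)) (T.X (p i))) := by
    rw [map_sum pr, LinearMap.sum_apply]
    refine Finset.sum_congr rfl fun i _ => ?_
    rw [map_sum, Finset.sum_eq_single_of_mem i (Finset.mem_univ _)]
    · rw [Rows.A, map_smul pr, map_smul pr, LinearMap.smul_apply, LinearMap.smul_apply, map_smul,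
        ← self_mul_sign (a i)]
      simp only [smul_eq_mul, he, hp]
      ring
    · intro i' _ hne
      rw [Rows.A, map_smul pr, map_smul pr, LinearMap.smul_apply, LinearMap.smul_apply, map_smul,
        T.fX_ne (hpi i i' hne.symm)]
      simp
  have hlow : (1 / 4) * ∑ i, |a i| ≤ pr (∑ i, a i • T.A i (k i)) (∑ i, e i • T.X (p i)) := by
    rw [hval, Finset.mul_sum]
    refine Finset.sum_le_sum fun i _ => ?_
    rw [mul_comm]
    refine mul_le_mul_of_nonneg_left ?_ (abs_nonneg _)
    have h1 := T.fX (p i)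
    have h2 := T.f_dual_le (p i)
    have h3 := T.f_pos (p i)
    rw [← div_eq_inv_mul, le_div_iff₀ h3]
    linarith
  have hfin := (le_abs_self _).trans (pr_le_dual_mul (P := P) (∑ i, a i • T.A i (k i))
    (∑ i, e i • T.X (p i)))
  have hnn := dual_nonneg (P := P) (∑ i, a i • T.A i (k i))
  have := mul_le_mul_of_nonneg_left hV hnn
  linarith

lemma Rows.upper (T : Rows S) {l : ℕ} (k : Fin l → ℕ) (a : Fin l → ℝ) :
    iwDualNorm P (∑ i, a i • T.A i (k i)) ≤ ∑ i, |a i| := by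
  refine (dual_sum_le _ _).trans (le_of_eq (Finset.sum_congr rfl fun i _ => ?_))
  rw [dual_smul, T.A_norm, mul_one]

end IWDual

namespace IWDual

variable {P : IWParams}

/-! ### Existence of the asymptotic model -/

/-- The iterated ultrafilter limit of `‖v + a_i A_i(k_i) + ... + a_{i+r-1} A_{i+r-1}(k_{i+r-1})‖_*`,
the innermost limit being the one over `k_{i+r-1}`. -/
noncomputable def itLim (P : IWParams) (A : ℕ → ℕ → c00) (a : ℕ → ℝ) : ℕ → ℕ → c00 → ℝ
  | 0, _, v => iwDualNorm P v
  | r + 1, i, v => limUnder (hyperfilter ℕ : Filter ℕ)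
      fun n => itLim P A a r (i + 1) (v + a i • A i n)

lemma itLim_bound {A : ℕ → ℕ → c00} (hA : ∀ i k, iwDualNorm P (A i k) = 1) (a : ℕ → ℝ) (r : ℕ) :
    ∀ i v, (itLim P A a r i v ∈ Set.Icc 0 (iwDualNorm P v + ∑ s ∈ Finset.range r, |a (i + s)|)) ∧
      Tendsto (fun n => itLim P A a r (i + 1) (v + a i • A i n)) (hyperfilter ℕ : Filter ℕ)
        (𝓝 (itLim P A a (r + 1) i v)) := by
  induction r with
  | zero =>
    intro i v
    refine ⟨by simp [itLim, dual_nonneg], ?_⟩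
    obtain ⟨c, -, hc⟩ := exists_ulim (u := fun n => itLim P A a 0 (i + 1) (v + a i • A i n))
      (a := 0) (b := iwDualNorm P v + |a i|) (fun n => ⟨dual_nonneg _, by
        refine (dual_add_le _ _).trans ?_
        rw [dual_smul, hA, mul_one]⟩)
    exact tendsto_nhds_limUnder ⟨c, hc⟩
  | succ r ih =>
    have hb : ∀ i v, itLim P A a (r + 1) i v ∈
        Set.Icc 0 (iwDualNorm P v + ∑ s ∈ Finset.range (r + 1), |a (i + s)|) := by
      intro i v
      refine isClosed_Icc.mem_of_tendsto (ih i v).2 (Eventually.of_forall fun n => ?_)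
      have h1 := (ih (i + 1) (v + a i • A i n)).1
      refine ⟨h1.1, h1.2.trans ?_⟩
      have h2 := dual_add_le (P := P) v (a i • A i n)
      rw [dual_smul, hA, mul_one] at h2
      rw [Finset.sum_range_succ']
      have h3 : ∀ s, i + 1 + s = i + (s + 1) := fun s => by ring
      simp_rw [h3, add_zero]
      linarith
    intro i v
    refine ⟨hb i v, ?_⟩
    obtain ⟨c, -, hc⟩ := exists_ulim (u := fun n => itLim P A a (r + 1) (i + 1) (v + a i • A i n))
      (a := 0) (b := iwDualNorm P v + |a i| + ∑ s ∈ Finset.range (r + 1), |a (i + 1 + s)|)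
      (fun n => ⟨(hb _ _).1, by
        refine (hb _ _).2.trans ?_
        have h2 := dual_add_le (P := P) v (a i • A i n)
        rw [dual_smul, hA, mul_one] at h2
        linarith⟩)
    exact tendsto_nhds_limUnder ⟨c, hc⟩

/-- For a countable family of coefficient sequences, columns can be selected so that the norms of
combinations along increasing tuples of selected columns approach the iterated limits. -/
lemma exists_columns {A : ℕ → ℕ → c00} (hA : ∀ i k, iwDualNorm P (A i k) = 1)
    (b : ℕ → ℕ → ℝ) : ∃ φ : ℕ → ℕ, StrictMono φ ∧ ∀ n l N, n ≤ N → l ≤ N → ∀ j : ℕ → ℕ,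
      (∀ s t, s < t → t < l → j s < j t) → (∀ s < l, N ≤ j s) →
      |iwDualNorm P (∑ s ∈ Finset.range l, b n s • A s (φ (j s))) - itLim P A (b n) l 0 0|
        ≤ l * (2⁻¹ : ℝ) ^ N := by
  classical
  have hgood : ∀ (p : ℕ) (V : Finset c00) (m : ℕ), ∃ k, m ≤ k ∧
      ∀ n ∈ Finset.range (p + 1), ∀ i ∈ Finset.range (p + 1), ∀ r ∈ Finset.range (p + 1), ∀ v ∈ V,
        |itLim P A (b n) r (i + 1) (v + b n i • A i k) - itLim P A (b n) (r + 1) i v|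
          < (2⁻¹ : ℝ) ^ p := by
    intro p V m
    have h1 : ∀ᶠ k in (hyperfilter ℕ : Filter ℕ), m ≤ k :=
      Nat.hyperfilter_le_atTop (eventually_ge_atTop m)
    have h2 : ∀ᶠ k in (hyperfilter ℕ : Filter ℕ), ∀ n ∈ Finset.range (p + 1),
        ∀ i ∈ Finset.range (p + 1), ∀ r ∈ Finset.range (p + 1), ∀ v ∈ V,
        |itLim P A (b n) r (i + 1) (v + b n i • A i k) - itLim P A (b n) (r + 1) i v|
          < (2⁻¹ : ℝ) ^ p := by
      simp only [Finset.eventually_all]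
      intro n _ i _ r _ v _
      have := (Metric.tendsto_nhds.1 (itLim_bound hA (b n) r i v).2) ((2⁻¹ : ℝ) ^ p) (by positivity)
      simpa only [Real.dist_eq] using this
    exact (h1.and h2).exists
  choose g hg1 hg2 using hgood
  -- the state records the partial sums formed so far and a lower bound for the next column
  let st : ℕ → Finset c00 × ℕ := fun p => Nat.rec ({0}, 0) (fun p s =>
    (s.1 ∪ (s.1 ×ˢ (Finset.range (p + 1) ×ˢ Finset.range (p + 1))).image
      (fun q => q.1 + b q.2.1 q.2.2 • A q.2.2 (g p s.1 s.2)), g p s.1 s.2 + 1)) p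
  let φ : ℕ → ℕ := fun p => g p (st p).1 (st p).2
  have hst : ∀ p, st (p + 1) =
    ((st p).1 ∪ ((st p).1 ×ˢ (Finset.range (p + 1) ×ˢ Finset.range (p + 1))).image
      (fun q => q.1 + b q.2.1 q.2.2 • A q.2.2 (φ p)), φ p + 1) := fun p => rfl
  have hmono : Monotone fun p => (st p).1 := monotone_nat_of_le_succ fun p => by
    rw [hst]
    exact Finset.subset_union_left
  refine ⟨φ, strictMono_nat_of_lt_succ fun p => ?_, ?_⟩
  · have h : (st (p + 1)).2 ≤ φ (p + 1) := hg1 _ _ _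
    rw [hst] at h
    exact h
  intro n l N hn hl j hj hjN
  have hmem : ∀ t ≤ l, ∀ p, (∀ s < t, j s < p) →
      ∑ s ∈ Finset.range t, b n s • A s (φ (j s)) ∈ (st p).1 := by
    intro t
    induction t with
    | zero =>
      intro _ p _
      exact hmono (Nat.zero_le p) (Finset.mem_singleton_self _)
    | succ t ih =>
      intro ht p hp
      have h1 := ih (by omega) (j t) fun s hs => hj s t hs (by omega)
      have h2 := hjN t (by omega)
      refine hmono (show j t + 1 ≤ p from hp t (by omega)) ?_
      change _ ∈ (st (j t + 1)).1
      rw [hst, Finset.sum_range_succ]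
      refine Finset.mem_union_right _ (Finset.mem_image.2 ⟨(_, n, t), ?_, rfl⟩)
      simp only [Finset.mem_product, Finset.mem_range]
      exact ⟨h1, by omega, by omega⟩
  have hstep : ∀ t ≤ l, |itLim P A (b n) (l - t) t (∑ s ∈ Finset.range t, b n s • A s (φ (j s)))
      - itLim P A (b n) l 0 0| ≤ t * (2⁻¹ : ℝ) ^ N := by
    intro t
    induction t with
    | zero => intro _; simp
    | succ t ih =>
      intro ht
      have h0 := ih (by omega)
      have h1 := hjN t (by omega)
      have h2 := hg2 (j t) (st (j t)).1 (st (j t)).2 n (Finset.mem_range.2 (by omega)) t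
        (Finset.mem_range.2 (by omega)) (l - (t + 1)) (Finset.mem_range.2 (by omega)) _
        (hmem t (by omega) (j t) fun s hs => hj s t hs (by omega))
      rw [show l - (t + 1) + 1 = l - t by omega] at h2
      rw [Finset.sum_range_succ]
      have h3 : (2⁻¹ : ℝ) ^ (j t) ≤ (2⁻¹ : ℝ) ^ N :=
        pow_le_pow_of_le_one (by norm_num) (by norm_num) h1
      have h4 := abs_sub_le (itLim P A (b n) (l - (t + 1)) (t + 1)
        (∑ s ∈ Finset.range t, b n s • A s (φ (j s)) + b n t • A t (φ (j t))))
        (itLim P A (b n) (l - t) t (∑ s ∈ Finset.range t, b n s • A s (φ (j s))))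
        (itLim P A (b n) l 0 0)
      refine h4.trans ?_
      have h5 := h2.le.trans h3
      push_cast
      linarith [show |itLim P A (b n) (l - (t + 1)) (t + 1)
        (∑ s ∈ Finset.range t, b n s • A s (φ (j s)) + b n t • A t (φ (j t)))
        - itLim P A (b n) (l - t) t (∑ s ∈ Finset.range t, b n s • A s (φ (j s)))|
          ≤ (2⁻¹ : ℝ) ^ N from h5]
  have h := hstep l le_rfl
  rw [Nat.sub_self] at h
  exact h

/-- Every array of normalized sequences has columns along which it generates an asymptotic
model. -/
lemma exists_model {A : ℕ → ℕ → c00} (hA : ∀ i k, iwDualNorm P (A i k) = 1) :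
    ∃ φ : ℕ → ℕ, StrictMono φ ∧ ∃ ν,
      GeneratesAMwith (iwDualNorm P) (fun i k => A i (φ k)) ν := by
  obtain ⟨φ, hφ, hcol⟩ := exists_columns hA (TopologicalSpace.denseSeq (ℕ → ℝ))
  set b := TopologicalSpace.denseSeq (ℕ → ℝ) with hb
  refine ⟨φ, hφ, ?_⟩
  -- the norms of a fixed combination oscillate by less than `ε` far enough out
  have hosc : ∀ (l : ℕ) (a : Fin l → ℝ) (ε : ℝ), 0 < ε → ∃ (N : ℕ) (c : ℝ), ∀ j : Fin l → ℕ,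
      StrictMono j → (∀ i, N ≤ j i) →
        |iwDualNorm P (∑ i, a i • A i (φ (j i))) - c| < ε := by
    intro l a ε hε
    set δ : ℝ := ε / (2 * (l + 1)) with hδ
    have hδ0 : 0 < δ := by positivity
    let a' : ℕ → ℝ := fun s => if h : s < l then a ⟨s, h⟩ else 0
    obtain ⟨n, hn⟩ := (TopologicalSpace.denseRange_denseSeq (ℕ → ℝ)).exists_mem_open
      (isOpen_set_pi (Set.finite_lt_nat l) fun i _ => Metric.isOpen_ball (x := a' i) (ε := δ))
      ⟨a', fun i _ => Metric.mem_ball_self hδ0⟩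
    rw [← hb] at hn
    obtain ⟨K, hK⟩ := exists_pow_lt_of_lt_one hδ0 (show (2⁻¹ : ℝ) < 1 by norm_num)
    refine ⟨max n (max l K), itLim P A (b n) l 0 0, fun j hj hjN => ?_⟩
    let j' : ℕ → ℕ := fun s => if h : s < l then j ⟨s, h⟩ else 0
    have hj' : ∀ i : Fin l, j' i = j i := fun i => by simp [j']
    have ha' : ∀ i : Fin l, a' i = a i := fun i => by simp [a']
    have h1 := hcol n l (max n (max l K)) (le_max_left _ _)
      ((le_max_left _ _).trans (le_max_right _ _)) j' (by
        intro s t hst ht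
        simp only [j', dif_pos ht, dif_pos (hst.trans ht)]
        exact hj (by simpa using hst)) (by
        intro s hs
        simp only [j', dif_pos hs]
        exact hjN _)
    have h2 : (2⁻¹ : ℝ) ^ (max n (max l K)) ≤ δ :=
      (pow_le_pow_of_le_one (by norm_num) (by norm_num)
        ((le_max_right _ _).trans (le_max_right _ _))).trans hK.le
    rw [← Fin.sum_univ_eq_sum_range (fun s => b n s • A s (φ (j' s)))] at h1
    simp only [hj'] at h1
    have h3 : |iwDualNorm P (∑ i, a i • A i (φ (j i))) -
        iwDualNorm P (∑ i : Fin l, b n i • A i (φ (j i)))| ≤ l * δ := by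
      refine (dual_sub_abs_le _ _).trans ?_
      rw [← Finset.sum_sub_distrib]
      refine (dual_sum_le _ _).trans ?_
      calc _ ≤ ∑ i : Fin l, δ := by
            refine Finset.sum_le_sum fun i _ => ?_
            rw [← sub_smul, dual_smul, hA, mul_one, ← ha' i, abs_sub_comm, ← Real.dist_eq]
            exact (Metric.mem_ball.1 (hn i i.2)).le
        _ = l * δ := by simp
    have h4 : (l : ℝ) * (2⁻¹ : ℝ) ^ (max n (max l K)) ≤ l * δ :=
      mul_le_mul_of_nonneg_left h2 (by positivity)
    have h5 : (l + 1) * δ * 2 = ε := by rw [hδ]; field_simp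
    refine (abs_sub_le _ _ _).trans_lt (lt_of_le_of_lt (add_le_add h3 (h1.trans h4)) ?_)
    linarith
  have hex : ∀ (l : ℕ) (a : Fin l → ℝ), ∃ ν : ℝ, ∀ ε > (0 : ℝ), ∃ N : ℕ, ∀ j : Fin l → ℕ,
      StrictMono j → (∀ i, N ≤ j i) →
        |iwDualNorm P (∑ i, a i • A i (φ (j i))) - ν| < ε := by
    intro l a
    let J : ℕ → Fin l → ℕ := fun k i => k + i
    have hJ : ∀ k, StrictMono (J k) := fun k i i' h => Nat.add_lt_add_left h k
    let u : ℕ → ℝ := fun k => iwDualNorm P (∑ i, a i • A i (φ (J k i)))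
    have hu : CauchySeq u := by
      refine Metric.cauchySeq_iff'.2 fun ε hε => ?_
      obtain ⟨N, c, hN⟩ := hosc l a (ε / 2) (by positivity)
      refine ⟨N, fun k hk => ?_⟩
      have h1 := hN (J k) (hJ k) fun i => hk.trans (Nat.le_add_right _ _)
      have h2 := hN (J N) (hJ N) fun i => Nat.le_add_right _ _
      rw [Real.dist_eq]
      rw [abs_sub_comm] at h2
      have := abs_sub_le (u k) c (u N)
      linarith
    obtain ⟨ν, hν⟩ := cauchySeq_tendsto_of_complete hu
    refine ⟨ν, fun ε hε => ?_⟩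
    obtain ⟨N, c, hN⟩ := hosc l a (ε / 3) (by positivity)
    obtain ⟨k, hk, hkN⟩ := ((Metric.tendsto_nhds.1 hν (ε / 3) (by positivity)).and
      (eventually_ge_atTop N)).exists
    refine ⟨N, fun j hj hjN => ?_⟩
    have h1 := hN j hj hjN
    have h2 := hN (J k) (hJ k) fun i => hkN.trans (Nat.le_add_right _ _)
    rw [Real.dist_eq] at hk
    rw [abs_sub_comm] at h2
    have h3 := abs_sub_le (iwDualNorm P (∑ i, a i • A i (φ (j i)))) c ν
    have h4 := abs_sub_le c (u k) ν
    have h2' : |c - u k| < ε / 3 := h2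
    linarith
  choose ν hν using hex
  exact ⟨ν, hν⟩

/-- The array of rows, restricted to suitable columns, has all the required properties. -/
lemma main (P : IWParams) (y : ℕ → c00) (hy : IsNormBlockSeq (iwDualNorm P) y) :
    ∃ A : ℕ → ℕ → c00,
      (∀ i, (∀ j, A i j ∈ Submodule.span ℝ (Set.range y)) ∧
        (∀ j, iwDualNorm P (A i j) = 1) ∧
        (∀ j, (A i j).support.Nonempty) ∧ ∀ j, Blocks (A i j) (A i (j + 1))) ∧
      ∃ ν, GeneratesAMwith (iwDualNorm P) A ν ∧
        ∃ C : ℝ, 1 ≤ C ∧ NormFamEquiv C l1Norm ν := by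
  obtain ⟨S⟩ := exists_RIS hy
  obtain ⟨T⟩ := exists_Rows S
  obtain ⟨φ, hφ, ν, hν⟩ := exists_model T.A_norm
  refine ⟨fun i k => T.A i (φ k), fun i => ⟨fun j => T.A_span _ _, fun j => T.A_norm _ _,
    fun j => ?_, fun j => T.A_blocks i (hφ j.lt_succ_self)⟩, ν, hν, 44, by norm_num, 44, 1,
    by norm_num, by norm_num, by norm_num, fun l a => ?_⟩
  · rw [T.A_supp]
    exact T.f_ne _
  -- both estimates hold up to any `ε` far enough out
  obtain ⟨N0, hN0⟩ := T.lower l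
  have key : ∀ ε > (0 : ℝ), (1 / 44) * l1Norm l a ≤ ν l a + ε ∧ ν l a ≤ l1Norm l a + ε := by
    intro ε hε
    obtain ⟨N, hN⟩ := hν l a ε hε
    let j : Fin l → ℕ := fun i => max N N0 + i
    have h1 := hN j (fun i i' h => Nat.add_lt_add_left h _)
      fun i => (le_max_left _ _).trans (Nat.le_add_right _ _)
    have h2 := hN0 (fun i => φ (j i)) (fun i =>
      ((le_max_right _ _).trans (Nat.le_add_right _ _)).trans hφ.le_apply) a
    have h3 := T.upper (fun i => φ (j i)) a
    have h4 := abs_lt.1 h1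
    simp only [l1Norm]
    constructor
    · linarith [h4.2]
    · linarith [h4.1]
  exact ⟨le_of_forall_pos_le_add fun ε hε => (key ε hε).1,
    le_of_forall_pos_le_add fun ε hε => by rw [one_mul]; exact (key ε hε).2⟩

end IWDual

/-- Let `Y` be a block subspace of `X_iw^*` (spanned by a normalized
block sequence of finitely supported functionals).  Then `Y` contains an array of
normalized block sequences `(f^{(i)}_j)_j`, `i ∈ ℕ`, generating an asymptotic model
equivalent to the unit vector basis of ℓ₁. -/
theorem statement17 (P : IWParams) (y : ℕ → c00) (hy : IsNormBlockSeq (iwDualNorm P) y) :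
    ∃ A : ℕ → ℕ → c00,
      (∀ i, (∀ j, A i j ∈ Submodule.span ℝ (Set.range y)) ∧
        (∀ j, iwDualNorm P (A i j) = 1) ∧
        (∀ j, (A i j).support.Nonempty) ∧ ∀ j, Blocks (A i j) (A i (j + 1))) ∧
      ∃ ν, GeneratesAMwith (iwDualNorm P) A ν ∧
        ∃ C : ℝ, 1 ≤ C ∧ NormFamEquiv C l1Norm ν := by
  exact IWDual.main P y hy
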